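/- arXiv:0705.0422 — 2 statements merged into one kernel-verified Lean document; each statement's English description precedes it below -/
import Mathlib

section
/- Let k ≥ 1 be an integer and let G be a planar simple graph with girth at least 6. Then the k-frugal chromatic number satisfies χ_k(G) ≤ ⌈(Δ(G) + 4)/k⌉ + 6. -/
open SimpleGraph

/-- A drawing of a simple graph in the plane: vertices are mapped to distinct points,
edges to arcs (injective continuous curves parametrised on `[0,1]`) joining the images of
their endpoints, whose interiors avoid the vertex points and each other. -/
structure PlaneEmbedding {V : Type*} (G : SimpleGraph V) where
  pos : V → ℝ × ℝ
  inj : Function.Injective pos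
  arc : G.edgeSet → ℝ → ℝ × ℝ
  arc_cont : ∀ e, ContinuousOn (arc e) (Set.Icc 0 1)
  arc_inj : ∀ e, Set.InjOn (arc e) (Set.Icc 0 1)
  arc_ends : ∀ e : G.edgeSet, ∃ u v : V, (e : Sym2 V) = s(u, v) ∧
      arc e 0 = pos u ∧ arc e 1 = pos v
  arc_avoid : ∀ e : G.edgeSet, ∀ t ∈ Set.Ioo (0:ℝ) 1, arc e t ∉ Set.range pos
  arc_disjoint : ∀ e f : G.edgeSet, e ≠ f → ∀ s ∈ Set.Ioo (0:ℝ) 1, ∀ t ∈ Set.Ioo (0:ℝ) 1,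
      arc e s ≠ arc f t

/-- A graph is planar if it admits a drawing in the plane. -/
def SimpleGraph.IsPlanar {V : Type*} (G : SimpleGraph V) : Prop :=
  Nonempty (PlaneEmbedding G)

/-- A `k`-frugal colouring: a proper vertex colouring in which no colour appears more than
`k` times in the neighbourhood of any vertex. -/
def SimpleGraph.IsFrugalColoring {V α : Type*} (G : SimpleGraph V) (k : ℕ) (c : V → α) : Prop :=
  (∀ u v, G.Adj u v → c u ≠ c v) ∧
  ∀ (v : V) (a : α), {u | u ∈ G.neighborSet v ∧ c u = a}.ncard ≤ k

/-- The `k`-frugal chromatic number `χ_k(G)`: the least number of colours in a `k`-frugal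
colouring of `G`. -/
noncomputable def SimpleGraph.frugalChromaticNumber {V : Type*} (G : SimpleGraph V) (k : ℕ) : ℕ :=
  sInf {n : ℕ | ∃ c : V → ℕ, (∀ v, c v < n) ∧ G.IsFrugalColoring k c}

section PlaneTopology

open Complex Set Topology

/-- Homotopy lifting for `exp`. -/
theorem exists_log_of_homotopy {X : Type*} [TopologicalSpace X] {F : X → unitInterval → ℂ}
    (hF : Continuous (Function.uncurry F)) (hne : ∀ x t, F x t ≠ 0) (h0 : ∀ x, F x 0 = 1) :
    ∃ g : X → ℂ, Continuous g ∧ ∀ x, exp (g x) = F x 1 := by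
  let H : C(unitInterval × X, {z : ℂ // z ≠ 0}) :=
    ⟨fun y ↦ ⟨F y.2 y.1, hne _ _⟩, by
      have : Continuous fun y : unitInterval × X ↦ F y.2 y.1 := hF.comp continuous_swap
      exact this.subtype_mk _⟩
  have H0 : ∀ x, H (0, x) = ⟨exp ((ContinuousMap.const X (0 : ℂ)) x), exp_ne_zero _⟩ := by
    intro x; ext; simp [H, h0]
  let L := isCoveringMap_exp.liftHomotopy H (ContinuousMap.const X (0 : ℂ)) H0
  refine ⟨fun x ↦ L (1, x), by fun_prop, fun x ↦ ?_⟩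
  have := congrFun
    (isCoveringMap_exp.liftHomotopy_lifts H (ContinuousMap.const X (0 : ℂ)) H0) (1, x)
  exact congrArg Subtype.val this

/-- A nonvanishing continuous function on a real topological vector space has a continuous
logarithm. -/
theorem exists_log_of_ne_zero {E : Type*} [AddCommGroup E] [Module ℝ E] [TopologicalSpace E]
    [ContinuousSMul ℝ E] {f : E → ℂ} (hf : Continuous f) (hne : ∀ x, f x ≠ 0) :
    ∃ g : E → ℂ, Continuous g ∧ ∀ x, exp (g x) = f x := by
  obtain ⟨g, hg, hg'⟩ := exists_log_of_homotopy
    (F := fun (x : E) (t : unitInterval) ↦ f ((t : ℝ) • x) / f 0)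
    (by
      have : Continuous fun y : E × unitInterval ↦ f ((y.2 : ℝ) • y.1) / f 0 :=
        (hf.comp (by fun_prop)).div_const _
      exact this) (fun x t ↦ div_ne_zero (hne _) (hne _)) (by simp [hne])
  refine ⟨fun x ↦ g x + log (f 0), by fun_prop, fun x ↦ ?_⟩
  simp [exp_add, hg', exp_log (hne 0), hne]

/-- If `a` and `b` are joined outside `X` then `(z - a) / (z - b)` has a logarithm on `X`. -/
theorem JoinedIn.exists_log {X : Set ℂ} {a b : ℂ} (h : JoinedIn Xᶜ b a) :
    ∃ g : ℂ → ℂ, ContinuousOn g X ∧ ∀ z ∈ X, exp (g z) = (z - a) / (z - b) := by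
  classical
  obtain ⟨γ, hγ⟩ := h
  have hne : ∀ (z : X) t, (z : ℂ) - γ t ≠ 0 := fun z t h ↦
    hγ t (by rw [← sub_eq_zero.1 h]; exact z.2)
  have hb : ∀ z : X, (z : ℂ) - b ≠ 0 := fun z ↦ by simpa using hne z 0
  obtain ⟨g, hg, hg'⟩ := exists_log_of_homotopy
    (F := fun (z : X) t ↦ ((z : ℂ) - γ t) / (z - b))
    (by
      have : Continuous fun y : X × unitInterval ↦ ((y.1 : ℂ) - γ y.2) / (y.1 - b) :=
        Continuous.div (by fun_prop) (by fun_prop) (fun y ↦ hb y.1)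
      exact this) (fun z t ↦ div_ne_zero (hne z t) (hb z)) (by intro z; simp [hb])
  refine ⟨fun z ↦ if hz : z ∈ X then g ⟨z, hz⟩ else 0, ?_, fun z hz ↦ ?_⟩
  · rw [continuousOn_iff_continuous_domRestrict]
    convert hg using 1
    ext z; simp
  · simp [hz, hg']

theorem exists_int_of_exp_eq {x y : ℂ} (h : exp x = exp y) :
    ∃ n : ℤ, x - y = n * (2 * Real.pi * I) := by
  obtain ⟨n, hn⟩ := exp_eq_exp_iff_exists_int.1 h
  exact ⟨n, by rw [hn]; ring⟩

/-- A continuous function with constant exponential is constant on preconnected sets. -/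
theorem IsPreconnected.eq_of_exp_eq {X : Type*} [TopologicalSpace X] {S : Set X}
    (hS : IsPreconnected S) {f : X → ℂ} (hf : ContinuousOn f S) {c : ℂ}
    (h1 : ∀ z ∈ S, exp (f z) = c) {x y : X} (hx : x ∈ S) (hy : y ∈ S) :
    f x = f y := by
  exact isCoveringMap_exp.constOn_of_comp hS hf
    (fun a ha b hb ↦ Subtype.ext ((h1 a ha).trans (h1 b hb).symm)) hx hy

/-- On a circle around `p`, the function `(z - p) ^ n` is the exponential of a continuous function
only if `n = 0`. -/
theorem eq_zero_of_log_zpow {G : ℂ → ℂ} (hG : Continuous G) {p : ℂ} {n : ℤ} {R : ℝ} (hR : 0 < R)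
    (h : ∀ z, ‖z - p‖ = R → exp (G z) = (z - p) ^ n) : n = 0 := by
  have hcirc : ∀ t : ℝ, ‖p + R * exp (t * I) - p‖ = R := by
    intro t
    simp [norm_exp_ofReal_mul_I, hR.le]
  have hconst := isPreconnected_univ.eq_of_exp_eq
    (f := fun t : ℝ ↦ G (p + R * exp (t * I)) - n * (t * I)) (c := (R : ℂ) ^ n)
    (by fun_prop) (fun t _ ↦ by
      rw [exp_sub, h _ (hcirc t), exp_int_mul, add_sub_cancel_left, mul_zpow,
        mul_div_assoc, div_self (zpow_ne_zero _ (exp_ne_zero _)), mul_one])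
    (mem_univ 0) (mem_univ (2 * Real.pi))
  have h2 : exp (((2 * Real.pi : ℝ) : ℂ) * I) = 1 := by
    push_cast; exact exp_two_pi_mul_I
  simp only [h2] at hconst
  have : (n : ℂ) * ((2 * Real.pi : ℝ) * I) = 0 := by
    simpa only [ofReal_zero, zero_mul, mul_zero, exp_zero, sub_zero, eq_comm (a := G _),
      sub_eq_self] using hconst
  have hpi : (((2 * Real.pi : ℝ) : ℂ) * I) ≠ 0 := by
    exact_mod_cast two_pi_I_ne_zero
  exact_mod_cast (mul_eq_zero.1 this).resolve_right hpi

/-- Let `U` be a bounded open set containing `p`, with frontier in the closed set `K`. If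
`(z - p) ^ n * h z` has a logarithm on `K`, where `h` does not vanish on `closure U`, then
`n = 0`. -/
theorem zpow_eq_zero_of_log {U K : Set ℂ} (hU : IsOpen U) (hb : Bornology.IsBounded U)
    (hK : IsClosed K) (hUK : frontier U ⊆ K) {p : ℂ} (hp : p ∈ U) {h g : ℂ → ℂ} {n : ℤ}
    (hh : ContinuousOn h (closure U)) (hne : ∀ z ∈ closure U, h z ≠ 0)
    (hg : ContinuousOn g K) (hexp : ∀ z ∈ K, exp (g z) = (z - p) ^ n * h z) : n = 0 := by
  classical
  obtain ⟨g', hg'⟩ := ContinuousMap.exists_restrict_eq hK ⟨K.domRestrict g, hg.domRestrict⟩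
  have hgg : ∀ z ∈ K, g' z = g z := fun z hz ↦
    DFunLike.congr_fun hg' ⟨z, hz⟩
  let F : ℂ → ℂ := U.piecewise (fun z ↦ exp (g' z) / h z) (fun z ↦ (z - p) ^ n)
  have hpz : ∀ z ∉ U, z - p ≠ 0 := fun z hz h0 ↦ hz (by rwa [sub_eq_zero.1 h0])
  have hF : Continuous F := by
    refine continuous_piecewise ?_ ?_ ?_
    · intro z hz
      have hzU : z ∈ closure U := frontier_subset_closure hz
      rw [hgg z (hUK hz), hexp z (hUK hz), mul_div_assoc, div_self (hne z hzU), mul_one]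
    · exact ContinuousOn.div (by fun_prop) hh hne
    · rw [hU.isClosed_compl.closure_eq]
      exact ContinuousOn.zpow₀ (by fun_prop) n fun z hz ↦ Or.inl (hpz z hz)
  have hFne : ∀ z, F z ≠ 0 := by
    intro z
    by_cases hz : z ∈ U
    · simpa [F, hz] using hne z (subset_closure hz)
    · simpa [F, hz] using zpow_ne_zero n (hpz z hz)
  obtain ⟨G, hG, hG'⟩ := exists_log_of_ne_zero hF hFne
  obtain ⟨R, hR, hUR⟩ := hb.subset_ball_lt 0 p
  refine eq_zero_of_log_zpow (p := p) hG hR fun z hz ↦ ?_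
  have : z ∉ U := fun hzU ↦ by
    have := hUR hzU
    rw [mem_ball_iff_norm, hz] at this
    exact this.false
  simp [hG', F, this]

/-- The complement of an open disc in the plane is preconnected. -/
theorem isPreconnected_compl_ball (R : ℝ) : IsPreconnected (Metric.ball (0 : ℂ) R)ᶜ := by
  have : (Metric.ball (0 : ℂ) R)ᶜ =
      (fun y : ℝ × ℝ ↦ (y.1 : ℂ) * exp (y.2 * I)) '' ((Ici (max R 0)) ×ˢ univ) := by
    ext z
    constructor
    · intro hz
      refine ⟨(‖z‖, arg z), ⟨?_, mem_univ _⟩, norm_mul_exp_arg_mul_I z⟩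
      simpa using hz
    · rintro ⟨⟨r, t⟩, ⟨hr, -⟩, rfl⟩
      simp only [mem_Ici, max_le_iff] at hr
      simp [norm_exp_ofReal_mul_I, abs_of_nonneg hr.2, hr.1]
  rw [this]
  exact (isPreconnected_Ici.prod isPreconnected_univ).image _ (by fun_prop)

/-- Two points in different components of the complement of a bounded set cannot both lie in
unbounded components. -/
theorem isBounded_connectedComponentIn_or {K : Set ℂ} (hK : Bornology.IsBounded K) {p q : ℂ}
    (hpq : connectedComponentIn Kᶜ p ≠ connectedComponentIn Kᶜ q) :
    Bornology.IsBounded (connectedComponentIn Kᶜ p) ∨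
      Bornology.IsBounded (connectedComponentIn Kᶜ q) := by
  obtain ⟨R, hR⟩ := hK.subset_ball 0
  have aux : ∀ x, ¬ Bornology.IsBounded (connectedComponentIn Kᶜ x) →
      (Metric.ball (0 : ℂ) R)ᶜ ⊆ connectedComponentIn Kᶜ x := by
    intro x hx
    have : ¬ connectedComponentIn Kᶜ x ⊆ Metric.ball 0 R := fun h ↦
      hx (Metric.isBounded_ball.subset h)
    obtain ⟨y, hy, hyR⟩ := not_subset.1 this
    rw [connectedComponentIn_eq hy]
    exact (isPreconnected_compl_ball R).subset_connectedComponentIn hyR (compl_subset_compl.2 hR)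
  by_contra! h
  have hmem : ((|R| : ℝ) : ℂ) ∈ (Metric.ball (0 : ℂ) R)ᶜ := by simp [le_abs_self]
  exact hpq ((connectedComponentIn_eq (aux p h.1 hmem)).trans
    (connectedComponentIn_eq (aux q h.2 hmem)).symm)

/-- The frontier of a component of the complement of a closed set lies in the set. -/
theorem frontier_connectedComponentIn_subset {K : Set ℂ} (hK : IsClosed K) (p : ℂ) :
    frontier (connectedComponentIn Kᶜ p) ⊆ K := by
  intro x hx
  by_contra hxK
  have hopen : IsOpen (connectedComponentIn Kᶜ x) := hK.isOpen_compl.connectedComponentIn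
  have hopen' : IsOpen (connectedComponentIn Kᶜ p) := hK.isOpen_compl.connectedComponentIn
  rw [hopen'.frontier_eq] at hx
  obtain ⟨y, hy, hy'⟩ := mem_closure_iff.1 hx.1 _ hopen (mem_connectedComponentIn hxK)
  apply hx.2
  rw [connectedComponentIn_eq hy', ← connectedComponentIn_eq hy]
  exact mem_connectedComponentIn hxK

theorem joinedIn_of_connectedComponentIn_eq {K : Set ℂ} (hK : IsClosed K) {p q : ℂ} (hp : p ∉ K)
    (hq : q ∉ K) (h : connectedComponentIn Kᶜ p = connectedComponentIn Kᶜ q) :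
    JoinedIn Kᶜ p q := by
  have hopen : IsOpen (connectedComponentIn Kᶜ p) := hK.isOpen_compl.connectedComponentIn
  have hc : IsConnected (connectedComponentIn Kᶜ p) := isConnected_connectedComponentIn_iff.2 hp
  have hpc := (hopen.isConnected_iff_isPathConnected).1 hc
  exact (hpc.joinedIn p (mem_connectedComponentIn hp) q
    (h ▸ mem_connectedComponentIn hq)).mono (connectedComponentIn_subset _ _)

/-- If `(z - p) ^ n * h z` has a logarithm on the compact set `K`, where `h` does not vanish on
`K` or on the bounded component of `p`, then `n = 0`. -/
theorem zpow_eq_zero_of_log_of_isBounded {K : Set ℂ} (hK : IsClosed K) {p : ℂ} (hp : p ∉ K)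
    (hb : Bornology.IsBounded (connectedComponentIn Kᶜ p)) {h g : ℂ → ℂ} {n : ℤ}
    (hh : ∀ z ∈ K ∪ connectedComponentIn Kᶜ p, ContinuousAt h z ∧ h z ≠ 0)
    (hg : ContinuousOn g K) (hexp : ∀ z ∈ K, exp (g z) = (z - p) ^ n * h z) : n = 0 := by
  have hopen : IsOpen (connectedComponentIn Kᶜ p) := hK.isOpen_compl.connectedComponentIn
  have hcl : closure (connectedComponentIn Kᶜ p) ⊆ K ∪ connectedComponentIn Kᶜ p := by
    rw [closure_eq_self_union_frontier, union_comm]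
    exact union_subset_union_left _ (frontier_connectedComponentIn_subset hK p)
  exact zpow_eq_zero_of_log hopen hb hK (frontier_connectedComponentIn_subset hK p)
    (mem_connectedComponentIn hp) (fun z hz ↦ (hh z (hcl hz)).1.continuousWithinAt)
    (fun z hz ↦ (hh z (hcl hz)).2) hg hexp

/-- If `(z - p) / (z - q)` has a logarithm on the compact set `K`, then `p` and `q` lie in the
same component of the complement of `K`. -/
theorem connectedComponentIn_eq_of_log {K : Set ℂ} (hK : IsCompact K) {p q : ℂ} (hp : p ∉ K)
    (hq : q ∉ K) {g : ℂ → ℂ} (hg : ContinuousOn g K)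
    (hexp : ∀ z ∈ K, exp (g z) = (z - p) / (z - q)) :
    connectedComponentIn Kᶜ p = connectedComponentIn Kᶜ q := by
  by_contra hne
  have aux : ∀ {x y : ℂ}, x ∉ K → y ∉ K → connectedComponentIn Kᶜ x ≠ connectedComponentIn Kᶜ y →
      ∀ z ∈ K ∪ connectedComponentIn Kᶜ x, z - y ≠ 0 := by
    intro x y hx hy hxy z hz h0
    rw [sub_eq_zero.1 h0] at hz
    rcases hz with hz | hz
    · exact hy hz
    · exact hxy (connectedComponentIn_eq hz)
  rcases isBounded_connectedComponentIn_or hK.isBounded hne with hb | hb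
  · have := zpow_eq_zero_of_log_of_isBounded hK.isClosed hp hb (h := fun z ↦ (z - q)⁻¹) (n := 1)
      (fun z hz ↦ ⟨ContinuousAt.inv₀ (by fun_prop) (aux hp hq hne z hz),
        inv_ne_zero (aux hp hq hne z hz)⟩) hg
      (fun z hz ↦ by rw [hexp z hz, zpow_one, div_eq_mul_inv])
    exact one_ne_zero this
  · have := zpow_eq_zero_of_log_of_isBounded hK.isClosed hq hb (h := fun z ↦ z - p) (n := -1)
      (fun z hz ↦ ⟨by fun_prop, aux hq hp (Ne.symm hne) z hz⟩) hg
      (fun z hz ↦ by rw [hexp z hz, zpow_neg_one, div_eq_mul_inv, mul_comm])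
    exact absurd this (by norm_num)

end PlaneTopology

section ArcSeparation

open Complex Set Topology

/-- Continuity on a compact image can be tested after composing with the parametrisation. -/
theorem IsCompact.continuousOn_image {X Y Z : Type*} [TopologicalSpace X] [TopologicalSpace Y]
    [T2Space Y] [TopologicalSpace Z] {S : Set X} (hS : IsCompact S) {α : X → Y}
    (hα : ContinuousOn α S) {g : Y → Z} (hg : ContinuousOn (g ∘ α) S) :
    ContinuousOn g (α '' S) := by
  rw [continuousOn_iff_isClosed]
  intro C hC
  obtain ⟨u, hu, hu'⟩ := continuousOn_iff_isClosed.1 hg C hC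
  refine ⟨α '' (S ∩ u), ((hS.inter_right hu).image_of_continuousOn
    (hα.mono inter_subset_left)).isClosed, ?_⟩
  ext y
  constructor
  · rintro ⟨hy, x, hx, rfl⟩
    have : x ∈ u ∩ S := hu' ▸ ⟨hy, hx⟩
    exact ⟨⟨x, ⟨hx, this.1⟩, rfl⟩, ⟨x, hx, rfl⟩⟩
  · rintro ⟨⟨x, hx, rfl⟩, -⟩
    have : x ∈ (g ∘ α) ⁻¹' C ∩ S := hu' ▸ ⟨hx.2, hx.1⟩
    exact ⟨this.1, ⟨x, hx.1, rfl⟩⟩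

/-- A nonvanishing continuous function on an arc has a logarithm. -/
theorem exists_log_on_arc {α : ℝ → ℂ} (hα : ContinuousOn α (Icc 0 1)) (hinj : InjOn α (Icc 0 1))
    {f : ℂ → ℂ} (hf : ContinuousOn f (α '' Icc 0 1)) (hne : ∀ z ∈ α '' Icc 0 1, f z ≠ 0) :
    ∃ g : ℂ → ℂ, ContinuousOn g (α '' Icc 0 1) ∧ ∀ z ∈ α '' Icc 0 1, exp (g z) = f z := by
  have hc : ContinuousOn (f ∘ α) (Icc 0 1) := hf.comp hα (mapsTo_image _ _)
  obtain ⟨h, hh, hh'⟩ := exists_log_of_ne_zero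
    (f := IccExtend (zero_le_one (α := ℝ)) ((Icc (0 : ℝ) 1).domRestrict (f ∘ α)))
    (hc.domRestrict.Icc_extend') (fun x ↦ hne _ (mem_image_of_mem _ (projIcc _ _ _ x).2))
  have hinv : ∀ t ∈ Icc (0 : ℝ) 1, Function.invFunOn α (Icc 0 1) (α t) = t :=
    fun t ht ↦ hinj.leftInvOn_invFunOn ht
  refine ⟨h ∘ Function.invFunOn α (Icc 0 1), isCompact_Icc.continuousOn_image hα ?_, ?_⟩
  · exact hh.continuousOn.congr fun t ht ↦ by simp [hinv t ht]
  · rintro _ ⟨t, ht, rfl⟩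
    simp only [Function.comp_apply, hinv t ht, hh']
    rw [IccExtend_of_mem _ _ ht]; rfl

/-- Gluing continuous functions along finitely many closed sets. -/
theorem exists_continuousOn_glue {ι X Y : Type*} [Finite ι] [TopologicalSpace X]
    [TopologicalSpace Y] [Nonempty Y] {C : ι → Set X} (hC : ∀ i, IsClosed (C i)) {g : ι → X → Y}
    (hg : ∀ i, ContinuousOn (g i) (C i)) (hagree : ∀ i j, ∀ z ∈ C i ∩ C j, g i z = g j z) :
    ∃ f : X → Y, ContinuousOn f (⋃ i, C i) ∧ ∀ i, ∀ z ∈ C i, f z = g i z := by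
  classical
  let f : X → Y := fun z ↦ if h : ∃ i, z ∈ C i then g h.choose z else Classical.arbitrary Y
  have hf : ∀ i, ∀ z ∈ C i, f z = g i z := by
    intro i z hz
    have h : ∃ i, z ∈ C i := ⟨i, hz⟩
    simp only [f, h, dif_pos]
    exact hagree _ _ z ⟨h.choose_spec, hz⟩
  exact ⟨f, (locallyFinite_of_finite C).continuousOn_iUnion hC fun i ↦ (hg i).congr (hf i), hf⟩

theorem exists_continuousOn_glue_two {X Y : Type*} [TopologicalSpace X]
    [TopologicalSpace Y] [Nonempty Y] {K A : Set X} (hK : IsClosed K) (hA : IsClosed A)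
    {g h : X → Y} (hg : ContinuousOn g K) (hh : ContinuousOn h A)
    (hagree : ∀ z ∈ K, z ∈ A → g z = h z) :
    ∃ f : X → Y, ContinuousOn f (K ∪ A) ∧ (∀ z ∈ K, f z = g z) ∧ ∀ z ∈ A, f z = h z := by
  obtain ⟨f, hf, hf'⟩ := exists_continuousOn_glue (C := fun b : Bool ↦ cond b K A)
    (g := fun b ↦ cond b g h) (by simp [hK, hA]) (by simp [hg, hh])
    (by rintro (_ | _) (_ | _) z ⟨h1, h2⟩ <;> simp_all)
  refine ⟨f, ?_, hf' true, hf' false⟩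
  rwa [union_eq_iUnion]

/-- The functions `z - p`, `z - q`, `z - r` are independent modulo exponentials (up to total
degree) if the three points are separated by `K`. -/
theorem zpow_eq_zero_of_log_of_pairwise_ne {K : Set ℂ} (hK : IsCompact K) {p q r : ℂ}
    (hp : p ∉ K) (hq : q ∉ K) (hr : r ∉ K)
    (hpq : connectedComponentIn Kᶜ p ≠ connectedComponentIn Kᶜ q)
    (hpr : connectedComponentIn Kᶜ p ≠ connectedComponentIn Kᶜ r)
    (hqr : connectedComponentIn Kᶜ q ≠ connectedComponentIn Kᶜ r) {i j k : ℤ}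
    (hsum : i + j + k = 0) {g : ℂ → ℂ} (hg : ContinuousOn g K)
    (hexp : ∀ z ∈ K, exp (g z) = (z - p) ^ i * (z - q) ^ j * (z - r) ^ k) :
    i = 0 ∧ j = 0 := by
  have aux : ∀ {x y : ℂ}, y ∉ K → connectedComponentIn Kᶜ x ≠ connectedComponentIn Kᶜ y →
      ∀ z ∈ K ∪ connectedComponentIn Kᶜ x, z - y ≠ 0 := by
    intro x y hy hxy z hz h0
    rw [sub_eq_zero.1 h0] at hz
    rcases hz with hz | hz
    · exact hy hz
    · exact hxy (connectedComponentIn_eq hz)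
  have main : ∀ {x y w : ℂ} {a b c : ℤ}, x ∉ K → y ∉ K → w ∉ K →
      connectedComponentIn Kᶜ x ≠ connectedComponentIn Kᶜ y →
      connectedComponentIn Kᶜ x ≠ connectedComponentIn Kᶜ w →
      (∀ z ∈ K, exp (g z) = (z - x) ^ a * ((z - y) ^ b * (z - w) ^ c)) →
      Bornology.IsBounded (connectedComponentIn Kᶜ x) → a = 0 := by
    intro x y w a b c hx hy hw hxy hxw h hb
    refine zpow_eq_zero_of_log_of_isBounded hK.isClosed hx hb (fun z hz ↦ ⟨?_, ?_⟩) hg h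
    · have hzy : ContinuousAt (fun z ↦ z - y) z := by fun_prop
      have hzw : ContinuousAt (fun z ↦ z - w) z := by fun_prop
      exact (hzy.zpow₀ b (Or.inl (aux hy hxy z hz))).mul (hzw.zpow₀ c (Or.inl (aux hw hxw z hz)))
    · exact mul_ne_zero (zpow_ne_zero _ (aux hy hxy z hz)) (zpow_ne_zero _ (aux hw hxw z hz))
  have hi := main hp hq hr hpq hpr (fun z hz ↦ by rw [hexp z hz]; ring)
  have hj := main hq hp hr hpq.symm hqr (fun z hz ↦ by rw [hexp z hz]; ring)
  have hk := main hr hp hq hpr.symm hqr.symm (fun z hz ↦ by rw [hexp z hz]; ring)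
  have h1 := isBounded_connectedComponentIn_or hK.isBounded hpq
  have h2 := isBounded_connectedComponentIn_or hK.isBounded hpr
  have h3 := isBounded_connectedComponentIn_or hK.isBounded hqr
  rcases h1 with h1 | h1
  · rcases h3 with h3 | h3
    · exact ⟨hi h1, hj h3⟩
    · have := hi h1; have := hk h3; omega
  · rcases h2 with h2 | h2
    · exact ⟨hi h2, hj h1⟩
    · have := hj h1; have := hk h2; omega

/-- Adding an arc to a compact set splits a component of the complement into at most two parts. -/
theorem exists_connectedComponentIn_eq_of_arc {K : Set ℂ} (hK : IsCompact K) {α : ℝ → ℂ}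
    (hα : ContinuousOn α (Icc 0 1)) (hinj : InjOn α (Icc 0 1)) (h0 : α 0 ∈ K) (h1 : α 1 ∈ K)
    (havoid : ∀ t ∈ Ioo (0 : ℝ) 1, α t ∉ K) {p q r : ℂ} (hp : p ∉ K ∪ α '' Icc 0 1)
    (hq : q ∉ K ∪ α '' Icc 0 1) (hr : r ∉ K ∪ α '' Icc 0 1)
    (hpq : connectedComponentIn Kᶜ p = connectedComponentIn Kᶜ q)
    (hpr : connectedComponentIn Kᶜ p = connectedComponentIn Kᶜ r) :
    connectedComponentIn (K ∪ α '' Icc 0 1)ᶜ p = connectedComponentIn (K ∪ α '' Icc 0 1)ᶜ q ∨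
    connectedComponentIn (K ∪ α '' Icc 0 1)ᶜ p = connectedComponentIn (K ∪ α '' Icc 0 1)ᶜ r ∨
    connectedComponentIn (K ∪ α '' Icc 0 1)ᶜ q = connectedComponentIn (K ∪ α '' Icc 0 1)ᶜ r := by
  set A := α '' Icc 0 1 with hA
  have hAc : IsCompact A := isCompact_Icc.image_of_continuousOn hα
  have h0A : α 0 ∈ A := mem_image_of_mem _ (by simp)
  have h1A : α 1 ∈ A := mem_image_of_mem _ (by simp)
  have hKA : ∀ z ∈ K, z ∈ A → z = α 0 ∨ z = α 1 := by
    rintro _ hz ⟨t, ht, rfl⟩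
    rcases eq_or_ne t 0 with rfl | ht0
    · exact Or.inl rfl
    rcases eq_or_ne t 1 with rfl | ht1
    · exact Or.inr rfl
    exact absurd hz (havoid t ⟨lt_of_le_of_ne ht.1 ht0.symm, lt_of_le_of_ne ht.2 ht1⟩)
  have hsub : ∀ {x z}, x ∉ K ∪ A → z ∈ K ∪ A → z - x ≠ 0 := fun hx hz h ↦
    hx (by rwa [← sub_eq_zero.1 h])
  -- the discrepancy between logarithms on `K` and on the arc
  have disc : ∀ x, x ∉ K ∪ A → connectedComponentIn Kᶜ p = connectedComponentIn Kᶜ x →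
      ∃ g h : ℂ → ℂ, ∃ m : ℤ, ContinuousOn g K ∧ ContinuousOn h A ∧
        (∀ z ∈ K, exp (g z) = (z - p) / (z - x)) ∧ (∀ z ∈ A, exp (h z) = (z - p) / (z - x)) ∧
        (g (α 1) - h (α 1)) - (g (α 0) - h (α 0)) = m * (2 * Real.pi * I) := by
    intro x hx hpx
    obtain ⟨g, hg, hg'⟩ := (joinedIn_of_connectedComponentIn_eq hK.isClosed
      (fun h ↦ hx (Or.inl h)) (fun h ↦ hp (Or.inl h)) hpx.symm).exists_log
    rw [hA] at *
    obtain ⟨h, hh, hh'⟩ := exists_log_on_arc hα hinj (f := fun z ↦ (z - p) / (z - x))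
      (ContinuousOn.div (by fun_prop) (by fun_prop) fun z hz ↦ hsub hx (Or.inr hz))
      (fun z hz ↦ div_ne_zero (hsub hp (Or.inr hz)) (hsub hx (Or.inr hz)))
    have hg'' : ∀ z ∈ K, exp (g z) = (z - p) / (z - x) := hg'
    obtain ⟨a, ha⟩ := exists_int_of_exp_eq ((hg'' _ h0).trans (hh' _ h0A).symm)
    obtain ⟨b, hb⟩ := exists_int_of_exp_eq ((hg'' _ h1).trans (hh' _ h1A).symm)
    exact ⟨g, h, b - a, hg, hh, hg'', hh', by rw [ha, hb]; push_cast; ring⟩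
  obtain ⟨g, h, m, hg, hh, hgexp, hhexp, hm⟩ := disc q hq hpq
  obtain ⟨g', h', m', hg', hh', hgexp', hhexp', hm'⟩ := disc r hr hpr
  obtain ⟨n, n', hn, hnm⟩ : ∃ n n' : ℤ, (n ≠ 0 ∨ n' ≠ 0) ∧ n * m + n' * m' = 0 := by
    by_cases hm0 : m = 0
    · exact ⟨1, 0, by simp, by simp [hm0]⟩
    · exact ⟨m', -m, by simp [hm0], by ring⟩
  obtain ⟨f, hf, hfK, hfA⟩ := exists_continuousOn_glue_two hK.isClosed hAc.isClosed
    (g := fun z ↦ n * g z + n' * g' z)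
    (h := fun z ↦ n * h z + n' * h' z +
      (n * (g (α 0) - h (α 0)) + n' * (g' (α 0) - h' (α 0))))
    (by fun_prop) (by fun_prop) (by
      intro z hz hz'
      rcases hKA z hz hz' with rfl | rfl
      · ring
      · have hnm' : (n : ℂ) * m + n' * m' = 0 := by exact_mod_cast hnm
        linear_combination n * hm + n' * hm' + (2 * Real.pi * I) * hnm')
  by_contra! hne
  have hc1 : exp (n * (g (α 0) - h (α 0)) + n' * (g' (α 0) - h' (α 0))) = 1 := by
    rw [exp_add, exp_int_mul, exp_int_mul, exp_sub, exp_sub, hgexp _ h0, hhexp _ h0A,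
      hgexp' _ h0, hhexp' _ h0A, div_self, div_self] <;>
    simp [div_ne_zero (hsub hp (Or.inl h0)) (hsub hr (Or.inl h0)),
      div_ne_zero (hsub hp (Or.inl h0)) (hsub hq (Or.inl h0))]
  have hfexp : ∀ z ∈ K ∪ A, exp (f z) = (z - p) ^ (n + n') * (z - q) ^ (-n) * (z - r) ^ (-n') := by
    have key : ∀ z ∈ K ∪ A, ((z - p) / (z - q)) ^ n * ((z - p) / (z - r)) ^ n' =
        (z - p) ^ (n + n') * (z - q) ^ (-n) * (z - r) ^ (-n') := by
      intro z hz
      rw [zpow_add₀ (hsub hp hz), div_zpow, div_zpow, zpow_neg, zpow_neg]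
      field_simp
    intro z hz
    rw [← key z hz]
    rcases hz with hz | hz
    · rw [hfK z hz, exp_add, exp_int_mul, exp_int_mul, hgexp z hz, hgexp' z hz]
    · rw [hfA z hz, exp_add, hc1, mul_one, exp_add, exp_int_mul, exp_int_mul, hhexp z hz,
        hhexp' z hz]
  have := zpow_eq_zero_of_log_of_pairwise_ne (hK.union hAc) hp hq hr hne.1 hne.2.1 hne.2.2
    (by ring) hf hfexp
  omega

/-- If the endpoints of an arc are joined in the closed set `K`, then the arc splits the
component of the complement of `K` containing it. -/
theorem exists_connectedComponentIn_ne_of_arc {K : Set ℂ} (hK : IsClosed K) {α : ℝ → ℂ}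
    (hα : ContinuousOn α (Icc 0 1)) (hne : α 0 ≠ α 1) (hjoin : JoinedIn K (α 1) (α 0))
    {U : Set ℂ} (hU : IsOpen U) (hUK : U ⊆ Kᶜ)
    (hαU : ∀ t ∈ Ioo (0 : ℝ) 1, α t ∈ U) :
    ∃ p ∈ U, ∃ q ∈ U, p ∉ α '' Icc 0 1 ∧ q ∉ α '' Icc 0 1 ∧
      connectedComponentIn (K ∪ α '' Icc 0 1)ᶜ p ≠ connectedComponentIn (K ∪ α '' Icc 0 1)ᶜ q := by
  classical
  set a := α 0 with ha
  set b := α 1 with hb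
  set A := α '' Icc 0 1 with hA
  have hAc : IsClosed A := (isCompact_Icc.image_of_continuousOn hα).isClosed
  by_contra! hall
  have hjA : JoinedIn Aᶜᶜ b a := by
    rw [compl_compl]
    have : IsPathConnected A :=
      ((convex_Icc (0 : ℝ) 1).isPathConnected (by simp)).image' hα
    exact this.joinedIn _ (mem_image_of_mem _ (by simp)) _ (mem_image_of_mem _ (by simp))
  obtain ⟨LA, hLA, hLA'⟩ := hjA.exists_log
  obtain ⟨LK, hLK, hLK'⟩ := JoinedIn.exists_log (X := Kᶜ) (by rwa [compl_compl])
  have haK : a ∈ K := hjoin.target_mem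
  have hbK : b ∈ K := hjoin.source_mem
  have hone : ∀ z ∈ (K ∪ A)ᶜ, exp (LA z - LK z) = 1 := by
    intro z hz
    simp only [compl_union, mem_inter_iff] at hz
    have h1 : z - a ≠ 0 := fun h ↦ hz.1 (by rwa [sub_eq_zero.1 h])
    have h2 : z - b ≠ 0 := fun h ↦ hz.1 (by rwa [sub_eq_zero.1 h])
    rw [exp_sub, hLA' z hz.2, hLK' z hz.1, div_self (div_ne_zero h1 h2)]
  obtain ⟨c, hc, hcU⟩ : ∃ c, exp c = 1 ∧ ∀ z ∈ U, z ∉ A → LA z = LK z + c := by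
    by_cases hex : ∃ p ∈ U, p ∉ A
    · obtain ⟨p, hpU, hpA⟩ := hex
      have hpKA : p ∈ (K ∪ A)ᶜ := by simp [hpA, show p ∉ K from hUK hpU]
      refine ⟨LA p - LK p, hone p hpKA, fun z hzU hzA ↦ ?_⟩
      have hcomp := hall p hpU z hzU hpA hzA
      have hsub := connectedComponentIn_subset (K ∪ A)ᶜ p
      have hzKA : z ∈ (K ∪ A)ᶜ := by simp [hzA, show z ∉ K from hUK hzU]
      have := isPreconnected_connectedComponentIn.eq_of_exp_eq
        (f := fun z ↦ LA z - LK z) (c := 1)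
        (ContinuousOn.sub (hLA.mono (hsub.trans (by simp)))
          (hLK.mono (hsub.trans (by simp))))
        (fun w hw ↦ hone w (hsub hw)) (mem_connectedComponentIn hpKA)
        (hcomp ▸ mem_connectedComponentIn hzKA)
      rw [this]; ring
    · push Not at hex
      exact ⟨0, by simp, fun z hz hzA ↦ absurd (hex z hz) hzA⟩
  let L : ℂ → ℂ := fun z ↦ if z ∈ U then LK z + c else LA z
  have hAU : ∀ z ∈ A, z ≠ a → z ≠ b → z ∈ U := by
    rintro _ ⟨t, ht, rfl⟩ hta htb
    refine hαU t ⟨lt_of_le_of_ne ht.1 ?_, lt_of_le_of_ne ht.2 ?_⟩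
    · rintro rfl; exact hta rfl
    · rintro rfl; exact htb rfl
  have hLcont : ∀ z, z ≠ a → z ≠ b → ContinuousAt L z := by
    intro z hza hzb
    by_cases hz : z ∈ U
    · have : ContinuousAt (fun z ↦ LK z + c) z :=
        (hLK.continuousAt (hK.isOpen_compl.mem_nhds (hUK hz))).add continuousAt_const
      refine this.congr ?_
      filter_upwards [hU.mem_nhds hz] with w hw
      simp [L, hw]
    · have hzA : z ∉ A := fun h ↦ hz (hAU z h hza hzb)
      refine (hLA.continuousAt (hAc.isOpen_compl.mem_nhds hzA)).congr ?_
      filter_upwards [hAc.isOpen_compl.mem_nhds hzA] with w hw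
      by_cases hwU : w ∈ U
      · simp [L, hwU, hcU w hwU hw]
      · simp [L, hwU]
  have hLexp : ∀ z, z ≠ a → z ≠ b → exp (L z) = (z - a) / (z - b) := by
    intro z hza hzb
    by_cases hz : z ∈ U
    · simp [L, hz, exp_add, hc, hLK' z (hUK hz)]
    · have hzA : z ∉ A := fun h ↦ hz (hAU z h hza hzb)
      simp [L, hz, hLA' z hzA]
  have hdist : 0 < ‖a - b‖ := norm_pos_iff.2 (sub_ne_zero.2 hne)
  set ρ := ‖a - b‖ / 2 with hρ
  have hρ0 : 0 < ρ := by positivity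
  have hzb : ∀ z ∈ Metric.closedBall a ρ, z ≠ b := by
    rintro z hz rfl
    rw [mem_closedBall_iff_norm, norm_sub_rev] at hz
    linarith
  have hza : ∀ z ∈ Metric.sphere a ρ, z ≠ a := by
    rintro z hz rfl
    simp at hz
    exact hρ0.ne hz
  have := zpow_eq_zero_of_log (U := Metric.ball a ρ) (K := Metric.sphere a ρ) (p := a)
    (h := fun z ↦ (z - b)⁻¹) (g := L) (n := 1) Metric.isOpen_ball Metric.isBounded_ball
    Metric.isClosed_sphere Metric.frontier_ball_subset_sphere (Metric.mem_ball_self hρ0)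
    (ContinuousOn.inv₀ (by fun_prop) fun z hz ↦
      sub_ne_zero.2 (hzb z (Metric.closure_ball_subset_closedBall hz)))
    (fun z hz ↦ inv_ne_zero (sub_ne_zero.2 (hzb z (Metric.closure_ball_subset_closedBall hz))))
    (fun z hz ↦ (hLcont z (hza z hz)
      (hzb z (Metric.sphere_subset_closedBall hz))).continuousWithinAt)
    (fun z hz ↦ by
      rw [hLexp z (hza z hz) (hzb z (Metric.sphere_subset_closedBall hz)), zpow_one,
        div_eq_mul_inv])
  exact one_ne_zero this

end ArcSeparation

section Drawing

open Complex Set Topology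

/-- A drawing of `G` in the complex plane, with the arcs indexed by all unordered pairs (only those
of edges matter). -/
structure IsComplexDrawing {V : Type*} (G : SimpleGraph V) (pos : V → ℂ)
    (arc : Sym2 V → ℝ → ℂ) : Prop where
  inj : Function.Injective pos
  cont : ∀ e ∈ G.edgeSet, ContinuousOn (arc e) (Icc 0 1)
  injOn : ∀ e ∈ G.edgeSet, InjOn (arc e) (Icc 0 1)
  ends : ∀ e ∈ G.edgeSet, ∃ u v : V, e = s(u, v) ∧ arc e 0 = pos u ∧ arc e 1 = pos v
  avoid : ∀ e ∈ G.edgeSet, ∀ t ∈ Ioo (0 : ℝ) 1, arc e t ∉ range pos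
  disj : ∀ e ∈ G.edgeSet, ∀ f ∈ G.edgeSet, e ≠ f → ∀ s ∈ Ioo (0 : ℝ) 1, ∀ t ∈ Ioo (0 : ℝ) 1,
    arc e s ≠ arc f t

/-- The set of points covered by a drawing. -/
def drawingCarrier {V : Type*} (G : SimpleGraph V) (pos : V → ℂ) (arc : Sym2 V → ℝ → ℂ) : Set ℂ :=
  range pos ∪ ⋃ e ∈ G.edgeSet, arc e '' Icc 0 1

section Potential

variable {V : Type*} [Finite V]

theorem SimpleGraph.ncard_edgeSet_deleteEdges_lt {G : SimpleGraph V} {e : Sym2 V}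
    (he : e ∈ G.edgeSet) : (G.deleteEdges {e}).edgeSet.ncard < G.edgeSet.ncard := by
  rw [SimpleGraph.edgeSet_deleteEdges]
  exact ncard_sdiff_singleton_lt_of_mem he

theorem SimpleGraph.ncard_edgeSet_deleteEdges_add_one {G : SimpleGraph V} {e : Sym2 V}
    (he : e ∈ G.edgeSet) : (G.deleteEdges {e}).edgeSet.ncard + 1 = G.edgeSet.ncard := by
  rw [SimpleGraph.edgeSet_deleteEdges]
  exact ncard_sdiff_singleton_add_one he

theorem SimpleGraph.IsAcyclic.ncard_edgeSet_lt [Nonempty V] {G : SimpleGraph V}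
    (hG : G.IsAcyclic) : G.edgeSet.ncard < Nat.card V := by
  classical
  have := Fintype.ofFinite V
  obtain ⟨T, hGT, hT⟩ := SimpleGraph.exists_maximal_isAcyclic_of_le_isAcyclic (le_top (a := G)) hG
  have htree : T.IsTree := SimpleGraph.maximal_isAcyclic_iff_isTree.1 (by simpa using hT)
  have h1 := htree.card_edgeFinset
  have h2 : G.edgeSet.ncard ≤ T.edgeSet.ncard :=
    ncard_le_ncard (SimpleGraph.edgeSet_subset_edgeSet.2 hGT)
  rw [Nat.card_eq_fintype_card, ← h1, ← SimpleGraph.coe_edgeFinset T, ncard_coe_finset] at *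
  omega

/-- On a forest, logarithms chosen separately on the edges can be made to agree at the vertices. -/
theorem SimpleGraph.IsAcyclic.exists_potential {G : SimpleGraph V} (hG : G.IsAcyclic) {F : V → ℂ}
    (hF : ∀ v, F v ≠ 0) {L : Sym2 V → V → ℂ}
    (hL : ∀ e ∈ G.edgeSet, ∀ v ∈ e, exp (L e v) = F v) :
    ∃ (l : V → ℂ) (c : Sym2 V → ℂ), (∀ v, exp (l v) = F v) ∧
      ∀ e ∈ G.edgeSet, exp (c e) = 1 ∧ ∀ v ∈ e, L e v + c e = l v := by
  classical
  induction hn : G.edgeSet.ncard using Nat.strong_induction_on generalizing G with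
  | _ n ih =>
  subst hn
  rcases G.edgeSet.eq_empty_or_nonempty with h0 | ⟨e, he⟩
  · exact ⟨fun v ↦ log (F v), 0, fun v ↦ exp_log (hF v), by simp [h0]⟩
  induction e with | _ u v
  set G' := G.deleteEdges {s(u, v)} with hG'
  have hle : G' ≤ G := SimpleGraph.deleteEdges_le _
  obtain ⟨l, c, hl, hc⟩ := ih _ (SimpleGraph.ncard_edgeSet_deleteEdges_lt he) (hG.anti hle)
    (fun e he ↦ hL e (SimpleGraph.edgeSet_subset_edgeSet.2 hle he)) rfl
  have hbr : ¬ G'.Reachable u v :=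
    SimpleGraph.isBridge_iff.1 (SimpleGraph.isAcyclic_iff_forall_isBridge.1 hG he)
  set δ := (L s(u, v) v - L s(u, v) u) - (l v - l u) with hδ
  have hδ1 : exp δ = 1 := by
    rw [hδ, exp_sub, exp_sub, exp_sub, hL _ he v (by simp), hL _ he u (by simp), hl, hl]
    exact div_self (div_ne_zero (hF v) (hF u))
  refine ⟨fun w ↦ l w + if G'.Reachable v w then δ else 0,
    fun e ↦ if e = s(u, v) then l u - L s(u, v) u
      else c e + if ∃ w ∈ e, G'.Reachable v w then δ else 0, ?_, ?_⟩
  · intro w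
    dsimp only
    split_ifs <;> simp [exp_add, hl, hδ1]
  · intro e hee
    by_cases hne : e = s(u, v)
    · subst hne
      have h1 : G'.Reachable v v := SimpleGraph.Reachable.refl v
      have h2 : ¬ G'.Reachable v u := fun h ↦ hbr h.symm
      refine ⟨?_, ?_⟩
      · dsimp only
        rw [if_pos rfl, exp_sub, hl, hL _ he u (by simp), div_self (hF u)]
      · intro w hw
        rcases Sym2.mem_iff.1 hw with rfl | rfl
        · simp [h2]
        · simp only [if_true, h1, hδ]; ring
    · have he' : e ∈ G'.edgeSet := by
        rw [hG', SimpleGraph.edgeSet_deleteEdges]; exact ⟨hee, hne⟩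
      simp only [hne, if_false]
      refine ⟨?_, ?_⟩
      · split_ifs <;> simp [exp_add, (hc e he').1, hδ1]
      · intro w hw
        have : (∃ w ∈ e, G'.Reachable v w) ↔ G'.Reachable v w := by
          refine ⟨?_, fun h ↦ ⟨w, hw, h⟩⟩
          rintro ⟨x, hx, hvx⟩
          rcases eq_or_ne x w with rfl | hxw
          · exact hvx
          · have : e = s(x, w) := (Sym2.mem_and_mem_iff hxw).1 ⟨hx, hw⟩
            rw [this] at he'
            exact hvx.trans (SimpleGraph.Adj.reachable he')
        simp only [this, ← (hc e he').2 w hw]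
        ring

end Potential

namespace IsComplexDrawing

variable {V : Type*} {G H : SimpleGraph V} {pos : V → ℂ} {arc : Sym2 V → ℝ → ℂ}

theorem mono (hD : IsComplexDrawing G pos arc) (hle : H ≤ G) : IsComplexDrawing H pos arc := by
  have hs := SimpleGraph.edgeSet_subset_edgeSet.2 hle
  exact ⟨hD.inj, fun e he ↦ hD.cont e (hs he), fun e he ↦ hD.injOn e (hs he),
    fun e he ↦ hD.ends e (hs he), fun e he ↦ hD.avoid e (hs he),
    fun e he f hf ↦ hD.disj e (hs he) f (hs hf)⟩

theorem carrier_mono (hle : H ≤ G) : drawingCarrier H pos arc ⊆ drawingCarrier G pos arc :=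
  union_subset_union_right _
    (biUnion_subset_biUnion_left (SimpleGraph.edgeSet_subset_edgeSet.2 hle))

theorem isCompact_carrier [Finite V] (hD : IsComplexDrawing G pos arc) :
    IsCompact (drawingCarrier G pos arc) :=
  (finite_range pos).isCompact.union <| (toFinite G.edgeSet).isCompact_biUnion fun e he ↦
    isCompact_Icc.image_of_continuousOn (hD.cont e he)

theorem pos_mem_carrier (v : V) : pos v ∈ drawingCarrier G pos arc := Or.inl ⟨v, rfl⟩

theorem arc_subset_carrier {e : Sym2 V} (he : e ∈ G.edgeSet) :
    arc e '' Icc 0 1 ⊆ drawingCarrier G pos arc :=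
  (subset_biUnion_of_mem (u := fun e ↦ arc e '' Icc (0 : ℝ) 1) he).trans subset_union_right

theorem carrier_deleteEdges {e : Sym2 V} (he : e ∈ G.edgeSet) :
    drawingCarrier (G.deleteEdges {e}) pos arc ∪ arc e '' Icc 0 1 = drawingCarrier G pos arc := by
  refine Subset.antisymm (union_subset (carrier_mono (SimpleGraph.deleteEdges_le _))
    (arc_subset_carrier he)) ?_
  rintro z (hz | hz)
  · exact Or.inl (Or.inl hz)
  · obtain ⟨f, hf, hz⟩ := mem_iUnion₂.1 hz
    by_cases hfe : f = e
    · exact Or.inr (hfe ▸ hz)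
    · refine Or.inl (arc_subset_carrier ?_ hz)
      rw [SimpleGraph.edgeSet_deleteEdges]
      exact ⟨hf, hfe⟩

theorem eq_pos_of_mem_arc (hD : IsComplexDrawing G pos arc) {e : Sym2 V} (he : e ∈ G.edgeSet)
    {z : ℂ} (hz : z ∈ arc e '' Icc 0 1) : (∃ v ∈ e, z = pos v) ∨ z ∈ arc e '' Ioo 0 1 := by
  obtain ⟨t, ht, rfl⟩ := hz
  obtain ⟨u, v, huv, h0, h1⟩ := hD.ends e he
  rcases eq_or_ne t 0 with rfl | ht0
  · exact Or.inl ⟨u, by simp [huv], h0⟩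
  rcases eq_or_ne t 1 with rfl | ht1
  · exact Or.inl ⟨v, by simp [huv], h1⟩
  exact Or.inr ⟨t, ⟨lt_of_le_of_ne ht.1 ht0.symm, lt_of_le_of_ne ht.2 ht1⟩, rfl⟩

theorem pos_mem_arc (hD : IsComplexDrawing G pos arc) {e : Sym2 V} (he : e ∈ G.edgeSet) {v : V}
    (hv : v ∈ e) : pos v ∈ arc e '' Icc 0 1 := by
  obtain ⟨x, y, hxy, h0, h1⟩ := hD.ends e he
  rw [hxy, Sym2.mem_iff] at hv
  rcases hv with rfl | rfl
  · exact ⟨0, by simp, h0⟩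
  · exact ⟨1, by simp, h1⟩

theorem mem_of_pos_mem_arc (hD : IsComplexDrawing G pos arc) {e : Sym2 V} (he : e ∈ G.edgeSet)
    {v : V} (hz : pos v ∈ arc e '' Icc 0 1) : v ∈ e := by
  rcases hD.eq_pos_of_mem_arc he hz with ⟨w, hw, hvw⟩ | ⟨t, ht, htv⟩
  · exact hD.inj hvw ▸ hw
  · exact absurd ⟨v, htv.symm⟩ (hD.avoid e he t ht)

theorem exists_pos_of_mem_arcs (hD : IsComplexDrawing G pos arc) {e f : Sym2 V}
    (he : e ∈ G.edgeSet) (hf : f ∈ G.edgeSet) (hne : e ≠ f) {z : ℂ} (hze : z ∈ arc e '' Icc 0 1)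
    (hzf : z ∈ arc f '' Icc 0 1) : ∃ v, z = pos v := by
  rcases hD.eq_pos_of_mem_arc he hze with ⟨v, -, hv⟩ | ⟨s, hs, rfl⟩
  · exact ⟨v, hv⟩
  rcases hD.eq_pos_of_mem_arc hf hzf with ⟨v, -, hv⟩ | ⟨t, ht, hst⟩
  · exact ⟨v, hv⟩
  exact absurd hst.symm (hD.disj e he f hf hne s hs t ht)

theorem arc_notMem_carrier_deleteEdges (hD : IsComplexDrawing G pos arc) {e : Sym2 V}
    (he : e ∈ G.edgeSet) {t : ℝ} (ht : t ∈ Ioo (0 : ℝ) 1) :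
    arc e t ∉ drawingCarrier (G.deleteEdges {e}) pos arc := by
  rintro (h | h)
  · exact hD.avoid e he t ht h
  · obtain ⟨f, hf, hz⟩ := mem_iUnion₂.1 h
    rw [SimpleGraph.edgeSet_deleteEdges] at hf
    obtain ⟨v, hv⟩ := hD.exists_pos_of_mem_arcs he hf.1 (Ne.symm hf.2)
      ⟨t, Ioo_subset_Icc_self ht, rfl⟩ hz
    exact hD.avoid e he t ht ⟨v, hv.symm⟩

theorem joinedIn_carrier_of_reachable (hD : IsComplexDrawing G pos arc) {u v : V}
    (h : G.Reachable u v) : JoinedIn (drawingCarrier G pos arc) (pos u) (pos v) := by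
  obtain ⟨w⟩ := h
  induction w with
  | nil => exact JoinedIn.refl (pos_mem_carrier _)
  | @cons a b c hab w ih =>
    refine JoinedIn.trans ?_ ih
    have he : s(a, b) ∈ G.edgeSet := hab
    have hpc : IsPathConnected (arc s(a, b) '' Icc 0 1) :=
      ((convex_Icc (0 : ℝ) 1).isPathConnected (by simp)).image' (hD.cont _ he)
    exact (hpc.joinedIn _ (hD.pos_mem_arc he (by simp)) _ (hD.pos_mem_arc he (by simp))).mono
      (arc_subset_carrier he)

/-- Every nonvanishing continuous function on a drawn forest has a logarithm. -/
theorem exists_log_of_isAcyclic [Finite V] (hD : IsComplexDrawing G pos arc) (hG : G.IsAcyclic)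
    {f : ℂ → ℂ} (hf : ContinuousOn f (drawingCarrier G pos arc))
    (hne : ∀ z ∈ drawingCarrier G pos arc, f z ≠ 0) :
    ∃ g : ℂ → ℂ, ContinuousOn g (drawingCarrier G pos arc) ∧
      ∀ z ∈ drawingCarrier G pos arc, exp (g z) = f z := by
  have hlog : ∀ e : Sym2 V, ∃ g : ℂ → ℂ, e ∈ G.edgeSet → ContinuousOn g (arc e '' Icc 0 1) ∧
      ∀ z ∈ arc e '' Icc 0 1, exp (g z) = f z := by
    intro e
    by_cases he : e ∈ G.edgeSet
    · obtain ⟨g, hg⟩ := exists_log_on_arc (hD.cont e he) (hD.injOn e he)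
        (hf.mono (arc_subset_carrier he)) (fun z hz ↦ hne z (arc_subset_carrier he hz))
      exact ⟨g, fun _ ↦ hg⟩
    · exact ⟨0, fun h ↦ absurd h he⟩
  choose L hL using hlog
  obtain ⟨l, c, hl, hc⟩ := hG.exists_potential (F := fun v ↦ f (pos v))
    (fun v ↦ hne _ (pos_mem_carrier v)) (L := fun e v ↦ L e (pos v))
    (fun e he v hv ↦ (hL e he).2 _ (hD.pos_mem_arc he hv))
  obtain ⟨g, hg, hg'⟩ := exists_continuousOn_glue (ι := V ⊕ G.edgeSet)
    (C := Sum.elim (fun v ↦ {pos v}) (fun e ↦ arc e '' Icc 0 1))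
    (g := Sum.elim (fun v _ ↦ l v) (fun e z ↦ L e z + c e))
    (by
      rintro (v | e)
      · exact isClosed_singleton
      · exact (isCompact_Icc.image_of_continuousOn (hD.cont e e.2)).isClosed)
    (by
      rintro (v | e)
      · exact continuousOn_const
      · exact (hL e e.2).1.add continuousOn_const)
    (by
      have hve : ∀ (v : V) (e : G.edgeSet), pos v ∈ arc e '' Icc 0 1 →
          L e (pos v) + c e = l v := fun v e h ↦
        (hc e e.2).2 v (hD.mem_of_pos_mem_arc e.2 h)
      rintro (v | e) (w | f) z ⟨h1, h2⟩
      · simp only [Sum.elim_inl, mem_singleton_iff] at h1 h2 ⊢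
        rw [hD.inj (h1.symm.trans h2)]
      · simp only [Sum.elim_inl, Sum.elim_inr, mem_singleton_iff] at h1 h2 ⊢
        subst h1
        exact (hve v f h2).symm
      · simp only [Sum.elim_inl, Sum.elim_inr, mem_singleton_iff] at h1 h2 ⊢
        subst h2
        exact hve w e h1
      · simp only [Sum.elim_inr] at h1 h2 ⊢
        by_cases hef : e = f
        · rw [hef]
        · obtain ⟨v, rfl⟩ := hD.exists_pos_of_mem_arcs e.2 f.2 (fun h ↦ hef (Subtype.ext h)) h1 h2
          rw [hve v e h1, hve v f h2])
  have hcar : drawingCarrier G pos arc = ⋃ i : V ⊕ G.edgeSet,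
      Sum.elim (fun v ↦ {pos v}) (fun e : G.edgeSet ↦ arc e '' Icc 0 1) i := by
    rw [drawingCarrier, iUnion_sum]
    simp [iUnion_subtype, iUnion_singleton_eq_range]
  refine ⟨g, hcar ▸ hg, ?_⟩
  rintro z (⟨v, rfl⟩ | hz)
  · rw [hg' (Sum.inl v) _ rfl]
    exact hl v
  · obtain ⟨e, he, hz⟩ := mem_iUnion₂.1 hz
    rw [hg' (Sum.inr ⟨e, he⟩) _ hz]
    simp [exp_add, (hc e he).1, (hL e he).2 z hz]

/-- A drawn forest does not separate the plane. -/
theorem connectedComponentIn_eq_of_isAcyclic [Finite V] (hD : IsComplexDrawing G pos arc)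
    (hG : G.IsAcyclic) {p q : ℂ} (hp : p ∉ drawingCarrier G pos arc)
    (hq : q ∉ drawingCarrier G pos arc) :
    connectedComponentIn (drawingCarrier G pos arc)ᶜ p =
      connectedComponentIn (drawingCarrier G pos arc)ᶜ q := by
  have hsub : ∀ {x z}, x ∉ drawingCarrier G pos arc → z ∈ drawingCarrier G pos arc → z - x ≠ 0 :=
    fun hx hz h ↦ hx (by rwa [← sub_eq_zero.1 h])
  obtain ⟨g, hg, hg'⟩ := hD.exists_log_of_isAcyclic hG (f := fun z ↦ (z - p) / (z - q))
    (ContinuousOn.div (by fun_prop) (by fun_prop) fun z hz ↦ hsub hq hz)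
    (fun z hz ↦ div_ne_zero (hsub hp hz) (hsub hq hz))
  exact connectedComponentIn_eq_of_log hD.isCompact_carrier hp hq hg hg'

/-- Lower bound in Euler's formula: the drawing has at least `|E| - |V| + 2` faces. -/
theorem exists_separated_points [Finite V] [Nonempty V] (hD : IsComplexDrawing G pos arc) :
    ∃ P : Finset ℂ, (∀ p ∈ P, p ∉ drawingCarrier G pos arc) ∧
      InjOn (connectedComponentIn (drawingCarrier G pos arc)ᶜ) P ∧
      G.edgeSet.ncard + 2 ≤ P.card + Nat.card V := by
  classical
  induction hn : G.edgeSet.ncard using Nat.strong_induction_on generalizing G with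
  | _ n ih =>
  subst hn
  by_cases hG : G.IsAcyclic
  · have h1 := hG.ncard_edgeSet_lt
    have hb : Bornology.IsBounded (drawingCarrier G pos arc) := hD.isCompact_carrier.isBounded
    obtain ⟨p, hp⟩ : ∃ p, p ∉ drawingCarrier G pos arc := by
      by_contra! h
      rw [eq_univ_of_forall h] at hb
      exact NormedSpace.unbounded_univ ℝ ℂ hb
    exact ⟨{p}, by simpa using hp, by simp, by simp; omega⟩
  · have hex : ∃ e ∈ G.edgeSet, ¬ G.IsBridge e := by
      by_contra! h
      exact hG (SimpleGraph.isAcyclic_iff_forall_isBridge.2 h)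
    obtain ⟨e, he, hbr⟩ := hex
    set G' := G.deleteEdges {e} with hG'
    have hle : G' ≤ G := SimpleGraph.deleteEdges_le _
    have hD' := hD.mono hle
    have hcard := SimpleGraph.ncard_edgeSet_deleteEdges_add_one he
    obtain ⟨P, hP, hPinj, hPcard⟩ := ih _ (SimpleGraph.ncard_edgeSet_deleteEdges_lt he) hD' rfl
    obtain ⟨u, v, huv, h0, h1⟩ := hD.ends e he
    set K := drawingCarrier G' pos arc with hK
    have hKc : IsClosed K := hD'.isCompact_carrier.isClosed
    set U := connectedComponentIn Kᶜ (arc e (1 / 2)) with hU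
    have hhalf : (1 / 2 : ℝ) ∈ Ioo (0 : ℝ) 1 := by norm_num
    have hmaps : ∀ t ∈ Ioo (0 : ℝ) 1, arc e t ∈ U := by
      have hpre : IsPreconnected (arc e '' Ioo 0 1) :=
        isPreconnected_Ioo.image _ ((hD.cont e he).mono Ioo_subset_Icc_self)
      have := hpre.subset_connectedComponentIn (mem_image_of_mem _ hhalf) (F := Kᶜ)
        (by rintro _ ⟨t, ht, rfl⟩; exact hD.arc_notMem_carrier_deleteEdges he ht)
      exact fun t ht ↦ this (mem_image_of_mem _ ht)
    have hreach : G'.Reachable v u := by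
      subst huv
      rw [SimpleGraph.isBridge_iff, not_not] at hbr
      exact hbr.symm
    obtain ⟨p, hpU, q, hqU, hpA, hqA, hpq⟩ := exists_connectedComponentIn_ne_of_arc hKc
      (hD.cont e he) (fun h ↦ zero_ne_one (hD.injOn e he (by simp) (by simp) h))
      (by rw [h0, h1]; exact hD'.joinedIn_carrier_of_reachable hreach)
      (U := U) hKc.isOpen_compl.connectedComponentIn (connectedComponentIn_subset _ _) hmaps
    rw [carrier_deleteEdges he] at hpq
    have hUK : U ⊆ Kᶜ := connectedComponentIn_subset _ _
    have hmono : (drawingCarrier G pos arc)ᶜ ⊆ Kᶜ := compl_subset_compl.2 (carrier_mono hle)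
    have hcar : ∀ x, x ∉ K → x ∉ arc e '' Icc 0 1 → x ∉ drawingCarrier G pos arc := by
      intro x hx hx' h
      rw [← carrier_deleteEdges he] at h
      exact h.elim hx hx'
    have hcoarse : ∀ {x y}, x ∉ drawingCarrier G pos arc → y ∉ drawingCarrier G pos arc →
        connectedComponentIn (drawingCarrier G pos arc)ᶜ x =
          connectedComponentIn (drawingCarrier G pos arc)ᶜ y →
        connectedComponentIn Kᶜ x = connectedComponentIn Kᶜ y := by
      intro x y hx hy hxy
      refine connectedComponentIn_eq (connectedComponentIn_mono x hmono ?_)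
      rw [hxy]
      exact mem_connectedComponentIn hy
    have hp := hcar p (hUK hpU) hpA
    have hq := hcar q (hUK hqU) hqA
    set Q := P.filter (· ∉ U) with hQ
    have hQmem : ∀ x ∈ Q, x ∉ drawingCarrier G pos arc := by
      intro x hx
      rw [hQ, Finset.mem_filter] at hx
      refine hcar x (hP x hx.1) fun hxA ↦ ?_
      rcases hD.eq_pos_of_mem_arc he hxA with ⟨w, -, rfl⟩ | ⟨t, ht, rfl⟩
      · exact hP _ hx.1 (pos_mem_carrier w)
      · exact hx.2 (hmaps t ht)
    have hQne : ∀ x ∈ Q, ∀ y ∈ U, y ∉ drawingCarrier G pos arc →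
        connectedComponentIn (drawingCarrier G pos arc)ᶜ x ≠
          connectedComponentIn (drawingCarrier G pos arc)ᶜ y := by
      intro x hx y hy hyc h
      have := hcoarse (hQmem x hx) hyc h
      rw [hQ, Finset.mem_filter] at hx
      apply hx.2
      rw [hU, connectedComponentIn_eq hy, ← this]
      exact mem_connectedComponentIn (hP x hx.1)
    have hQcard : P.card ≤ Q.card + 1 := by
      have h1 := Finset.card_filter_add_card_filter_not (s := P) (· ∉ U)
      have h2 : (P.filter fun x ↦ ¬ (x ∉ U)).card ≤ 1 := by
        rw [Finset.card_le_one]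
        intro x hx y hy
        simp only [Finset.mem_filter, not_not] at hx hy
        exact hPinj hx.1 hy.1 ((connectedComponentIn_eq hx.2).symm.trans
          (connectedComponentIn_eq hy.2))
      rw [← hQ] at h1
      omega
    have hpQ : p ∉ Q := by simp [hQ, hpU]
    have hqQ : q ∉ Q := by simp [hQ, hqU]
    have hpq' : p ≠ q := fun h ↦ hpq (by rw [h])
    refine ⟨insert p (insert q Q), ?_, ?_, ?_⟩
    · intro x hx
      simp only [Finset.mem_insert] at hx
      rcases hx with rfl | rfl | hx
      exacts [hp, hq, hQmem x hx]
    · intro x hx y hy hxy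
      simp only [Finset.coe_insert, mem_insert_iff, Finset.mem_coe] at hx hy
      rcases hx with rfl | rfl | hx <;> rcases hy with rfl | rfl | hy
      · rfl
      · exact absurd hxy hpq
      · exact absurd hxy.symm (hQne y hy _ hpU hp)
      · exact absurd hxy.symm hpq
      · rfl
      · exact absurd hxy.symm (hQne y hy _ hqU hq)
      · exact absurd hxy (hQne x hx _ hpU hp)
      · exact absurd hxy (hQne x hx _ hqU hq)
      · rw [hQ, Finset.mem_filter] at hx hy
        exact hPinj hx.1 hy.1 (hcoarse (hQmem x (Finset.mem_filter.2 hx))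
          (hQmem y (Finset.mem_filter.2 hy)) hxy)
    · rw [Finset.card_insert_of_notMem (by simp [hpq', hpQ]), Finset.card_insert_of_notMem hqQ]
      omega

/-- The edges of the drawing on the boundary of the face of `p`. -/
def boundaryEdges (G : SimpleGraph V) (pos : V → ℂ) (arc : Sym2 V → ℝ → ℂ) (p : ℂ) :
    Set (Sym2 V) :=
  {e ∈ G.edgeSet |
    (closure (connectedComponentIn (drawingCarrier G pos arc)ᶜ p) ∩ arc e '' Ioo 0 1).Nonempty}

theorem fromEdgeSet_boundaryEdges_le (p : ℂ) :
    SimpleGraph.fromEdgeSet (boundaryEdges G pos arc p) ≤ G := by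
  intro u v h
  rw [SimpleGraph.fromEdgeSet_adj] at h
  exact h.1.1

theorem edgeSet_fromEdgeSet_boundaryEdges (p : ℂ) :
    (SimpleGraph.fromEdgeSet (boundaryEdges G pos arc p)).edgeSet = boundaryEdges G pos arc p := by
  rw [SimpleGraph.edgeSet_fromEdgeSet]
  refine sdiff_eq_left.2 (disjoint_left.2 fun e he hd ↦ ?_)
  exact G.not_isDiag_of_mem_edgeSet he.1 hd

/-- The boundary of a face contains a cycle as soon as there are two faces. -/
theorem not_isAcyclic_boundaryEdges [Finite V] (hD : IsComplexDrawing G pos arc) {p q : ℂ}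
    (hp : p ∉ drawingCarrier G pos arc) (hq : q ∉ drawingCarrier G pos arc)
    (hpq : connectedComponentIn (drawingCarrier G pos arc)ᶜ p ≠
      connectedComponentIn (drawingCarrier G pos arc)ᶜ q) :
    ¬ (SimpleGraph.fromEdgeSet (boundaryEdges G pos arc p)).IsAcyclic := by
  intro hac
  set H := SimpleGraph.fromEdgeSet (boundaryEdges G pos arc p) with hH
  have hle : H ≤ G := fromEdgeSet_boundaryEdges_le p
  have hsub := carrier_mono (pos := pos) (arc := arc) hle
  have hpH : p ∉ drawingCarrier H pos arc := fun h ↦ hp (hsub h)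
  have hqH : q ∉ drawingCarrier H pos arc := fun h ↦ hq (hsub h)
  have heq := (hD.mono hle).connectedComponentIn_eq_of_isAcyclic hac hpH hqH
  have hKc := hD.isCompact_carrier.isClosed
  set W := connectedComponentIn (drawingCarrier G pos arc)ᶜ p with hW
  have hWo : IsOpen W := hKc.isOpen_compl.connectedComponentIn
  have hincl : connectedComponentIn (drawingCarrier H pos arc)ᶜ p ⊆ W := by
    refine isPreconnected_connectedComponentIn.subset_of_closure_inter_subset hWo
      ⟨p, mem_connectedComponentIn hpH, mem_connectedComponentIn hp⟩ ?_
    rintro x ⟨hxW, hxH⟩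
    by_contra hx
    have hxf : x ∈ frontier W := by rw [hWo.frontier_eq]; exact ⟨hxW, hx⟩
    refine connectedComponentIn_subset _ _ hxH ?_
    rcases frontier_connectedComponentIn_subset hKc p hxf with hxV | hxE
    · exact Or.inl hxV
    · obtain ⟨e, he, hxe⟩ := mem_iUnion₂.1 hxE
      rcases hD.eq_pos_of_mem_arc he hxe with ⟨v, -, rfl⟩ | hxi
      · exact pos_mem_carrier v
      · refine arc_subset_carrier ?_ hxe
        rw [edgeSet_fromEdgeSet_boundaryEdges]
        exact ⟨he, x, hxW, hxi⟩
  have : q ∈ W := hincl (heq ▸ mem_connectedComponentIn hqH)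
  exact hpq (connectedComponentIn_eq this)

/-- An edge lies on the boundary of at most two faces. -/
theorem exists_eq_of_mem_boundaryEdges [Finite V] (hD : IsComplexDrawing G pos arc)
    {e : Sym2 V} {p q r : ℂ} (hp : p ∉ drawingCarrier G pos arc)
    (hq : q ∉ drawingCarrier G pos arc) (hr : r ∉ drawingCarrier G pos arc)
    (hpe : e ∈ boundaryEdges G pos arc p) (hqe : e ∈ boundaryEdges G pos arc q)
    (hre : e ∈ boundaryEdges G pos arc r) :
    connectedComponentIn (drawingCarrier G pos arc)ᶜ p =
      connectedComponentIn (drawingCarrier G pos arc)ᶜ q ∨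
    connectedComponentIn (drawingCarrier G pos arc)ᶜ p =
      connectedComponentIn (drawingCarrier G pos arc)ᶜ r ∨
    connectedComponentIn (drawingCarrier G pos arc)ᶜ q =
      connectedComponentIn (drawingCarrier G pos arc)ᶜ r := by
  have he : e ∈ G.edgeSet := hpe.1
  set K := drawingCarrier (G.deleteEdges {e}) pos arc with hK
  have hle : G.deleteEdges {e} ≤ G := SimpleGraph.deleteEdges_le _
  have hKc : IsCompact K := (hD.mono hle).isCompact_carrier
  have hhalf : (1 / 2 : ℝ) ∈ Ioo (0 : ℝ) 1 := by norm_num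
  have hmono : (drawingCarrier G pos arc)ᶜ ⊆ Kᶜ := compl_subset_compl.2 (carrier_mono hle)
  have hin : ∀ x, x ∉ drawingCarrier G pos arc → e ∈ boundaryEdges G pos arc x →
      connectedComponentIn Kᶜ x = connectedComponentIn Kᶜ (arc e (1 / 2)) := by
    rintro x hx ⟨-, y, hyc, hy⟩
    have hpre : IsPreconnected (arc e '' Ioo 0 1) :=
      isPreconnected_Ioo.image _ ((hD.cont e he).mono Ioo_subset_Icc_self)
    have hyU : y ∈ connectedComponentIn Kᶜ (arc e (1 / 2)) :=
      hpre.subset_connectedComponentIn (mem_image_of_mem _ hhalf) (F := Kᶜ)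
        (by rintro _ ⟨t, ht, rfl⟩; exact hD.arc_notMem_carrier_deleteEdges he ht) hy
    obtain ⟨w, hwU, hw⟩ := mem_closure_iff.1 hyc _
      hKc.isClosed.isOpen_compl.connectedComponentIn hyU
    rw [connectedComponentIn_eq (connectedComponentIn_mono x hmono hw),
      connectedComponentIn_eq hwU]
  obtain ⟨u, v, -, h0, h1⟩ := hD.ends e he
  have hcar := carrier_deleteEdges (pos := pos) (arc := arc) he
  rw [← hcar] at hp hq hr ⊢
  rw [← hcar] at hin
  exact exists_connectedComponentIn_eq_of_arc hKc (hD.cont e he) (hD.injOn e he)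
    (h0 ▸ pos_mem_carrier u) (h1 ▸ pos_mem_carrier v)
    (fun t ht ↦ hD.arc_notMem_carrier_deleteEdges he ht) hp hq hr
    ((hin p hp hpe).trans (hin q hq hqe).symm) ((hin p hp hpe).trans (hin r hr hre).symm)

/-- A planar graph of girth at least six has fewer than `3 / 2 * |V|` edges. -/
theorem two_mul_ncard_edgeSet_lt [Finite V] [Nonempty V] (hD : IsComplexDrawing G pos arc)
    (hgirth : (6 : ℕ∞) ≤ G.egirth) : 2 * G.edgeSet.ncard < 3 * Nat.card V := by
  classical
  obtain ⟨P, hP, hPinj, hPcard⟩ := hD.exists_separated_points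
  have hV : 0 < Nat.card V := Nat.card_pos
  by_cases hP1 : P.card ≤ 1
  · omega
  have hfin : (G.edgeSet).Finite := toFinite _
  have hsix : ∀ p ∈ P, 6 ≤ (Finset.bipartiteAbove (fun p e ↦ e ∈ boundaryEdges G pos arc p)
      hfin.toFinset p).card := by
    intro p hp
    obtain ⟨q, hq, hqp⟩ := Finset.exists_mem_ne (by omega : 1 < P.card) p
    have hnot := hD.not_isAcyclic_boundaryEdges (hP p hp) (hP q hq)
      (fun h ↦ hqp (hPinj hp hq h).symm)
    set H := SimpleGraph.fromEdgeSet (boundaryEdges G pos arc p) with hH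
    have hgH : (6 : ℕ∞) ≤ H.egirth :=
      hgirth.trans (SimpleGraph.egirth_anti (fromEdgeSet_boundaryEdges_le p))
    simp only [SimpleGraph.IsAcyclic, not_forall, not_not] at hnot
    obtain ⟨v, w, hw⟩ := hnot
    have hlen : 6 ≤ w.length := by exact_mod_cast SimpleGraph.le_egirth.1 hgH v w hw
    rw [← w.length_edges, ← List.toFinset_card_of_nodup hw.edges_nodup] at hlen
    refine hlen.trans (Finset.card_le_card fun e he ↦ ?_)
    have he' : e ∈ boundaryEdges G pos arc p := by
      rw [← edgeSet_fromEdgeSet_boundaryEdges]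
      exact w.edges_subset_edgeSet (List.mem_toFinset.1 he)
    simp [Finset.mem_bipartiteAbove, he', he'.1]
  have htwo : ∀ e ∈ hfin.toFinset, (Finset.bipartiteBelow
      (fun p e ↦ e ∈ boundaryEdges G pos arc p) P e).card ≤ 2 := by
    intro e _
    by_contra! h
    obtain ⟨p, hp, q, hq, r, hr, hpq, hpr, hqr⟩ := Finset.two_lt_card.1 h
    rw [Finset.mem_bipartiteBelow] at hp hq hr
    rcases hD.exists_eq_of_mem_boundaryEdges (hP p hp.1) (hP q hq.1) (hP r hr.1) hp.2 hq.2 hr.2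
      with h | h | h
    · exact hpq (hPinj hp.1 hq.1 h)
    · exact hpr (hPinj hp.1 hr.1 h)
    · exact hqr (hPinj hq.1 hr.1 h)
  have hcount := Finset.card_mul_le_card_mul _ hsix htwo
  rw [← ncard_eq_toFinset_card _ hfin] at hcount
  omega

end IsComplexDrawing

end Drawing

section FrugalColouring

open Set

section Sparse

variable {V : Type*} {G : SimpleGraph V} {pos : V → ℂ} {arc : Sym2 V → ℝ → ℂ}

theorem SimpleGraph.egirth_le_of_injective_hom {W : Type*} {H : SimpleGraph W} (f : H →g G)
    (hf : Function.Injective f) : G.egirth ≤ H.egirth :=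
  SimpleGraph.le_egirth.2 fun v w hw ↦ by
    have := SimpleGraph.le_egirth.1 (le_refl G.egirth) (f v) (w.map f) (hw.map hf)
    rwa [SimpleGraph.Walk.length_map] at this

theorem IsComplexDrawing.induce (hD : IsComplexDrawing G pos arc) (s : Set V) :
    IsComplexDrawing (G.induce s) (fun v ↦ pos v) (fun e ↦ arc (e.map Subtype.val)) := by
  have hmem : ∀ e ∈ (G.induce s).edgeSet, e.map Subtype.val ∈ G.edgeSet := by
    intro e
    induction e with | _ u v
    exact id
  refine ⟨fun u v h ↦ Subtype.ext (hD.inj h), fun e he ↦ hD.cont _ (hmem e he),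
    fun e he ↦ hD.injOn _ (hmem e he), fun e he ↦ ?_, fun e he t ht ↦ ?_,
    fun e he f hf hef ↦ hD.disj _ (hmem e he) _ (hmem f hf)
      fun h ↦ hef (Sym2.map.injective Subtype.val_injective h)⟩
  · obtain ⟨a, b, hab, h0, h1⟩ := hD.ends _ (hmem e he)
    have ha : a ∈ e.map Subtype.val := by simp [hab]
    have hb : b ∈ e.map Subtype.val := by simp [hab]
    obtain ⟨a, -, rfl⟩ := Sym2.mem_map.1 ha
    obtain ⟨b, -, rfl⟩ := Sym2.mem_map.1 hb
    exact ⟨a, b, Sym2.map.injective Subtype.val_injective hab, h0, h1⟩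
  · rintro ⟨v, hv⟩
    exact hD.avoid _ (hmem e he) t ht ⟨v, hv⟩

/-- A drawn graph of girth at least six has fewer than `3 / 2` edges per non-isolated vertex. -/
theorem IsComplexDrawing.two_mul_ncard_edgeSet_lt_support [Finite V]
    (hD : IsComplexDrawing G pos arc) (hg : 6 ≤ G.egirth) (hne : G ≠ ⊥) :
    2 * G.edgeSet.ncard < 3 * G.support.ncard := by
  obtain ⟨u, v, huv⟩ := SimpleGraph.ne_bot_iff_exists_adj.1 hne
  have : Nonempty G.support := ⟨⟨u, v, huv⟩⟩
  have key := (hD.induce G.support).two_mul_ncard_edgeSet_lt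
    (hg.trans (SimpleGraph.egirth_le_of_injective_hom
      (SimpleGraph.Embedding.induce G.support).toHom Subtype.val_injective))
  rw [Nat.card_coe_set_eq] at key
  have himage : G.edgeSet = Sym2.map Subtype.val '' (G.induce G.support).edgeSet := by
    ext e
    induction e with | _ a b
    constructor
    · intro h
      have h' : G.Adj a b := h
      exact ⟨s(⟨a, b, h'⟩, ⟨b, a, h'.symm⟩), h, rfl⟩
    · rintro ⟨f, hf, hfe⟩
      induction f with | _ x y
      rw [← hfe]
      exact hf
  rwa [himage, ncard_image_of_injective _ (Sym2.map.injective Subtype.val_injective)]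

theorem PlaneEmbedding.exists_isComplexDrawing (E : PlaneEmbedding G) :
    ∃ pos arc, IsComplexDrawing G pos arc := by
  classical
  let φ := Complex.equivRealProdCLM.symm
  refine ⟨fun v ↦ φ (E.pos v), fun e t ↦ if h : e ∈ G.edgeSet then φ (E.arc ⟨e, h⟩ t) else 0,
    fun u v h ↦ E.inj (φ.injective h), fun e he ↦ ?_, fun e he ↦ ?_, fun e he ↦ ?_,
    fun e he t ht ↦ ?_, fun e he f hf hef s hs t ht ↦ ?_⟩
  · simp only [he, dif_pos]
    exact φ.continuous.comp_continuousOn (E.arc_cont ⟨e, he⟩)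
  · simp only [he, dif_pos]
    exact φ.injective.comp_injOn (E.arc_inj ⟨e, he⟩)
  · simp only [he, dif_pos]
    obtain ⟨u, v, h, h0, h1⟩ := E.arc_ends ⟨e, he⟩
    exact ⟨u, v, h, by rw [h0], by rw [h1]⟩
  · simp only [he, dif_pos]
    rintro ⟨v, hv⟩
    exact E.arc_avoid ⟨e, he⟩ t ht ⟨v, φ.injective hv⟩
  · simp only [he, hf, dif_pos]
    exact fun h ↦ E.arc_disjoint ⟨e, he⟩ ⟨f, hf⟩ (fun h ↦ hef (congrArg Subtype.val h)) s hs t ht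
      (φ.injective h)

end Sparse

section Discharging

open scoped Classical

variable {V : Type*} [Fintype V] {G : SimpleGraph V} {D : ℕ} {u v : V}

/-- A vertex that can be coloured greedily: few neighbours, and few vertices at distance two. -/
def SimpleGraph.IsLight (G : SimpleGraph V) (D : ℕ) (v : V) : Prop :=
  G.degree v ≤ 5 ∧ ∑ w ∈ G.neighborFinset v, (G.degree w - 1) ≤ D + 4

theorem SimpleGraph.isLight_of_subset (hdeg : ∀ v, G.degree v ≤ D) (h5 : G.degree v ≤ 5)
    {T : Finset V} (hT : T ⊆ G.neighborFinset v) (hcard : G.degree v ≤ T.card + 1)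
    (hsum : ∑ w ∈ T, (G.degree w - 1) ≤ 5) : G.IsLight D v := by
  refine ⟨h5, ?_⟩
  rw [← Finset.sum_sdiff hT]
  have h1 : ∑ w ∈ G.neighborFinset v \ T, (G.degree w - 1) ≤
      (G.neighborFinset v \ T).card • (D - 1) :=
    Finset.sum_le_card_nsmul _ _ _ fun w _ ↦ Nat.sub_le_sub_right (hdeg w) 1
  have h2 : (G.neighborFinset v \ T).card ≤ 1 := by
    rw [Finset.card_sdiff_of_subset hT, SimpleGraph.card_neighborFinset_eq_degree]
    omega
  have h3 : (G.neighborFinset v \ T).card • (D - 1) ≤ 1 • (D - 1) := Nat.mul_le_mul_right _ h2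
  rw [one_smul] at h3
  rcases Nat.eq_zero_or_pos D with rfl | hD
  · have := hdeg v
    have : T = ∅ := by
      rw [← Finset.subset_empty]
      refine hT.trans (Finset.card_eq_zero.1 ?_).subset
      rw [SimpleGraph.card_neighborFinset_eq_degree]
      omega
    subst this
    simp only [Finset.sum_empty]
    omega
  · omega

theorem SimpleGraph.isLight_of_degree_eq_two (hdeg : ∀ v, G.degree v ≤ D) (h2 : G.degree v = 2)
    (huv : G.Adj v u) (hu : G.degree u ≤ 5) : G.IsLight D v :=
  SimpleGraph.isLight_of_subset hdeg (by omega) (T := {u}) (by simpa using huv)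
    (by simp [h2]) (by simp; omega)

/-- The charge sent from `u` to `v`. -/
noncomputable def SimpleGraph.transfer (G : SimpleGraph V) (u v : V) : ℕ :=
  if G.Adj u v ∧ (G.degree v = 2 ∨ G.degree v = 3 ∧ 6 ≤ G.degree u) then 1 else 0

theorem SimpleGraph.sum_transfer (v : V) : ∑ u, G.transfer v u =
    ((G.neighborFinset v).filter fun u ↦
      G.degree u = 2 ∨ G.degree u = 3 ∧ 6 ≤ G.degree v).card := by
  simp only [SimpleGraph.transfer, Finset.sum_boole, Nat.cast_id]
  congr 1
  ext u
  simp

theorem SimpleGraph.sum_transfer_to (v : V) : ∑ u, G.transfer u v =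
    ((G.neighborFinset v).filter fun u ↦
      G.degree v = 2 ∨ G.degree v = 3 ∧ 6 ≤ G.degree u).card := by
  simp only [SimpleGraph.transfer, Finset.sum_boole, Nat.cast_id]
  congr 1
  ext u
  simp [G.adj_comm]

theorem SimpleGraph.charge_nonneg (hdeg : ∀ v, G.degree v ≤ D) (h1 : ∀ v, G.degree v ≠ 1)
    (hlight : ∀ u v, G.Adj u v → G.IsLight D u → ¬ G.IsLight D v) (h0 : G.degree v ≠ 0) :
    6 + ∑ u, G.transfer v u ≤ 2 * G.degree v + ∑ u, G.transfer u v := by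
  rw [SimpleGraph.sum_transfer, SimpleGraph.sum_transfer_to]
  by_cases h6 : 6 ≤ G.degree v
  · have := Finset.card_filter_le (G.neighborFinset v) fun u ↦
      G.degree u = 2 ∨ G.degree u = 3 ∧ 6 ≤ G.degree v
    rw [SimpleGraph.card_neighborFinset_eq_degree] at this
    omega
  simp only [h6, and_false, or_false]
  set T := (G.neighborFinset v).filter fun u ↦ G.degree u = 2 with hT
  have hsum : ∀ R ⊆ T, ∑ w ∈ R, (G.degree w - 1) = R.card := by
    intro R hR
    rw [Finset.card_eq_sum_ones]
    refine Finset.sum_congr rfl fun w hw ↦ ?_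
    have := (Finset.mem_filter.1 (hR hw)).2
    omega
  have hTle : T.card ≤ G.degree v := by
    rw [← SimpleGraph.card_neighborFinset_eq_degree]
    exact Finset.card_filter_le _ _
  have hnot : T.Nonempty → ¬ G.IsLight D v := by
    rintro ⟨x, hx⟩
    obtain ⟨hx, hx2⟩ := Finset.mem_filter.1 hx
    rw [SimpleGraph.mem_neighborFinset] at hx
    exact hlight x v hx.symm (SimpleGraph.isLight_of_degree_eq_two hdeg hx2 hx.symm (by omega))
  have hcard : T.Nonempty → T.card + 1 < G.degree v := by
    intro hne
    by_contra! h
    refine hnot hne (SimpleGraph.isLight_of_subset hdeg (by omega) (Finset.filter_subset _ _) h ?_)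
    rw [← hT, hsum T subset_rfl]
    omega
  have hcard' : T.card = 0 ∨ T.card + 1 < G.degree v := by
    rcases T.eq_empty_or_nonempty with h | h
    · exact Or.inl (by simp [h])
    · exact Or.inr (hcard h)
  have hv1 := h1 v
  obtain h2 | h3 | h45 : G.degree v = 2 ∨ G.degree v = 3 ∨ 4 ≤ G.degree v := by omega
  · simp only [h2, true_or, Finset.filter_true, SimpleGraph.card_neighborFinset_eq_degree]
    omega
  · rcases T.eq_empty_or_nonempty with h | ⟨x, hx⟩
    · simp [h, h3]
    have hTc : T.card ≤ 1 := by omega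
    suffices hsub : (G.neighborFinset v).erase x ⊆ (G.neighborFinset v).filter fun u ↦
        G.degree v = 2 ∨ G.degree v = 3 ∧ 6 ≤ G.degree u by
      have hle := Finset.card_le_card hsub
      rw [Finset.card_erase_of_mem (Finset.mem_filter.1 hx).1,
        SimpleGraph.card_neighborFinset_eq_degree] at hle
      omega
    intro w hw
    obtain ⟨hwx, hwv⟩ := Finset.mem_erase.1 hw
    refine Finset.mem_filter.2 ⟨hwv, Or.inr ⟨h3, ?_⟩⟩
    by_contra! hw6
    refine hnot ⟨x, hx⟩ (SimpleGraph.isLight_of_subset hdeg (by omega) (T := {x, w}) ?_ ?_ ?_)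
    · exact Finset.insert_subset (Finset.mem_filter.1 hx).1 (by simpa using hwv)
    · rw [Finset.card_pair hwx.symm, h3]
    · rw [Finset.sum_pair hwx.symm, (Finset.mem_filter.1 hx).2]
      omega
  · omega

/-- A sparse graph with an edge has a leaf or an edge joining two light vertices. -/
theorem SimpleGraph.exists_degree_eq_one_or_isLight
    (hsparse : 2 * G.edgeSet.ncard < 3 * G.support.ncard) (hdeg : ∀ v, G.degree v ≤ D) :
    (∃ v, G.degree v = 1) ∨ ∃ u v, G.Adj u v ∧ G.IsLight D u ∧ G.IsLight D v := by
  by_contra! h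
  obtain ⟨h1, h2⟩ := h
  have hcharge : ∀ v ∈ G.support.toFinset,
      6 + ∑ u, G.transfer v u ≤ 2 * G.degree v + ∑ u, G.transfer u v := by
    intro v hv
    refine SimpleGraph.charge_nonneg hdeg h1 h2 ?_
    rw [mem_toFinset, SimpleGraph.mem_support] at hv
    exact (G.degree_pos_iff_exists_adj v |>.2 hv).ne'
  have hzero : ∀ v ∉ G.support.toFinset, ∀ u, ¬ G.Adj v u := by
    intro v hv u huv
    exact hv (mem_toFinset.2 ⟨u, huv⟩)
  have hsum := Finset.sum_le_sum hcharge
  rw [Finset.sum_add_distrib, Finset.sum_add_distrib, ← Finset.mul_sum,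
    Finset.sum_subset (Finset.subset_univ G.support.toFinset) (f := fun v ↦ ∑ u, G.transfer v u)
      (fun v _ hv ↦ Finset.sum_eq_zero fun u _ ↦ by simp [SimpleGraph.transfer, hzero v hv u]),
    Finset.sum_subset (Finset.subset_univ G.support.toFinset) (f := fun v ↦ ∑ u, G.transfer u v)
      (fun v _ hv ↦ Finset.sum_eq_zero fun u _ ↦ by
        simp [SimpleGraph.transfer, G.adj_comm u v, hzero v hv u]),
    Finset.sum_comm (f := fun v u ↦ G.transfer u v),
    Finset.sum_subset (Finset.subset_univ G.support.toFinset) (f := fun v ↦ G.degree v)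
      (fun v _ hv ↦ by
        by_contra h
        obtain ⟨u, hu⟩ := (G.degree_pos_iff_exists_adj v).1 (Nat.pos_of_ne_zero h)
        exact hzero v hv u hu),
    G.sum_degrees_eq_twice_card_edges, Finset.sum_const, smul_eq_mul] at hsum
  rw [ncard_eq_toFinset_card' G.support, ncard_eq_toFinset_card' G.edgeSet] at hsparse
  change 2 * G.edgeFinset.card < _ at hsparse
  omega

end Discharging

section Colouring

open scoped Classical

variable {V : Type*} [Fintype V] {G : SimpleGraph V} {k D N : ℕ} {c : V → ℕ} {u v : V}

/-- The colouring `c` is `k`-frugal when the vertices of `U` are regarded as uncoloured. -/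
def SimpleGraph.IsFrugalOutside (G : SimpleGraph V) (k : ℕ) (U : Finset V) (c : V → ℕ) : Prop :=
  (∀ u ∉ U, ∀ v ∉ U, G.Adj u v → c u ≠ c v) ∧
  ∀ v a, ((G.neighborFinset v \ U).filter fun u ↦ c u = a).card ≤ k

theorem SimpleGraph.IsFrugalOutside.exists_extend {U : Finset V} (hk : 1 ≤ k)
    (hc : G.IsFrugalOutside k U c) (hcN : ∀ v, c v < N) (hv : v ∈ U)
    (hN : G.degree v + (∑ w ∈ G.neighborFinset v, (G.degree w - 1)) / k < N) :
    ∃ c' : V → ℕ, (∀ v, c' v < N) ∧ G.IsFrugalOutside k (U.erase v) c' := by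
  set B : V → Finset ℕ := fun w ↦ (Finset.range N).filter fun a ↦
    k ≤ ((G.neighborFinset w \ U).filter fun u ↦ c u = a).card with hB
  have hBcard : ∀ w ∈ G.neighborFinset v, (B w).card * k ≤ G.degree w - 1 := by
    intro w hw
    have hvw : v ∈ G.neighborFinset w := by
      rw [SimpleGraph.mem_neighborFinset] at hw ⊢; exact hw.symm
    calc (B w).card * k
        ≤ ∑ a ∈ B w, ((G.neighborFinset w \ U).filter fun u ↦ c u = a).card := by
          rw [← smul_eq_mul]
          exact Finset.card_nsmul_le_sum _ _ _ fun a ha ↦ (Finset.mem_filter.1 ha).2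
      _ ≤ (G.neighborFinset w \ U).card := by
          rw [Finset.sum_card_fiberwise_eq_card_filter]
          exact Finset.card_filter_le _ _
      _ ≤ ((G.neighborFinset w).erase v).card := Finset.card_le_card fun x hx ↦ by
          rw [Finset.mem_sdiff] at hx
          exact Finset.mem_erase.2 ⟨fun h ↦ hx.2 (h ▸ hv), hx.1⟩
      _ = G.degree w - 1 := by
          rw [Finset.card_erase_of_mem hvw, SimpleGraph.card_neighborFinset_eq_degree]
  set F := (G.neighborFinset v).image c ∪ (G.neighborFinset v).biUnion B with hF
  have hFcard : F.card < (Finset.range N).card := by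
    rw [Finset.card_range]
    refine lt_of_le_of_lt ?_ hN
    refine (Finset.card_union_le _ _).trans (Nat.add_le_add ?_ ?_)
    · rw [← SimpleGraph.card_neighborFinset_eq_degree]
      exact Finset.card_image_le
    · rw [Nat.le_div_iff_mul_le hk]
      calc _ ≤ (∑ w ∈ G.neighborFinset v, (B w).card) * k :=
            Nat.mul_le_mul_right _ Finset.card_biUnion_le
        _ ≤ _ := by
            rw [Finset.sum_mul]
            exact Finset.sum_le_sum hBcard
  obtain ⟨a, haN, haF⟩ := Finset.exists_mem_notMem_of_card_lt_card hFcard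
  rw [hF, Finset.mem_union, not_or, Finset.mem_image, Finset.mem_biUnion] at haF
  obtain ⟨ha1, ha2⟩ := haF
  have hup : ∀ x ∉ U, Function.update c v a x = c x := fun x hx ↦
    Function.update_of_ne (ne_of_mem_of_not_mem hv hx).symm _ _
  refine ⟨Function.update c v a, fun w ↦ ?_, fun x hx y hy hxy ↦ ?_, fun w b ↦ ?_⟩
  · by_cases h : w = v
    · subst h; simpa using haN
    · simpa [h] using hcN w
  · have hcol : ∀ z, G.Adj v z → Function.update c v a z ≠ a := by
      intro z hz h
      rw [Function.update_of_ne hz.ne'] at h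
      exact ha1 ⟨z, by simpa using hz, h⟩
    by_cases hxv : x = v
    · subst hxv
      simpa using (hcol y hxy).symm
    by_cases hyv : y = v
    · subst hyv
      simpa using hcol x hxy.symm
    have hx' : x ∉ U := fun h ↦ hx (Finset.mem_erase.2 ⟨hxv, h⟩)
    have hy' : y ∉ U := fun h ↦ hy (Finset.mem_erase.2 ⟨hyv, h⟩)
    rw [hup x hx', hup y hy']
    exact hc.1 x hx' y hy' hxy
  · have hsub : ∀ x ∈ (G.neighborFinset w \ U.erase v).filter
        (fun u ↦ Function.update c v a u = b), x ≠ v →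
        x ∈ (G.neighborFinset w \ U).filter fun u ↦ c u = b := by
      intro x hx hxv
      simp only [Finset.mem_filter, Finset.mem_sdiff, Finset.mem_erase, not_and] at hx ⊢
      have hxU := hx.1.2 hxv
      exact ⟨⟨hx.1.1, hxU⟩, by rw [← hup x hxU]; exact hx.2⟩
    by_cases hvw : G.Adj w v ∧ a = b
    · obtain ⟨hvw, rfl⟩ := hvw
      have hlt : ((G.neighborFinset w \ U).filter fun u ↦ c u = a).card < k := by
        by_contra! h
        exact ha2 ⟨w, by simpa using hvw.symm, Finset.mem_filter.2 ⟨haN, h⟩⟩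
      calc _ ≤ (insert v ((G.neighborFinset w \ U).filter fun u ↦ c u = a)).card := by
            refine Finset.card_le_card fun x hx ↦ ?_
            by_cases hxv : x = v
            · exact Finset.mem_insert.2 (Or.inl hxv)
            · exact Finset.mem_insert_of_mem (hsub x hx hxv)
        _ ≤ _ := (Finset.card_insert_le _ _).trans hlt
    · refine (Finset.card_le_card fun x hx ↦ hsub x hx ?_).trans (hc.2 w b)
      rintro rfl
      simp only [Finset.mem_filter, Finset.mem_sdiff, SimpleGraph.mem_neighborFinset,
        Function.update_self] at hx
      exact hvw ⟨hx.1.1, hx.2⟩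

theorem SimpleGraph.IsFrugalOutside.of_deleteEdges
    (hc : (G.deleteEdges {s(u, v)}).IsFrugalOutside k ∅ c) : G.IsFrugalOutside k {u, v} c := by
  have hadj : ∀ x y, G.Adj x y → y ≠ u → y ≠ v → (G.deleteEdges {s(u, v)}).Adj x y := by
    intro x y hxy hyu hyv
    rw [SimpleGraph.deleteEdges_adj]
    refine ⟨hxy, fun h ↦ ?_⟩
    have : y ∈ s(u, v) := by
      rw [← mem_singleton_iff.1 h]
      exact Sym2.mem_mk_right x y
    rcases Sym2.mem_iff.1 this with h | h <;> contradiction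
  refine ⟨fun x _ y hy hxy ↦ ?_, fun x a ↦ ?_⟩
  · simp only [Finset.mem_insert, Finset.mem_singleton, not_or] at hy
    exact hc.1 x (by simp) y (by simp) (hadj x y hxy hy.1 hy.2)
  · refine (Finset.card_le_card fun y hy ↦ ?_).trans (hc.2 x a)
    simp only [Finset.mem_filter, Finset.mem_sdiff, SimpleGraph.mem_neighborFinset,
      Finset.mem_insert, Finset.mem_singleton, not_or, Finset.notMem_empty, not_false_eq_true,
      and_true] at hy ⊢
    exact ⟨hadj x y hy.1.1 hy.1.2.1 hy.1.2.2, hy.2⟩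

theorem SimpleGraph.IsFrugalOutside.of_deleteEdges_of_degree_eq_one (hk : 1 ≤ k)
    (hv : G.degree v = 1)
    (hc : (G.deleteEdges {s(u, v)}).IsFrugalOutside k ∅ c) : G.IsFrugalOutside k {v} c := by
  have hadj : ∀ x y, G.Adj x y → x ≠ v → y ≠ v → (G.deleteEdges {s(u, v)}).Adj x y := by
    intro x y hxy hxv hyv
    rw [SimpleGraph.deleteEdges_adj]
    refine ⟨hxy, fun h ↦ ?_⟩
    have : v ∈ s(x, y) := by
      rw [mem_singleton_iff.1 h]
      exact Sym2.mem_mk_right u v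
    rcases Sym2.mem_iff.1 this with h | h
    · exact hxv h.symm
    · exact hyv h.symm
  refine ⟨fun x hx y hy hxy ↦ ?_, fun x a ↦ ?_⟩
  · exact hc.1 x (by simp) y (by simp) (hadj x y hxy (by simpa using hx) (by simpa using hy))
  · by_cases hxv : x = v
    · subst hxv
      refine le_trans (Finset.card_le_card (t := G.neighborFinset x) fun y hy ↦ ?_) ?_
      · exact (Finset.mem_sdiff.1 (Finset.mem_filter.1 hy).1).1
      · rwa [SimpleGraph.card_neighborFinset_eq_degree, hv]
    · refine (Finset.card_le_card fun y hy ↦ ?_).trans (hc.2 x a)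
      simp only [Finset.mem_filter, Finset.mem_sdiff, SimpleGraph.mem_neighborFinset,
        Finset.mem_singleton, Finset.notMem_empty, not_false_eq_true, and_true] at hy ⊢
      exact ⟨hadj x y hy.1.1 hxv hy.1.2, hy.2⟩

theorem IsComplexDrawing.exists_isFrugalOutside {pos : V → ℂ} {arc : Sym2 V → ℝ → ℂ}
    (hD : IsComplexDrawing G pos arc) (hg : 6 ≤ G.egirth) (hk : 1 ≤ k)
    (hdeg : ∀ v, G.degree v ≤ D) :
    ∃ c : V → ℕ, (∀ v, c v < (D + 4 + (k - 1)) / k + 6) ∧ G.IsFrugalOutside k ∅ c := by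
  induction hn : G.edgeSet.ncard using Nat.strong_induction_on generalizing G with
  | _ n ih =>
  subst hn
  by_cases hbot : G = ⊥
  · subst hbot
    refine ⟨fun _ ↦ 0, by simp, by simp, fun v a ↦ ?_⟩
    simp
  have hdiv : (D + 4) / k ≤ (D + 4 + (k - 1)) / k := Nat.div_le_div_right (by omega)
  have step : ∀ e ∈ G.edgeSet, ∃ c : V → ℕ, (∀ v, c v < (D + 4 + (k - 1)) / k + 6) ∧
      (G.deleteEdges {e}).IsFrugalOutside k ∅ c := fun e he ↦
    ih _ (SimpleGraph.ncard_edgeSet_deleteEdges_lt he)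
      (hD.mono (SimpleGraph.deleteEdges_le _))
      (hg.trans (SimpleGraph.egirth_anti (SimpleGraph.deleteEdges_le _)))
      (fun v ↦ le_trans (by convert SimpleGraph.degree_le_of_le (SimpleGraph.deleteEdges_le {e}))
        (hdeg v)) rfl
  rcases SimpleGraph.exists_degree_eq_one_or_isLight
    (hD.two_mul_ncard_edgeSet_lt_support hg hbot) hdeg with ⟨v, hv⟩ | ⟨u, v, huv, hu, hv⟩
  · obtain ⟨u, hu⟩ := Finset.card_eq_one.1 ((G.card_neighborFinset_eq_degree v).trans hv)
    have hvu : G.Adj v u := by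
      rw [← SimpleGraph.mem_neighborFinset, hu]; simp
    obtain ⟨c, hcN, hc⟩ := step s(u, v) hvu.symm
    have hN : G.degree v + (∑ w ∈ G.neighborFinset v, (G.degree w - 1)) / k <
        (D + 4 + (k - 1)) / k + 6 := by
      rw [hu, Finset.sum_singleton, hv]
      have := Nat.div_le_div_right (c := k) (show G.degree u - 1 ≤ D + 4 by
        have := hdeg u; omega)
      omega
    simpa using (hc.of_deleteEdges_of_degree_eq_one hk hv).exists_extend hk hcN (by simp) hN
  · have hN : ∀ w, G.IsLight D w → G.degree w +
        (∑ x ∈ G.neighborFinset w, (G.degree x - 1)) / k < (D + 4 + (k - 1)) / k + 6 := by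
      intro w hw
      have := Nat.div_le_div_right (c := k) hw.2
      have := hw.1
      omega
    obtain ⟨c, hcN, hc⟩ := step s(u, v) huv
    obtain ⟨c, hcN, hc⟩ := hc.of_deleteEdges.exists_extend hk hcN (v := u) (by simp) (hN u hu)
    obtain ⟨c, hcN, hc⟩ := hc.exists_extend hk hcN (v := v) (by simp [huv.ne']) (hN v hv)
    refine ⟨c, hcN, ?_⟩
    convert hc
    ext x
    simp only [Finset.notMem_empty, Finset.mem_erase, Finset.mem_insert, Finset.mem_singleton]
    tauto

end Colouring

end FrugalColouring

/-- For `k ≥ 1` and a planar graph `G` of girth at least `6`,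
`χ_k(G) ≤ ⌈(Δ(G) + 4)/k⌉ + 6` (ceiling written `(a + k - 1)/k`). -/
theorem frugalChromaticNumber_girth_six {V : Type*} [Fintype V] (G : SimpleGraph V)
    [DecidableRel G.Adj] (hG : G.IsPlanar) (k : ℕ) (hk : 1 ≤ k)
    (hgirth : (6 : ℕ∞) ≤ G.egirth) :
    G.frugalChromaticNumber k ≤ (G.maxDegree + 4 + (k - 1)) / k + 6 := by
  classical
  obtain ⟨E⟩ := hG
  obtain ⟨pos, arc, hD⟩ := E.exists_isComplexDrawing
  obtain ⟨c, hcN, hc⟩ := hD.exists_isFrugalOutside (D := G.maxDegree) hgirth hk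
    (fun v ↦ by convert G.degree_le_maxDegree v)
  refine Nat.sInf_le ⟨c, hcN, fun u v ↦ hc.1 u (by simp) v (by simp), fun v a ↦ ?_⟩
  convert hc.2 v a
  rw [← Set.ncard_coe_finset]
  congr 1
  ext u
  simp
end

section
/- Let k ≥ 1 be an integer and let G be a planar simple graph with girth at least 5. Then the k-frugal chromatic number satisfies χ_k(G) ≤ ⌈(Δ(G) + 10)/k⌉ + 6. -/
open SimpleGraph

open Set Complex in
/-- A continuous nonvanishing function on the unit square has a continuous logarithm. -/
theorem exists_continuousOn_log_square {F : ℝ × ℝ → ℂ} (hF : ContinuousOn F (Icc 0 1 ×ˢ Icc 0 1))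
    (h0 : ∀ p ∈ Icc (0 : ℝ) 1 ×ˢ Icc (0 : ℝ) 1, F p ≠ 0) :
    ∃ L : ℝ × ℝ → ℂ, Continuous L ∧ ∀ p ∈ Icc (0 : ℝ) 1 ×ˢ Icc (0 : ℝ) 1, exp (L p) = F p := by
  let c : ℝ × ℝ → ℝ × ℝ := fun p => (projIcc 0 1 zero_le_one p.1, projIcc 0 1 zero_le_one p.2)
  have hc : Continuous c := by
    have : Continuous (projIcc (0 : ℝ) 1 zero_le_one) := continuous_projIcc
    fun_prop
  have hcm : ∀ p, c p ∈ Icc (0 : ℝ) 1 ×ˢ Icc (0 : ℝ) 1 := fun p => ⟨Subtype.prop _, Subtype.prop _⟩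
  have hFc : Continuous (F ∘ c) := hF.comp_continuous hc hcm
  obtain ⟨L, ⟨-, hL⟩, -⟩ := isCoveringMapOn_exp.existsUnique_continuousMap_lifts
    (⟨F ∘ c, hFc⟩ : C(ℝ × ℝ, ℂ)) (a₀ := (0, 0)) (e₀ := log ((F ∘ c) (0, 0)))
    (exp_log (h0 _ (hcm _))) (fun a => h0 _ (hcm a))
  refine ⟨L, L.continuous, fun p hp => ?_⟩
  have := congr_fun hL p
  have hcp : c p = p := by
    obtain ⟨h1, h2⟩ := hp
    simp [c, projIcc_of_mem _ h1, projIcc_of_mem _ h2]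
  simpa [hcp] using this

open Set Complex in
theorem exists_continuousOn_log {g : ℝ → ℂ} (hg : ContinuousOn g (Icc 0 1))
    (h0 : ∀ t ∈ Icc (0 : ℝ) 1, g t ≠ 0) :
    ∃ L : ℝ → ℂ, ContinuousOn L (Icc 0 1) ∧ ∀ t ∈ Icc (0 : ℝ) 1, exp (L t) = g t := by
  obtain ⟨L, hL, hL'⟩ := exists_continuousOn_log_square (F := fun p => g p.1)
    (hg.comp continuousOn_fst fun p hp => hp.1) (fun p hp => h0 _ hp.1)
  exact ⟨fun t => L (t, 0), by fun_prop, fun t ht => hL' _ ⟨ht, by simp⟩⟩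

open Set Complex in
/-- The total change of a continuous logarithm of `g` along the unit interval. -/
noncomputable def logChange (g : ℝ → ℂ) : ℂ :=
  open Classical in
  if h : ∃ L : ℝ → ℂ, ContinuousOn L (Icc 0 1) ∧ ∀ t ∈ Icc (0 : ℝ) 1, exp (L t) = g t then
    h.choose 1 - h.choose 0 else 0

open Set Complex in
theorem logChange_eq {g L : ℝ → ℂ} (hL : ContinuousOn L (Icc 0 1))
    (h : ∀ t ∈ Icc (0 : ℝ) 1, exp (L t) = g t) : logChange g = L 1 - L 0 := by
  have hex : ∃ L : ℝ → ℂ, ContinuousOn L (Icc 0 1) ∧ ∀ t ∈ Icc (0 : ℝ) 1, exp (L t) = g t :=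
    ⟨L, hL, h⟩
  rw [logChange, dif_pos hex]
  obtain ⟨hM, hM'⟩ := hex.choose_spec
  set M := hex.choose
  have hpi : (2 * Real.pi * I : ℂ) ≠ 0 := two_pi_I_ne_zero
  have hinteger : ∀ t ∈ Icc (0 : ℝ) 1, ∃ n : ℤ, (M t - L t) / (2 * Real.pi * I) = n := by
    intro t ht
    obtain ⟨n, hn⟩ := exp_eq_exp_iff_exists_int.1 ((hM' t ht).trans (h t ht).symm)
    exact ⟨n, by rw [hn]; field_simp; ring⟩
  have hcont : ContinuousOn (fun t => (M t - L t) / (2 * Real.pi * I)) (Icc 0 1) := by fun_prop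
  have hconst := isPreconnected_Icc.constant_of_mapsTo (S := Icc (0 : ℝ) 1)
    (isUniformEmbedding_ofReal.isEmbedding.comp
      Int.isClosedEmbedding_coe_real.isEmbedding).isDiscrete_range
    hcont (fun t ht => by obtain ⟨n, hn⟩ := hinteger t ht; exact ⟨n, by simp [hn]⟩)
    (right_mem_Icc.2 zero_le_one) (left_mem_Icc.2 zero_le_one)
  have := (div_left_inj' hpi).1 hconst
  linear_combination this

open Set Complex in
theorem exp_logChange {g : ℝ → ℂ} (hg : ContinuousOn g (Icc 0 1))
    (h0 : ∀ t ∈ Icc (0 : ℝ) 1, g t ≠ 0) : exp (logChange g) = g 1 / g 0 := by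
  obtain ⟨L, hL, h⟩ := exists_continuousOn_log hg h0
  rw [logChange_eq hL h, exp_sub, h 1 (by simp), h 0 (by simp)]

open Set Complex in
theorem logChange_congr {g h : ℝ → ℂ} (hg : ContinuousOn g (Icc 0 1))
    (h0 : ∀ t ∈ Icc (0 : ℝ) 1, g t ≠ 0) (e : ∀ t ∈ Icc (0 : ℝ) 1, g t = h t) :
    logChange g = logChange h := by
  obtain ⟨L, hL, hL'⟩ := exists_continuousOn_log hg h0
  rw [logChange_eq hL hL', logChange_eq hL fun t ht => (hL' t ht).trans (e t ht)]

open Set Complex in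
theorem logChange_neg {g : ℝ → ℂ} (hg : ContinuousOn g (Icc 0 1))
    (h0 : ∀ t ∈ Icc (0 : ℝ) 1, g t ≠ 0) : logChange (fun t => -g t) = logChange g := by
  obtain ⟨L, hL, h⟩ := exists_continuousOn_log hg h0
  rw [logChange_eq hL h, logChange_eq (L := fun t => L t + Real.pi * I) (by fun_prop)
    (fun t ht => by rw [exp_add, h t ht, exp_pi_mul_I]; ring)]
  ring

open Set Complex in
theorem logChange_reverse {g : ℝ → ℂ} (hg : ContinuousOn g (Icc 0 1))
    (h0 : ∀ t ∈ Icc (0 : ℝ) 1, g t ≠ 0) : logChange (fun t => g (1 - t)) = -logChange g := by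
  obtain ⟨L, hL, h⟩ := exists_continuousOn_log hg h0
  rw [logChange_eq hL h, logChange_eq (L := fun t => L (1 - t))
    (hL.comp (by fun_prop) fun t ht => ⟨by linarith [ht.2], by linarith [ht.1]⟩)
    (fun t ht => h _ ⟨by linarith [ht.2], by linarith [ht.1]⟩)]
  norm_num

open Set Complex in
theorem logChange_split {g : ℝ → ℂ} {r : ℝ} (hr : r ∈ Icc (0 : ℝ) 1)
    (hg : ContinuousOn g (Icc 0 1)) (h0 : ∀ t ∈ Icc (0 : ℝ) 1, g t ≠ 0) :
    logChange g = logChange (fun t => g (t * r)) + logChange (fun t => g (r + t * (1 - r))) := by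
  obtain ⟨L, hL, h⟩ := exists_continuousOn_log hg h0
  have h1 : ∀ t ∈ Icc (0 : ℝ) 1, t * r ∈ Icc (0 : ℝ) 1 := fun t ht =>
    ⟨mul_nonneg ht.1 hr.1, mul_le_one₀ ht.2 hr.1 hr.2⟩
  have h2 : ∀ t ∈ Icc (0 : ℝ) 1, r + t * (1 - r) ∈ Icc (0 : ℝ) 1 := fun t ht =>
    ⟨by nlinarith [ht.1, hr.1, hr.2], by nlinarith [ht.2, hr.1, hr.2]⟩
  rw [logChange_eq hL h, logChange_eq (L := fun t => L (t * r)) (hL.comp (by fun_prop) h1)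
    (fun t ht => h _ (h1 t ht)), logChange_eq (L := fun t => L (r + t * (1 - r)))
    (hL.comp (by fun_prop) h2) (fun t ht => h _ (h2 t ht))]
  norm_num

open Set Complex in
/-- Homotopy invariance: going around the boundary of the square changes nothing. -/
theorem logChange_square {F : ℝ × ℝ → ℂ} (hF : ContinuousOn F (Icc 0 1 ×ˢ Icc 0 1))
    (h0 : ∀ p ∈ Icc (0 : ℝ) 1 ×ˢ Icc (0 : ℝ) 1, F p ≠ 0) :
    logChange (fun s => F (s, 0)) + logChange (fun t => F (1, t)) =
      logChange (fun t => F (0, t)) + logChange (fun s => F (s, 1)) := by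
  obtain ⟨L, hL, h⟩ := exists_continuousOn_log_square hF h0
  have h1 : (1 : ℝ) ∈ Icc (0 : ℝ) 1 := by simp
  have h2 : (0 : ℝ) ∈ Icc (0 : ℝ) 1 := by simp
  rw [logChange_eq (L := fun s => L (s, 0)) (by fun_prop) (fun t ht => h _ ⟨ht, h2⟩),
    logChange_eq (L := fun s => L (1, s)) (by fun_prop) (fun t ht => h _ ⟨h1, ht⟩),
    logChange_eq (L := fun s => L (0, s)) (by fun_prop) (fun t ht => h _ ⟨h2, ht⟩),
    logChange_eq (L := fun s => L (s, 1)) (by fun_prop) (fun t ht => h _ ⟨ht, h1⟩)]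
  ring

/-- `ArcPair a b A r B q`: two curves `A`, `B` from `a` to `b`, with marked parameters `r`, `q`,
which meet only at their common ends and do not come back to them before the marked points. -/
structure ArcPair (a b : ℂ) (A : ℝ → ℂ) (r : ℝ) (B : ℝ → ℂ) (q : ℝ) : Prop where
  cont_left : ContinuousOn A (Set.Icc 0 1)
  cont_right : ContinuousOn B (Set.Icc 0 1)
  left_zero : A 0 = a
  right_zero : B 0 = a
  left_one : A 1 = b
  right_one : B 1 = b
  left_mem : r ∈ Set.Ioo (0 : ℝ) 1
  right_mem : q ∈ Set.Ioo (0 : ℝ) 1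
  left_start : ∀ s ∈ Set.Icc (0 : ℝ) 1, A s = a → s = 0
  right_start : ∀ s ∈ Set.Icc (0 : ℝ) 1, B s = a → s = 0
  left_end : ∀ s ∈ Set.Icc (0 : ℝ) 1, s ≤ r → A s ≠ b
  right_end : ∀ s ∈ Set.Icc (0 : ℝ) 1, s ≤ q → B s ≠ b
  meet : ∀ s ∈ Set.Icc (0 : ℝ) 1, ∀ t ∈ Set.Icc (0 : ℝ) 1, A s = B t → A s = a ∨ A s = b

namespace ArcPair

variable {a b : ℂ} {A B : ℝ → ℂ} {r q : ℝ}

theorem symm (h : ArcPair a b A r B q) : ArcPair a b B q A r :=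
  ⟨h.2, h.1, h.4, h.3, h.6, h.5, h.8, h.7, h.10, h.9, h.12, h.11,
    fun s hs t ht e => e ▸ h.meet t ht s hs e.symm⟩

theorem sub_ne_zero (h : ArcPair a b A r B q) {s t : ℝ} (hs : s ∈ Set.Icc (0 : ℝ) 1)
    (ht : t ∈ Set.Icc (0 : ℝ) 1) (htq : t ≤ q) (hst : s ≠ 0 ∨ t ≠ 0) : A s - B t ≠ 0 := by
  intro e
  have e := _root_.sub_eq_zero.1 e
  rcases h.meet s hs t ht e with h1 | h1
  · have := h.left_start s hs h1
    have := h.right_start t ht (e ▸ h1)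
    tauto
  · exact h.right_end t ht htq (e ▸ h1)

private theorem diag_mem (h : ArcPair a b A r B q) {t : ℝ} (ht : t ∈ Set.Icc (0 : ℝ) 1) :
    (1 - t) * r ∈ Set.Icc (0 : ℝ) 1 ∧ t * q ∈ Set.Icc (0 : ℝ) 1 ∧ t * q ≤ q ∧
      ((1 - t) * r ≠ 0 ∨ t * q ≠ 0) := by
  obtain ⟨h1, h2⟩ := h.left_mem
  obtain ⟨h3, h4⟩ := h.right_mem
  obtain ⟨h5, h6⟩ := ht
  refine ⟨⟨by nlinarith, by nlinarith⟩, ⟨by nlinarith, by nlinarith⟩, by nlinarith, ?_⟩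
  rcases eq_or_ne t 0 with rfl | h7
  · left; simpa using h1.ne'
  · right; positivity

theorem continuousOn_diag (h : ArcPair a b A r B q) :
    ContinuousOn (fun t => A ((1 - t) * r) - B (t * q)) (Set.Icc 0 1) :=
  (h.cont_left.comp (by fun_prop) fun t ht => (h.diag_mem ht).1).sub
    (h.cont_right.comp (by fun_prop) fun t ht => (h.diag_mem ht).2.1)

theorem diag_ne_zero (h : ArcPair a b A r B q) :
    ∀ t ∈ Set.Icc (0 : ℝ) 1, A ((1 - t) * r) - B (t * q) ≠ 0 := fun _ ht =>
  let ⟨h1, h2, h3, h4⟩ := h.diag_mem ht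
  h.sub_ne_zero h1 h2 h3 h4

theorem logChange_diag_swap (h : ArcPair a b A r B q) :
    logChange (fun t => B ((1 - t) * q) - A (t * r)) =
      -logChange (fun t => A ((1 - t) * r) - B (t * q)) := by
  rw [← logChange_reverse h.continuousOn_diag h.diag_ne_zero,
    ← logChange_neg h.symm.continuousOn_diag h.symm.diag_ne_zero]
  congr 1
  ext t
  ring_nf

theorem exp_logChange_diag (h : ArcPair a b A r B q) :
    Complex.exp (logChange (fun t => A ((1 - t) * r) - B (t * q))) = (a - B q) / (A r - a) := by
  rw [exp_logChange h.continuousOn_diag h.diag_ne_zero]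
  simp [h.left_zero, h.right_zero]

theorem logChange_add (h : ArcPair a b A r B q) :
    logChange (fun s => A (r + s * (1 - r)) - a) + logChange (fun t => b - B (t * q)) =
      logChange (fun t => A ((1 - t) * r) - B (t * q)) + logChange (fun s => A s - B q) := by
  obtain ⟨h1, h2⟩ := h.left_mem
  obtain ⟨h3, h4⟩ := h.right_mem
  have hm1 : ∀ p ∈ Set.Icc (0 : ℝ) 1 ×ˢ Set.Icc (0 : ℝ) 1,
      (1 - p.2) * (r + p.1 * (1 - r)) + p.2 * p.1 ∈ Set.Icc (0 : ℝ) 1 := by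
    rintro ⟨s, t⟩ ⟨⟨hs0, hs1⟩, ⟨ht0, ht1⟩⟩
    simp only at *
    have e1 : 0 ≤ r + s * (1 - r) := by nlinarith
    have e2 : r + s * (1 - r) ≤ 1 := by nlinarith
    exact ⟨by nlinarith, by nlinarith⟩
  have hm2 : ∀ p ∈ Set.Icc (0 : ℝ) 1 ×ˢ Set.Icc (0 : ℝ) 1, p.2 * q ∈ Set.Icc (0 : ℝ) 1 := by
    rintro ⟨s, t⟩ ⟨⟨hs0, hs1⟩, ⟨ht0, ht1⟩⟩
    exact ⟨by nlinarith, by nlinarith⟩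
  have key := logChange_square
    (F := fun p => A ((1 - p.2) * (r + p.1 * (1 - r)) + p.2 * p.1) - B (p.2 * q))
    ((h.cont_left.comp (by fun_prop) hm1).sub (h.cont_right.comp (by fun_prop) hm2)) ?_
  · simpa [h.right_zero, h.left_one] using key
  · intro p hp
    refine h.sub_ne_zero (hm1 p hp) (hm2 p hp) ?_ ?_
    · obtain ⟨_, _, h5⟩ := hp
      nlinarith
    · rcases eq_or_ne p.2 0 with h6 | h6
      · left
        obtain ⟨⟨h7, _⟩, _⟩ := hp
        rw [h6]
        have : 0 < r + p.1 * (1 - r) := by nlinarith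
        simpa using this.ne'
      · right
        exact mul_ne_zero h6 h3.ne'

end ArcPair

open Complex in
/-- For three curves from `a` to `b` meeting only at their ends, the number of those whose
marked point is separated from infinity by the other two is odd. -/
theorem logChange_theta {a b : ℂ} {A₁ A₂ A₃ : ℝ → ℂ} {r₁ r₂ r₃ : ℝ}
    (h₁₂ : ArcPair a b A₁ r₁ A₂ r₂) (h₂₃ : ArcPair a b A₂ r₂ A₃ r₃)
    (h₃₁ : ArcPair a b A₃ r₃ A₁ r₁) :
    ∃ n : ℤ, (logChange (fun s => A₁ s - A₃ r₃) - logChange (fun s => A₂ s - A₃ r₃)) +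
      (logChange (fun s => A₂ s - A₁ r₁) - logChange (fun s => A₃ s - A₁ r₁)) +
      (logChange (fun s => A₃ s - A₂ r₂) - logChange (fun s => A₁ s - A₂ r₂)) =
        2 * Real.pi * I * (2 * n + 1) := by
  have e1 := h₁₂.logChange_add
  have e2 := h₂₃.logChange_add
  have e3 := h₃₁.logChange_add
  have f1 := h₁₂.symm.logChange_add
  have f2 := h₂₃.symm.logChange_add
  have f3 := h₃₁.symm.logChange_add
  rw [h₁₂.logChange_diag_swap] at f1
  rw [h₂₃.logChange_diag_swap] at f2
  rw [h₃₁.logChange_diag_swap] at f3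
  have hz : ∀ {A B r q}, ArcPair a b A r B q → A r - a ≠ 0 := by
    intro A B r q h e
    exact h.left_mem.1.ne' (h.left_start r ⟨h.left_mem.1.le, h.left_mem.2.le⟩ (sub_eq_zero.1 e))
  have g : exp (logChange (fun t => A₁ ((1 - t) * r₁) - A₂ (t * r₂)) +
      logChange (fun t => A₂ ((1 - t) * r₂) - A₃ (t * r₃)) +
      logChange (fun t => A₃ ((1 - t) * r₃) - A₁ (t * r₁))) = exp (Real.pi * I) := by
    rw [exp_add, exp_add, h₁₂.exp_logChange_diag, h₂₃.exp_logChange_diag, h₃₁.exp_logChange_diag,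
      exp_pi_mul_I]
    have := hz h₁₂
    have := hz h₂₃
    have := hz h₃₁
    field_simp
    ring
  obtain ⟨n, hn⟩ := exp_eq_exp_iff_exists_int.1 g
  refine ⟨n, ?_⟩
  linear_combination e1 + e2 + e3 - f1 - f2 - f3 + 2 * hn

/-- Concatenation of two curves through the point `c`. -/
noncomputable def joinCurve (c : ℂ) (A B : ℝ → ℂ) (t : ℝ) : ℂ :=
  A (min (2 * t) 1) + B (max (2 * t - 1) 0) - c

theorem joinCurve_left {c : ℂ} {A B : ℝ → ℂ} (hB : B 0 = c) {t : ℝ} (ht : t ≤ 1 / 2) :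
    joinCurve c A B t = A (2 * t) := by
  rw [joinCurve, min_eq_left (by linarith), max_eq_right (by linarith), hB]
  ring

theorem joinCurve_right {c : ℂ} {A B : ℝ → ℂ} (hA : A 1 = c) {t : ℝ} (ht : 1 / 2 ≤ t) :
    joinCurve c A B t = B (2 * t - 1) := by
  rw [joinCurve, min_eq_right (by linarith), max_eq_left (by linarith), hA]
  ring

theorem continuousOn_joinCurve {c : ℂ} {A B : ℝ → ℂ} (hA : ContinuousOn A (Set.Icc 0 1))
    (hB : ContinuousOn B (Set.Icc 0 1)) : ContinuousOn (joinCurve c A B) (Set.Icc 0 1) := by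
  refine ((hA.comp (by fun_prop) ?_).add (hB.comp (by fun_prop) ?_)).sub continuousOn_const
  · exact fun t ht => ⟨le_min (by linarith [ht.1]) zero_le_one, min_le_right _ _⟩
  · exact fun t ht => ⟨le_max_right _ _, max_le (by linarith [ht.2]) zero_le_one⟩

theorem joinCurve_cases {c : ℂ} {A B : ℝ → ℂ} (hA : A 1 = c) (hB : B 0 = c) {t : ℝ}
    (ht : t ∈ Set.Icc (0 : ℝ) 1) :
    (t ≤ 1 / 2 ∧ 2 * t ∈ Set.Icc (0 : ℝ) 1 ∧ joinCurve c A B t = A (2 * t)) ∨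
      (1 / 2 < t ∧ 2 * t - 1 ∈ Set.Icc (0 : ℝ) 1 ∧ joinCurve c A B t = B (2 * t - 1)) := by
  rcases le_or_gt t (1 / 2) with h | h
  · exact .inl ⟨h, ⟨by linarith [ht.1], by linarith⟩, joinCurve_left hB h⟩
  · exact .inr ⟨h, ⟨by linarith, by linarith [ht.2]⟩, joinCurve_right hA h.le⟩

theorem logChange_joinCurve {c z : ℂ} {A B : ℝ → ℂ} (hA : ContinuousOn A (Set.Icc 0 1))
    (hB : ContinuousOn B (Set.Icc 0 1)) (hA1 : A 1 = c) (hB0 : B 0 = c)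
    (hzA : ∀ t ∈ Set.Icc (0 : ℝ) 1, A t ≠ z) (hzB : ∀ t ∈ Set.Icc (0 : ℝ) 1, B t ≠ z) :
    logChange (fun t => joinCurve c A B t - z) =
      logChange (fun t => A t - z) + logChange (fun t => B t - z) := by
  rw [logChange_split (g := fun t => joinCurve c A B t - z) (r := 1 / 2) (by norm_num)
    ((continuousOn_joinCurve hA hB).sub continuousOn_const)]
  · congr 1
    · refine (logChange_congr (g := fun t => A t - z) (hA.sub continuousOn_const)
        (fun t ht => sub_ne_zero.2 (hzA t ht)) fun t ht => ?_).symm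
      rw [joinCurve_left hB0 (by linarith [ht.2])]
      ring_nf
    · refine (logChange_congr (g := fun t => B t - z) (hB.sub continuousOn_const)
        (fun t ht => sub_ne_zero.2 (hzB t ht)) fun t ht => ?_).symm
      rw [joinCurve_right hA1 (by linarith [ht.1])]
      ring_nf
  · intro t ht
    rw [sub_ne_zero]
    rcases joinCurve_cases hA1 hB0 ht with ⟨-, h, e⟩ | ⟨-, h, e⟩ <;> rw [e]
    exacts [hzA _ h, hzB _ h]

/-- The winding of a closed curve is the same around both ends of a curve avoiding it. -/
theorem logChange_closed_eq {C g : ℝ → ℂ} (hC : ContinuousOn C (Set.Icc 0 1))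
    (hg : ContinuousOn g (Set.Icc 0 1)) (hclosed : C 0 = C 1)
    (h : ∀ s ∈ Set.Icc (0 : ℝ) 1, ∀ t ∈ Set.Icc (0 : ℝ) 1, C s ≠ g t) :
    logChange (fun s => C s - g 0) = logChange (fun s => C s - g 1) := by
  have := logChange_square (F := fun p => C p.1 - g p.2)
    ((hC.comp continuousOn_fst fun p hp => hp.1).sub (hg.comp continuousOn_snd fun p hp => hp.2))
    (fun p hp => sub_ne_zero.2 (h _ hp.1 _ hp.2))
  simp only [hclosed] at this
  linear_combination this

open Complex in
theorem exists_logChange_eq_log {g : ℝ → ℂ} (hg : ContinuousOn g (Set.Icc 0 1))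
    (h0 : ∀ t ∈ Set.Icc (0 : ℝ) 1, g t ≠ 0) :
    ∃ n : ℤ, logChange g = log (g 1) - log (g 0) + 2 * Real.pi * I * n := by
  have : exp (logChange g) = exp (log (g 1) - log (g 0)) := by
    rw [exp_logChange hg h0, exp_sub, exp_log (h0 1 (by simp)), exp_log (h0 0 (by simp))]
  obtain ⟨n, hn⟩ := exp_eq_exp_iff_exists_int.1 this
  exact ⟨n, by rw [hn]; ring⟩

namespace PlaneEmbedding

variable {V : Type*} {G : SimpleGraph V} (d : PlaneEmbedding G)

/-- The point of the complex plane representing a vertex. -/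
noncomputable def point (v : V) : ℂ := Complex.equivRealProdCLM.symm (d.pos v)

/-- The arc of an edge as a curve in the complex plane. -/
noncomputable def curve (e : Sym2 V) (t : ℝ) : ℂ :=
  open Classical in
  if h : e ∈ G.edgeSet then Complex.equivRealProdCLM.symm (d.arc ⟨e, h⟩ t) else 0

/-- The midpoint of the arc of an edge. -/
noncomputable def mid (e : Sym2 V) : ℂ := d.curve e (1 / 2)

/-- The arc of an edge without its ends. -/
def inner (e : Sym2 V) : Set ℂ := Set.image (d.curve e) (Set.Ioo 0 1)

theorem point_injective : Function.Injective d.point :=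
  Complex.equivRealProdCLM.symm.injective.comp d.inj

variable {d}

theorem point_notMem_inner {e : Sym2 V} (he : e ∈ G.edgeSet) (v : V) : d.point v ∉ d.inner e := by
  rintro ⟨t, ht, h⟩
  simp only [curve, he, dif_pos, point, EmbeddingLike.apply_eq_iff_eq] at h
  exact d.arc_avoid ⟨e, he⟩ t ht ⟨v, h.symm⟩

theorem eq_of_mem_inner {e f : Sym2 V} (he : e ∈ G.edgeSet) (hf : f ∈ G.edgeSet) {z : ℂ}
    (hze : z ∈ d.inner e) (hzf : z ∈ d.inner f) : e = f := by
  obtain ⟨s, hs, rfl⟩ := hze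
  obtain ⟨t, ht, h⟩ := hzf
  by_contra hne
  simp only [curve, he, hf, dif_pos, EmbeddingLike.apply_eq_iff_eq] at h
  exact d.arc_disjoint ⟨e, he⟩ ⟨f, hf⟩ (by simpa using hne) s hs t ht h.symm

theorem mid_mem_inner (e : Sym2 V) : d.mid e ∈ d.inner e := ⟨1 / 2, by norm_num, rfl⟩

theorem continuousOn_curve (e : Sym2 V) : ContinuousOn (d.curve e) (Set.Icc 0 1) := by
  by_cases h : e ∈ G.edgeSet
  · have : d.curve e = Complex.equivRealProdCLM.symm ∘ d.arc ⟨e, h⟩ := by ext t; simp [curve, h]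
    rw [this]
    exact Complex.equivRealProdCLM.symm.continuous.comp_continuousOn (d.arc_cont _)
  · have : d.curve e = fun _ => 0 := by ext t; simp [curve, h]
    rw [this]
    exact continuousOn_const

theorem curve_mem {e : Sym2 V} (he : e ∈ G.edgeSet) {t : ℝ} (ht : t ∈ Set.Icc (0 : ℝ) 1) :
    (∃ v, d.curve e t = d.point v) ∨ d.curve e t ∈ d.inner e := by
  by_cases h : t ∈ Set.Ioo (0 : ℝ) 1
  · exact .inr ⟨t, h, rfl⟩
  · left
    obtain ⟨u, v, -, h0, h1⟩ := d.arc_ends ⟨e, he⟩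
    have : t = 0 ∨ t = 1 := by
      by_contra! hne
      exact h ⟨lt_of_le_of_ne ht.1 hne.1.symm, lt_of_le_of_ne ht.2 hne.2⟩
    rcases this with rfl | rfl
    · exact ⟨u, by simp [curve, he, h0, point]⟩
    · exact ⟨v, by simp [curve, he, h1, point]⟩

theorem curve_ne_mid {e f : Sym2 V} (he : e ∈ G.edgeSet) (hf : f ∈ G.edgeSet) (hef : e ≠ f) {t : ℝ}
    (ht : t ∈ Set.Icc (0 : ℝ) 1) : d.curve e t ≠ d.mid f := by
  intro h
  rcases curve_mem he ht with ⟨v, hv⟩ | h1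
  · exact point_notMem_inner hf v (by rw [← hv, h]; exact mid_mem_inner f)
  · exact hef (eq_of_mem_inner he hf h1 (by rw [h]; exact mid_mem_inner f))

variable (d)

open Complex in
theorem exists_turns (e f : Sym2 V) : ∃ n : ℤ, e ∈ G.edgeSet → f ∈ G.edgeSet → e ≠ f →
    logChange (fun t => d.curve e t - d.mid f) =
      log (d.curve e 1 - d.mid f) - log (d.curve e 0 - d.mid f) + 2 * Real.pi * I * n := by
  by_cases h : e ∈ G.edgeSet ∧ f ∈ G.edgeSet ∧ e ≠ f
  · obtain ⟨he, hf, hef⟩ := h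
    obtain ⟨n, hn⟩ := exists_logChange_eq_log (g := fun t => d.curve e t - d.mid f)
      ((continuousOn_curve e).sub continuousOn_const)
      (fun t ht => sub_ne_zero.2 (curve_ne_mid he hf hef ht))
    exact ⟨n, fun _ _ _ => hn⟩
  · exact ⟨0, fun a b c => (h ⟨a, b, c⟩).elim⟩

/-- The parity of the number of turns of the arc of `e` around the midpoint of the arc of `f`. -/
noncomputable def parity (e f : Sym2 V) : ZMod 2 := ((d.exists_turns e f).choose : ZMod 2)

open Complex in
theorem exists_dart_curve {u v : V} (h : G.Adj u v) : ∃ A : ℝ → ℂ,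
    ContinuousOn A (Set.Icc 0 1) ∧ A 0 = d.point u ∧ A 1 = d.point v ∧ A (1 / 2) = d.mid s(u, v) ∧
    (∀ t ∈ Set.Ioo (0 : ℝ) 1, A t ∈ d.inner s(u, v)) ∧
    ∀ f ∈ G.edgeSet, s(u, v) ≠ f → ∃ n : ℤ, (n : ZMod 2) = d.parity s(u, v) f ∧
      logChange (fun t => A t - d.mid f) =
        log (d.point v - d.mid f) - log (d.point u - d.mid f) + 2 * Real.pi * I * n := by
  have he : s(u, v) ∈ G.edgeSet := h
  obtain ⟨u', v', huv, h0, h1⟩ := d.arc_ends ⟨s(u, v), he⟩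
  have c0 : d.curve s(u, v) 0 = d.point u' := by simp [curve, h, h0, point]
  have c1 : d.curve s(u, v) 1 = d.point v' := by simp [curve, h, h1, point]
  have hn : ∀ f ∈ G.edgeSet, s(u, v) ≠ f → ∃ n : ℤ, (n : ZMod 2) = d.parity s(u, v) f ∧
      logChange (fun t => d.curve s(u, v) t - d.mid f) =
        log (d.point v' - d.mid f) - log (d.point u' - d.mid f) + 2 * Real.pi * I * n :=
    fun f hf hef => ⟨_, rfl, c0 ▸ c1 ▸ (d.exists_turns s(u, v) f).choose_spec he hf hef⟩
  rcases Sym2.eq_iff.1 huv with ⟨rfl, rfl⟩ | ⟨rfl, rfl⟩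
  · exact ⟨d.curve s(u, v), continuousOn_curve _, c0, c1, rfl, fun t ht => ⟨t, ht, rfl⟩,
      hn⟩
  · refine ⟨fun t => d.curve s(u, v) (1 - t), (continuousOn_curve _).comp (by fun_prop)
      fun t ht => ⟨by linarith [ht.2], by linarith [ht.1]⟩, by simpa using c1, by simpa using c0,
      by norm_num [mid], fun t ht => ⟨1 - t, ⟨by linarith [ht.2], by linarith [ht.1]⟩, rfl⟩,
      fun f hf hef => ?_⟩
    obtain ⟨n, hnp, hn⟩ := hn f hf hef
    refine ⟨-n, ?_, ?_⟩
    · rw [Int.cast_neg, ZMod.neg_eq_self_mod_two, hnp]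
    · rw [logChange_reverse (g := fun t => d.curve s(u, v) t - d.mid f)
        ((continuousOn_curve _).sub continuousOn_const)
        (fun t ht => sub_ne_zero.2 (curve_ne_mid he hf hef ht)), hn]
      push_cast
      ring

end PlaneEmbedding

namespace PlaneEmbedding

variable {V : Type*} {G : SimpleGraph V}

/-- The total parity of the turns of the edges of a walk around the midpoint of `f`. -/
noncomputable def walkParity (d : PlaneEmbedding G) {a b : V} (p : G.Walk a b) (f : Sym2 V) :
    ZMod 2 :=
  (p.edges.map fun e => d.parity e f).sum

open Complex in
/-- A curve tracing the drawing of a walk. -/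
structure IsTrace (d : PlaneEmbedding G) {a b : V} (p : G.Walk a b) (A : ℝ → ℂ) : Prop where
  cont : ContinuousOn A (Set.Icc 0 1)
  zero : A 0 = d.point a
  one : A 1 = d.point b
  mem : ∀ t ∈ Set.Icc (0 : ℝ) 1,
    (∃ w ∈ p.support, A t = d.point w) ∨ ∃ e ∈ p.edges, A t ∈ d.inner e
  turns : ∀ f ∈ G.edgeSet, f ∉ p.edges → ∃ n : ℤ, (n : ZMod 2) = d.walkParity p f ∧
    logChange (fun t => A t - d.mid f) =
      log (d.point b - d.mid f) - log (d.point a - d.mid f) + 2 * Real.pi * I * n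
  start : p.IsPath → a ≠ b → ∀ t ∈ Set.Icc (0 : ℝ) 1, A t = d.point a → t = 0
  mark : p.IsPath → ∀ f ∈ p.edges, ∃ r ∈ Set.Ioo (0 : ℝ) 1, A r = d.mid f ∧
    ∀ t ∈ Set.Icc (0 : ℝ) 1, t ≤ r → A t ≠ d.point b

variable {d : PlaneEmbedding G}

theorem IsTrace.ne_mid {a b : V} {p : G.Walk a b} {A : ℝ → ℂ} (hA : d.IsTrace p A) {f : Sym2 V}
    (hf : f ∈ G.edgeSet) (hfp : f ∉ p.edges) {t : ℝ} (ht : t ∈ Set.Icc (0 : ℝ) 1) :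
    A t ≠ d.mid f := by
  intro h
  rcases hA.mem t ht with ⟨w, -, e⟩ | ⟨e, he, h'⟩
  · exact point_notMem_inner hf w (e ▸ h ▸ mid_mem_inner f)
  · exact hfp (eq_of_mem_inner (p.edges_subset_edgeSet he) hf h' (h ▸ mid_mem_inner f) ▸ he)

theorem exists_isTrace (d : PlaneEmbedding G) {a b : V} (p : G.Walk a b) :
    ∃ A : ℝ → ℂ, d.IsTrace p A := by
  induction p with
  | nil =>
    rename_i u
    refine ⟨fun _ => d.point u, continuousOn_const, rfl, rfl, fun t _ => .inl ⟨u, by simp⟩,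
      fun f hf _ => ⟨0, by simp [walkParity], ?_⟩, fun _ h => (h rfl).elim, by simp⟩
    have hne : d.point u - d.mid f ≠ 0 :=
      sub_ne_zero.2 fun h => point_notMem_inner hf u (h ▸ mid_mem_inner f)
    rw [logChange_eq (L := fun _ => Complex.log (d.point u - d.mid f)) continuousOn_const
      fun t _ => Complex.exp_log hne]
    simp
  | cons h p ih =>
    rename_i a c b
    obtain ⟨B, hB⟩ := ih
    obtain ⟨A, hA, hA0, hA1, hAm, hAi, hAt⟩ := d.exists_dart_curve h
    have he : s(a, c) ∈ G.edgeSet := h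
    have hAIcc : ∀ t ∈ Set.Icc (0 : ℝ) 1, t = 0 ∨ A t ∈ d.inner s(a, c) ∨ t = 1 := by
      intro t ht
      rcases ht.1.eq_or_lt with h0 | h0
      · exact .inl h0.symm
      rcases ht.2.eq_or_lt with h1 | h1
      · exact .inr (.inr h1)
      · exact .inr (.inl (hAi t ⟨h0, h1⟩))
    have hcases := fun t ht => joinCurve_cases (t := t) hA1 hB.zero ht
    refine ⟨joinCurve (d.point c) A B, continuousOn_joinCurve hA hB.cont, ?_, ?_, ?_, ?_, ?_, ?_⟩
    · rw [joinCurve_left hB.zero (by norm_num)]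
      simpa using hA0
    · rw [joinCurve_right hA1 (by norm_num)]
      norm_num [hB.one]
    · intro t ht
      rcases hcases t ht with ⟨-, h1, e⟩ | ⟨-, h1, e⟩ <;> rw [e]
      · rcases hAIcc _ h1 with h2 | h2 | h2
        · exact .inl ⟨a, by simp, by rw [h2, hA0]⟩
        · exact .inr ⟨_, by simp, h2⟩
        · exact .inl ⟨c, by simp, by rw [h2, hA1]⟩
      · rcases hB.mem _ h1 with ⟨w, hw, e⟩ | ⟨e, he, h'⟩
        · exact .inl ⟨w, by simp [hw], e⟩
        · exact .inr ⟨e, by simp [he], h'⟩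
    · intro f hf hfp
      simp only [Walk.edges_cons, List.mem_cons, not_or] at hfp
      obtain ⟨n, hn, hn'⟩ := hB.turns f hf hfp.2
      obtain ⟨k, hk, hk'⟩ := hAt f hf (Ne.symm hfp.1)
      refine ⟨k + n, by simp [walkParity, hn, hk], ?_⟩
      rw [logChange_joinCurve hA hB.cont hA1 hB.zero, hn', hk']
      · push_cast
        ring
      · intro t ht h0
        rcases hAIcc t ht with h2 | h2 | h2
        · exact point_notMem_inner hf a (by rw [← hA0, ← h2, h0]; exact mid_mem_inner f)
        · exact hfp.1 (eq_of_mem_inner he hf h2 (h0 ▸ mid_mem_inner f)).symm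
        · exact point_notMem_inner hf c (by rw [← hA1, ← h2, h0]; exact mid_mem_inner f)
      · exact fun t ht => hB.ne_mid hf hfp.2 ht
    · intro hp _ t ht h0
      rw [Walk.cons_isPath_iff] at hp
      rcases hcases t ht with ⟨-, h1, e⟩ | ⟨-, h1, e⟩ <;> rw [e] at h0
      · rcases hAIcc _ h1 with h2 | h2 | h2
        · linarith
        · exact (point_notMem_inner he a (h0 ▸ h2)).elim
        · rw [h2, hA1] at h0
          exact (h.ne' (d.point_injective h0)).elim
      · rcases hB.mem _ h1 with ⟨w, hw, e⟩ | ⟨e, he, h'⟩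
        · exact (hp.2 (d.point_injective (h0.symm.trans e) ▸ hw)).elim
        · exact (point_notMem_inner (p.edges_subset_edgeSet he) a (h0 ▸ h')).elim
    · intro hp f hf
      rw [Walk.cons_isPath_iff] at hp
      have hab : a ≠ b := fun e => hp.2 (e ▸ p.end_mem_support)
      rw [Walk.edges_cons, List.mem_cons] at hf
      rcases hf with rfl | hf
      · refine ⟨1 / 4, by norm_num, ?_, fun t ht htr h0 => ?_⟩
        · rw [joinCurve_left hB.zero (by norm_num)]
          convert hAm using 2
          norm_num
        · rw [joinCurve_left hB.zero (by linarith)] at h0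
          rcases hAIcc (2 * t) ⟨by linarith [ht.1], by linarith⟩ with h2 | h2 | h2
          · rw [h2, hA0] at h0
            exact hab (d.point_injective h0)
          · exact point_notMem_inner he b (h0 ▸ h2)
          · linarith
      · obtain ⟨r, hr, hrf, hrb⟩ := hB.mark hp.1 f hf
        refine ⟨(1 + r) / 2, ⟨by linarith [hr.1], by linarith [hr.2]⟩, ?_, fun t ht htr h0 => ?_⟩
        · rw [joinCurve_right hA1 (by linarith [hr.1]), ← hrf]
          ring_nf
        · rcases hcases t ht with ⟨-, h1, e⟩ | ⟨-, h1, e⟩ <;> rw [e] at h0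
          · rcases hAIcc _ h1 with h2 | h2 | h2
            · rw [h2, hA0] at h0
              exact hab (d.point_injective h0)
            · exact point_notMem_inner he b (h0 ▸ h2)
            · rw [h2, hA1, ← hB.zero] at h0
              exact hrb 0 (by simp) hr.1.le h0
          · exact hrb _ h1 (by linarith) h0

/-- Two edges with a common end off a closed walk are on the same side of it. -/
theorem walkParity_eq_of_mem (d : PlaneEmbedding G) {u v : V} (C : G.Walk u u) {f f' : Sym2 V}
    (hf : f ∈ G.edgeSet) (hf' : f' ∈ G.edgeSet) (hfC : f ∉ C.edges) (hfC' : f' ∉ C.edges)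
    (hv : v ∈ f) (hv' : v ∈ f') (hvC : v ∉ C.support) :
    d.walkParity C f = d.walkParity C f' := by
  obtain ⟨A, hA⟩ := d.exists_isTrace C
  have key : ∀ g ∈ G.edgeSet, g ∉ C.edges → v ∈ g →
      logChange (fun t => A t - d.point v) = logChange (fun t => A t - d.mid g) := by
    intro g hg hgC hvg
    obtain ⟨w, rfl⟩ := hvg
    obtain ⟨B, hB, hB0, -, hBm, hBi, -⟩ := d.exists_dart_curve hg
    have := logChange_closed_eq (C := A) (g := fun t => B (t / 2)) hA.cont
      (hB.comp (by fun_prop) fun t ht => ⟨by linarith [ht.1], by linarith [ht.2]⟩)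
      (hA.zero.trans hA.one.symm) ?_
    · simp only [zero_div, hB0, hBm] at this
      exact this
    · intro s hs t ht h0
      rcases ht.1.eq_or_lt with h1 | h1
      · rw [← h1, zero_div, hB0] at h0
        rcases hA.mem s hs with ⟨x, hx, e⟩ | ⟨e, he, h'⟩
        · have : x = v := d.point_injective (e.symm.trans h0)
          exact hvC (this ▸ hx)
        · exact point_notMem_inner (C.edges_subset_edgeSet he) v (h0 ▸ h')
      · have h2 := hBi (t / 2) ⟨by linarith, by linarith [ht.2]⟩
        rcases hA.mem s hs with ⟨x, hx, e⟩ | ⟨e, he, h'⟩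
        · exact point_notMem_inner hg x (e ▸ h0 ▸ h2)
        · exact hgC (eq_of_mem_inner (C.edges_subset_edgeSet he) hg h' (h0 ▸ h2) ▸ he)
  obtain ⟨n, hn, e⟩ := hA.turns f hf hfC
  obtain ⟨n', hn', e'⟩ := hA.turns f' hf' hfC'
  rw [← key f hf hfC hv, sub_self, zero_add] at e
  rw [← key f' hf' hfC' hv', sub_self, zero_add, e] at e'
  rw [← hn, ← hn', Int.cast_inj.1 (mul_left_cancel₀ Complex.two_pi_I_ne_zero e')]

/-- Internally disjoint paths. -/
def InternallyDisjoint {a b : V} (p q : G.Walk a b) : Prop :=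
  (∀ e ∈ p.edges, e ∉ q.edges) ∧ ∀ w ∈ p.support, w ∈ q.support → w = a ∨ w = b

theorem InternallyDisjoint.symm {a b : V} {p q : G.Walk a b} (h : InternallyDisjoint p q) :
    InternallyDisjoint q p :=
  ⟨fun e h1 h2 => h.1 e h2 h1, fun w h1 h2 => h.2 w h2 h1⟩

theorem IsTrace.arcPair {a b : V} (hab : a ≠ b) {p q : G.Walk a b} {A B : ℝ → ℂ}
    (hA : d.IsTrace p A) (hB : d.IsTrace q B) (hp : p.IsPath) (hq : q.IsPath)
    (hpq : InternallyDisjoint p q) {r s : ℝ} (hr : r ∈ Set.Ioo (0 : ℝ) 1)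
    (hs : s ∈ Set.Ioo (0 : ℝ) 1) (hrb : ∀ t ∈ Set.Icc (0 : ℝ) 1, t ≤ r → A t ≠ d.point b)
    (hsb : ∀ t ∈ Set.Icc (0 : ℝ) 1, t ≤ s → B t ≠ d.point b) :
    ArcPair (d.point a) (d.point b) A r B s := by
  refine ⟨hA.cont, hB.cont, hA.zero, hB.zero, hA.one, hB.one, hr, hs, hA.start hp hab,
    hB.start hq hab, hrb, hsb, fun x hx y hy h => ?_⟩
  rcases hA.mem x hx with ⟨w, hw, e⟩ | ⟨e, he, h1⟩ <;>
    rcases hB.mem y hy with ⟨w', hw', e'⟩ | ⟨e', he', h2⟩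
  · have : w = w' := d.point_injective (e.symm.trans (h.trans e'))
    subst this
    rw [e]
    exact (hpq.2 w hw hw').imp (congr_arg _) (congr_arg _)
  · exact (point_notMem_inner (q.edges_subset_edgeSet he') w (e ▸ h ▸ h2)).elim
  · exact (point_notMem_inner (p.edges_subset_edgeSet he) w' (e' ▸ h ▸ h1)).elim
  · exact (hpq.1 e he (eq_of_mem_inner (p.edges_subset_edgeSet he) (q.edges_subset_edgeSet he')
      h1 (h ▸ h2) ▸ he')).elim

/-- Of three internally disjoint paths with the same ends, an odd number lie inside the cycle
formed by the other two. -/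
theorem walkParity_theta (d : PlaneEmbedding G) {a b : V} (hab : a ≠ b) {p q r : G.Walk a b}
    (hp : p.IsPath) (hq : q.IsPath) (hr : r.IsPath) (hpq : InternallyDisjoint p q)
    (hqr : InternallyDisjoint q r) (hrp : InternallyDisjoint r p) {e f g : Sym2 V}
    (he : e ∈ p.edges) (hf : f ∈ q.edges) (hg : g ∈ r.edges) :
    (d.walkParity p g + d.walkParity q g) + (d.walkParity q e + d.walkParity r e) +
      (d.walkParity r f + d.walkParity p f) = 1 := by
  obtain ⟨A, hA⟩ := d.exists_isTrace p
  obtain ⟨B, hB⟩ := d.exists_isTrace q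
  obtain ⟨C, hC⟩ := d.exists_isTrace r
  obtain ⟨x, hx, hxe, hxb⟩ := hA.mark hp e he
  obtain ⟨y, hy, hyf, hyb⟩ := hB.mark hq f hf
  obtain ⟨z, hz, hzg, hzb⟩ := hC.mark hr g hg
  obtain ⟨n, hn⟩ := logChange_theta (hA.arcPair hab hB hp hq hpq hx hy hxb hyb)
    (hB.arcPair hab hC hq hr hqr hy hz hyb hzb) (hC.arcPair hab hA hr hp hrp hz hx hzb hxb)
  rw [hxe, hyf, hzg] at hn
  have heG := p.edges_subset_edgeSet he
  have hfG := q.edges_subset_edgeSet hf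
  have hgG := r.edges_subset_edgeSet hg
  obtain ⟨n₁, h₁, e₁⟩ := hA.turns g hgG (hrp.1 g hg)
  obtain ⟨n₂, h₂, e₂⟩ := hB.turns g hgG (hqr.symm.1 g hg)
  obtain ⟨n₃, h₃, e₃⟩ := hB.turns e heG (hpq.1 e he)
  obtain ⟨n₄, h₄, e₄⟩ := hC.turns e heG (hrp.symm.1 e he)
  obtain ⟨n₅, h₅, e₅⟩ := hC.turns f hfG (hqr.1 f hf)
  obtain ⟨n₆, h₆, e₆⟩ := hA.turns f hfG (hpq.symm.1 f hf)
  rw [e₁, e₂, e₃, e₄, e₅, e₆] at hn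
  have hinteger : (n₁ - n₂) + (n₃ - n₄) + (n₅ - n₆) = 2 * n + 1 := by
    have : (2 * Real.pi * Complex.I : ℂ) * (((n₁ - n₂) + (n₃ - n₄) + (n₅ - n₆) : ℤ) : ℂ) =
        2 * Real.pi * Complex.I * ((2 * n + 1 : ℤ) : ℂ) := by
      push_cast
      linear_combination hn
    exact Int.cast_inj.1 (mul_left_cancel₀ Complex.two_pi_I_ne_zero this)
  have := congr_arg (Int.cast : ℤ → ZMod 2) hinteger
  push_cast at this
  rw [h₁, h₂, h₃, h₄, h₅, h₆, show (2 : ZMod 2) = 0 from rfl, zero_mul, zero_add] at this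
  simpa only [CharTwo.sub_eq_add] using this

end PlaneEmbedding

namespace PlaneEmbedding

variable {V : Type*} {G : SimpleGraph V}

theorem walkParity_append (d : PlaneEmbedding G) {a b c : V} (p : G.Walk a b) (q : G.Walk b c)
    (f : Sym2 V) : d.walkParity (p.append q) f = d.walkParity p f + d.walkParity q f := by
  simp [walkParity]

theorem walkParity_reverse (d : PlaneEmbedding G) {a b : V} (p : G.Walk a b) (f : Sym2 V) :
    d.walkParity p.reverse f = d.walkParity p f := by
  simp [walkParity, List.sum_reverse]

theorem walkParity_congr (d : PlaneEmbedding G) {a b a' b' : V} {p : G.Walk a b}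
    {q : G.Walk a' b'} (h : p.edges.Perm q.edges) (f : Sym2 V) :
    d.walkParity p f = d.walkParity q f :=
  (h.map _).sum_eq

theorem InternallyDisjoint.isCycle {a b : V} (hab : a ≠ b) {p q : G.Walk a b} (hp : p.IsPath)
    (hq : q.IsPath) (h : InternallyDisjoint p q) : (p.append q.reverse).IsCycle := by
  refine hp.isCycle_append hq.reverse ?_ ?_
  · intro w h1 h2
    rcases h.2 w (List.mem_of_mem_tail h1) (by simpa using List.mem_of_mem_tail h2) with rfl | rfl
    · have := hp.support_nodup
      rw [← p.cons_tail_support, List.nodup_cons] at this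
      exact this.1 h1
    · have := hq.reverse.support_nodup
      rw [← q.reverse.cons_tail_support, List.nodup_cons] at this
      exact this.1 h2
  · by_contra! hl
    rw [Walk.length_reverse] at hl
    have key : ∀ r : G.Walk a b, r.length ≤ 1 → s(a, b) ∈ r.edges := by
      intro r hr
      cases r with
      | nil => exact (hab rfl).elim
      | cons h r =>
        cases r with
        | nil => simp
        | cons h r => simp at hr
    exact h.1 _ (key p hl.1) (key q hl.2)

end PlaneEmbedding

namespace SimpleGraph

open PlaneEmbedding

variable {V : Type*} {G : SimpleGraph V}

theorem Walk.IsCycle.exists_split {a b : V} {C : G.Walk a a} (hC : C.IsCycle)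
    (hb : b ∈ C.support) (hab : a ≠ b) : ∃ p q : G.Walk a b, p.IsPath ∧ q.IsPath ∧
      InternallyDisjoint p q ∧ C = p.append q.reverse := by
  classical
  have hs := C.take_spec hb
  have hC' := hC
  rw [← hs] at hC'
  refine ⟨C.takeUntil b hb, (C.dropUntil b hb).reverse,
    hC'.isPath_of_append_left (Walk.not_nil_of_ne hab.symm),
    (hC'.isPath_of_append_right (Walk.not_nil_of_ne hab)).reverse, ⟨fun e h1 h2 => ?_,
    fun w h1 h2 => ?_⟩, by simp⟩
  · exact hC.isTrail.disjoint_edges_takeUntil_dropUntil hb h1 (by simpa using h2)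
  · by_contra! hw
    have hn := hC'.support_nodup
    rw [Walk.tail_support_append, List.nodup_append'] at hn
    rw [Walk.support_reverse, List.mem_reverse] at h2
    refine hn.2.2 (?_ : w ∈ _) ?_
    · rw [← Walk.cons_tail_support, List.mem_cons] at h1
      exact h1.resolve_left hw.1
    · rw [← Walk.cons_tail_support, List.mem_cons] at h2
      exact h2.resolve_left hw.2

/-- A connection between two vertices of a cycle outside the cycle gives three internally
disjoint paths, two of which form the cycle. -/
theorem Walk.IsCycle.exists_chord {u : V} {C : G.Walk u u} (hC : C.IsCycle) {Y : Set (Sym2 V)}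
    (hY : Y ⊆ G.edgeSet) (hYC : ∀ e ∈ Y, e ∉ C.edges)
    (h : ∃ v ∈ C.support, ∃ w ∈ C.support, v ≠ w ∧ (fromEdgeSet Y).Reachable v w) :
    ∃ (a b : V) (p q r : G.Walk a b), a ≠ b ∧ p.IsPath ∧ q.IsPath ∧ r.IsPath ∧
      InternallyDisjoint p q ∧ InternallyDisjoint q r ∧ InternallyDisjoint r p ∧
      (p.append q.reverse).edges.Perm C.edges ∧ ∀ e ∈ r.edges, e ∈ Y := by
  classical
  have hex : ∃ n : ℕ, ∃ v ∈ C.support, ∃ w ∈ C.support, v ≠ w ∧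
      ∃ r : (fromEdgeSet Y).Walk v w, r.length = n := by
    obtain ⟨v, hv, w, hw, hvw, ⟨r⟩⟩ := h
    exact ⟨_, v, hv, w, hw, hvw, r, rfl⟩
  obtain ⟨a, ha, b, hb, hab, r₀, hr₀⟩ := Nat.find_spec hex
  have hmin : ∀ v ∈ C.support, ∀ w ∈ C.support, v ≠ w → ∀ r : (fromEdgeSet Y).Walk v w,
      r₀.length ≤ r.length := fun v hv w hw hvw r =>
    hr₀ ▸ Nat.find_min' hex ⟨v, hv, w, hw, hvw, r, rfl⟩
  have hle : fromEdgeSet Y ≤ G := by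
    intro x y hxy
    exact hY ((fromEdgeSet_adj Y).1 hxy).1
  have hrY : ∀ e ∈ r₀.bypass.edges, e ∈ Y := fun e he => by
    have := r₀.bypass.edges_subset_edgeSet he
    rw [edgeSet_fromEdgeSet] at this
    exact this.1
  have hrC : ∀ w ∈ r₀.bypass.support, w ∈ C.support → w = a ∨ w = b := by
    intro w hw hwC
    by_contra! hne
    have h1 := hmin a ha w hwC hne.1.symm (r₀.bypass.takeUntil w hw)
    have h2 := Walk.length_takeUntil_lt_length hw hne.2
    have h3 := r₀.length_bypass_le_length
    omega
  obtain ⟨p, q, hp, hq, hpq, e⟩ := (hC.rotate ha).exists_split (b := b)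
    (by rwa [Walk.mem_support_rotate_iff]) hab
  have hperm : (p.append q.reverse).edges.Perm C.edges := by
    rw [← e]
    exact (C.rotate_edges a ha).perm
  have hsupp : ∀ w, w ∈ (p.append q.reverse).support → w ∈ C.support := by
    intro w hw
    rwa [← e, Walk.mem_support_rotate_iff] at hw
  have hpC : ∀ e ∈ p.edges, e ∈ C.edges := fun e he => hperm.subset (by simp [he])
  have hqC : ∀ e ∈ q.edges, e ∈ C.edges := fun e he => hperm.subset (by simp [he])
  refine ⟨a, b, p, q, r₀.bypass.mapLe hle, hab, hp, hq,
    (Walk.isPath_mapLe hle).2 r₀.bypass_isPath, hpq, ⟨?_, ?_⟩, ⟨?_, ?_⟩, hperm, ?_⟩ <;>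
    simp only [Walk.edges_mapLe_eq_edges, Walk.support_mapLe_eq_support]
  · exact fun e he he' => hYC e (hrY e he') (hqC e he)
  · exact fun w hw hw' => hrC w hw' (hsupp w (by rw [Walk.mem_support_append_iff]; simp [hw]))
  · exact fun e he he' => hYC e (hrY e he) (hpC e he')
  · exact fun w hw hw' => hrC w hw (hsupp w (by rw [Walk.mem_support_append_iff]; simp [hw']))
  · exact hrY

open Classical in
theorem Walk.IsCycle.card_edges {u : V} {C : G.Walk u u} (hC : C.IsCycle) :
    C.edges.toFinset.card = C.length := by
  rw [List.toFinset_card_of_nodup hC.isTrail.edges_nodup, Walk.length_edges]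

open Classical in
theorem Walk.IsCycle.card_support {u : V} {C : G.Walk u u} (hC : C.IsCycle) :
    C.support.toFinset.card = C.length := by
  have : C.support.toFinset = C.support.tail.toFinset := by
    ext w
    rw [List.mem_toFinset, List.mem_toFinset]
    refine ⟨fun h => ?_, List.mem_of_mem_tail⟩
    rw [← C.cons_tail_support, List.mem_cons] at h
    rcases h with rfl | h
    · exact C.end_mem_tail_support hC.not_nil
    · exact h
  rw [this, List.toFinset_card_of_nodup hC.support_nodup]
  simp

theorem reachable_of_mem {Y : Set (Sym2 V)} {e : Sym2 V} (he : e ∈ Y) {v w : V} (hv : v ∈ e)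
    (hw : w ∈ e) : (fromEdgeSet Y).Reachable v w := by
  by_cases h : v = w
  · rw [h]
  · refine Adj.reachable ?_
    rw [fromEdgeSet_adj]
    exact ⟨(Sym2.mem_and_mem_iff h).1 ⟨hv, hw⟩ ▸ he, h⟩

variable [Fintype V]

open Classical in
/-- The set of vertices covered by a set of edges. -/
noncomputable def coverOf (X : Finset (Sym2 V)) : Finset V := {v | ∃ e ∈ X, v ∈ e}

theorem mem_coverOf {X : Finset (Sym2 V)} {v : V} : v ∈ coverOf X ↔ ∃ e ∈ X, v ∈ e := by
  simp [coverOf]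

theorem coverOf_mono {X Y : Finset (Sym2 V)} (h : X ⊆ Y) : coverOf X ⊆ coverOf Y := by
  intro v
  simp only [mem_coverOf]
  exact fun ⟨e, he, hv⟩ => ⟨e, h he, hv⟩

open Classical in
theorem Walk.coverOf_edges {u v : V} {p : G.Walk u v} (hp : ¬p.Nil) :
    coverOf p.edges.toFinset = p.support.toFinset := by
  ext w
  rw [mem_coverOf, List.mem_toFinset]
  constructor
  · rintro ⟨e, he, hw⟩
    exact Walk.mem_support_of_mem_edges (List.mem_toFinset.1 he) hw
  · intro h
    rw [Walk.mem_support_iff_exists_mem_edges_of_not_nil hp] at h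
    simpa using h

end SimpleGraph

namespace PlaneEmbedding

variable {V : Type*} {G : SimpleGraph V} [Fintype V]

theorem card_glue [DecidableEq V] {X X₁ X₂ Z : Finset (Sym2 V)} {W : Finset V} (h₁ : X₁ ⊆ X)
    (h₂ : X₂ ⊆ X) (hX : X ⊆ X₁ ∪ X₂) (hZ : Z ⊆ X₁ ∩ X₂)
    (hW : ∀ e ∈ X₁, ∀ f ∈ X₂, ∀ v ∈ e, v ∈ f → v ∈ W) :
    X.card + Z.card ≤ X₁.card + X₂.card ∧
      (coverOf X₁).card + (coverOf X₂).card ≤ (coverOf X).card + W.card := by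
  rw [← Finset.card_union_add_card_inter X₁, ← Finset.card_union_add_card_inter (coverOf X₁)]
  refine ⟨add_le_add (Finset.card_le_card hX) (Finset.card_le_card hZ),
    add_le_add (Finset.card_le_card (Finset.union_subset (coverOf_mono h₁) (coverOf_mono h₂)))
      (Finset.card_le_card fun v hv => ?_)⟩
  rw [Finset.mem_inter, mem_coverOf, mem_coverOf] at hv
  obtain ⟨⟨e, he, hve⟩, f, hf, hvf⟩ := hv
  exact hW e he f hf v hve hvf

/-- The bound on the size of edge sets with at most `N` edges lying on one side of a cycle. -/
def CycleBound (d : PlaneEmbedding G) (N : ℕ) : Prop :=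
  ∀ X : Finset (Sym2 V), X.card ≤ N → (X : Set (Sym2 V)) ⊆ G.edgeSet →
    ∀ (u : V) (C : G.Walk u u), C.IsCycle → (∀ e ∈ C.edges, e ∈ X) →
      ∀ t : ZMod 2, (∀ f ∈ X, f ∉ C.edges → d.walkParity C f = t) →
        3 * X.card + C.length + 5 ≤ 5 * (coverOf X).card

/-- The bound on the size of nonempty edge sets with at most `N` edges. -/
def EdgeBound (G : SimpleGraph V) (N : ℕ) : Prop :=
  ∀ X : Finset (Sym2 V), X.card ≤ N → (X : Set (Sym2 V)) ⊆ G.edgeSet → X.Nonempty →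
    3 * X.card + 5 ≤ 5 * (coverOf X).card

variable {d : PlaneEmbedding G} {N : ℕ}

theorem CycleBound.of_theta (hN : d.CycleBound N) {X : Finset (Sym2 V)} (hXN : X.card ≤ N + 1)
    (hX : (X : Set (Sym2 V)) ⊆ G.edgeSet) {a b : V} (hab : a ≠ b) {p q r : G.Walk a b}
    (hp : p.IsPath) (hq : q.IsPath) (hr : r.IsPath) (hpq : InternallyDisjoint p q)
    (hqr : InternallyDisjoint q r) (hrp : InternallyDisjoint r p) (hpX : ∀ e ∈ p.edges, e ∈ X)
    (hqX : ∀ e ∈ q.edges, e ∈ X) (hrX : ∀ e ∈ r.edges, e ∈ X) {t : ZMod 2}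
    (ht : ∀ f ∈ X, f ∉ p.edges → f ∉ q.edges → d.walkParity p f + d.walkParity q f = t) :
    3 * X.card + (p.length + q.length) + 5 ≤ 5 * (coverOf X).card := by
  classical
  have hne : ∀ s : G.Walk a b, ∃ e, e ∈ s.edges := fun s =>
    List.exists_mem_of_ne_nil _ fun h => Walk.not_nil_of_ne hab (Walk.edges_eq_nil.1 h)
  obtain ⟨e₀, he₀⟩ := hne p
  obtain ⟨f₀, hf₀⟩ := hne q
  obtain ⟨g₀, hg₀⟩ := hne r
  set z := d.walkParity q e₀ + d.walkParity r e₀ with hz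
  set y := d.walkParity r f₀ + d.walkParity p f₀ with hy
  have hx : d.walkParity p g₀ + d.walkParity q g₀ = t :=
    ht g₀ (hrX _ hg₀) (hrp.1 g₀ hg₀) (hqr.symm.1 g₀ hg₀)
  have hsum : t + z + y = 1 := by
    rw [← hx]
    exact d.walkParity_theta hab hp hq hr hpq hqr hrp he₀ hf₀ hg₀
  have hzp : ∀ e ∈ p.edges, d.walkParity q e + d.walkParity r e = z := by
    intro e he
    have := d.walkParity_theta hab hp hq hr hpq hqr hrp he hf₀ hg₀
    rw [hx, ← hy, ← hsum] at this
    simpa using this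
  have hyq : ∀ f ∈ q.edges, d.walkParity r f + d.walkParity p f = y := by
    intro f hf
    have := d.walkParity_theta hab hp hq hr hpq hqr hrp he₀ hf hg₀
    rw [hx, ← hz, ← hsum] at this
    simpa using this
  have alg₁ : ∀ x₁ x₂ x₃ t z : ZMod 2, x₁ + x₂ = t → x₂ + x₃ = z → x₁ + x₃ = t + z := by decide
  have alg₂ : ∀ x z : ZMod 2, x ≠ z → x = z + 1 := by decide
  have alg₃ : ∀ t z y : ZMod 2, t + z + y = 1 → t + z ≠ y ∧ t + (z + 1) = y := by decide
  have memE : ∀ (s₁ s₂ : G.Walk a b) (e : Sym2 V),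
      e ∈ (s₁.append s₂.reverse).edges ↔ e ∈ s₁.edges ∨ e ∈ s₂.edges := by simp
  have memV : ∀ (s₁ s₂ : G.Walk a b) (v : V),
      v ∈ (s₁.append s₂.reverse).support ↔ v ∈ s₁.support ∨ v ∈ s₂.support := by
    intro s₁ s₂ v
    rw [Walk.mem_support_append_iff, Walk.support_reverse, List.mem_reverse]
  have par : ∀ (s₁ s₂ : G.Walk a b) (e : Sym2 V), d.walkParity (s₁.append s₂.reverse) e =
      d.walkParity s₁ e + d.walkParity s₂ e := fun s₁ s₂ e => by
    rw [walkParity_append, walkParity_reverse]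
  let X₁ := X.filter fun e => e ∈ r.edges ∨
    (e ∉ q.edges ∧ d.walkParity q e + d.walkParity r e = z)
  let X₂ := X.filter fun e => e ∈ r.edges ∨ e ∈ q.edges ∨
    d.walkParity q e + d.walkParity r e ≠ z
  have m₁ : ∀ e, e ∈ X₁ ↔ e ∈ X ∧ (e ∈ r.edges ∨
    (e ∉ q.edges ∧ d.walkParity q e + d.walkParity r e = z)) := fun e => Finset.mem_filter
  have m₂ : ∀ e, e ∈ X₂ ↔ e ∈ X ∧ (e ∈ r.edges ∨ e ∈ q.edges ∨
    d.walkParity q e + d.walkParity r e ≠ z) := fun e => Finset.mem_filter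
  have c₁ : X₁ ⊂ X := Finset.filter_ssubset.2 ⟨f₀, hqX _ hf₀, by
    rintro (h | h)
    exacts [hqr.1 _ hf₀ h, h.1 hf₀]⟩
  have c₂ : X₂ ⊂ X := Finset.filter_ssubset.2 ⟨e₀, hpX _ he₀, by
    rintro (h | h | h)
    exacts [hrp.symm.1 _ he₀ h, hpq.1 _ he₀ h, h rfl]⟩
  have out₁ : ∀ f ∈ X₁, f ∉ p.edges → f ∉ r.edges →
      d.walkParity p f + d.walkParity r f = t + z := by
    intro f hf hfp hfr
    obtain ⟨hfX, h⟩ := (m₁ f).1 hf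
    obtain ⟨hfq, hfz⟩ := h.resolve_left hfr
    exact alg₁ _ _ _ _ _ (ht f hfX hfp hfq) hfz
  have b₁ := hN X₁ (by have := Finset.card_lt_card c₁; omega)
    (fun e he => hX (c₁.1 he)) a (p.append r.reverse) (hrp.symm.isCycle hab hp hr)
    (fun e he => by
      rw [m₁]
      rcases (memE _ _ _).1 he with h | h
      · exact ⟨hpX e h, .inr ⟨hpq.1 e h, hzp e h⟩⟩
      · exact ⟨hrX e h, .inl h⟩)
    (t + z) (fun f hf hfC => by
      rw [memE, not_or] at hfC
      rw [par]
      exact out₁ f hf hfC.1 hfC.2)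
  have b₂ := hN X₂ (by have := Finset.card_lt_card c₂; omega)
    (fun e he => hX (c₂.1 he)) a (q.append r.reverse) (hqr.isCycle hab hq hr)
    (fun e he => by
      rw [m₂]
      rcases (memE _ _ _).1 he with h | h
      · exact ⟨hqX e h, .inr (.inl h)⟩
      · exact ⟨hrX e h, .inl h⟩)
    (z + 1) (fun f hf hfC => by
      rw [memE, not_or] at hfC
      rw [par]
      exact alg₂ _ _ ((((m₂ f).1 hf).2.resolve_left hfC.2).resolve_left hfC.1))
  obtain ⟨g₁, g₂⟩ := card_glue (Z := r.edges.toFinset) (W := r.support.toFinset) c₁.1 c₂.1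
    (fun e he => by rw [Finset.mem_union, m₁, m₂]; tauto)
    (fun e he => by
      have h := List.mem_toFinset.1 he
      rw [Finset.mem_inter, m₁, m₂]
      exact ⟨⟨hrX e h, .inl h⟩, ⟨hrX e h, .inl h⟩⟩)
    (fun e he f hf v hve hvf => by
      rw [List.mem_toFinset]
      by_contra hvr
      have her : e ∉ r.edges := fun h => hvr (Walk.mem_support_of_mem_edges h hve)
      have hfr : f ∉ r.edges := fun h => hvr (Walk.mem_support_of_mem_edges h hvf)
      obtain ⟨heX, he'⟩ := (m₁ e).1 he
      obtain ⟨heq, hez⟩ := he'.resolve_left her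
      obtain ⟨hfX, hf'⟩ := (m₂ f).1 hf
      replace hf' := hf'.resolve_left hfr
      have hvq : v ∈ q.support := by
        by_contra hvq
        have hfq : f ∉ q.edges := fun h => hvq (Walk.mem_support_of_mem_edges h hvf)
        have := d.walkParity_eq_of_mem (q.append r.reverse) (hX heX) (hX hfX)
          (by rw [memE]; tauto) (by rw [memE]; tauto) hve hvf (by rw [memV]; tauto)
        rw [par, par, hez] at this
        exact hf'.resolve_left hfq this.symm
      have hvp : v ∈ p.support := by
        by_contra hvp
        have hep : e ∉ p.edges := fun h => hvp (Walk.mem_support_of_mem_edges h hve)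
        have hfp : f ∉ p.edges := fun h => hvp (Walk.mem_support_of_mem_edges h hvf)
        have := d.walkParity_eq_of_mem (p.append r.reverse) (hX heX) (hX hfX)
          (by rw [memE]; tauto) (by rw [memE]; tauto) hve hvf (by rw [memV]; tauto)
        rw [par, par, out₁ e he hep her] at this
        refine (alg₃ _ _ _ hsum).1 (this.trans ?_)
        by_cases hfq : f ∈ q.edges
        · rw [add_comm, hyq f hfq]
        · rw [alg₁ _ _ _ _ _ (ht f hfX hfp hfq) (alg₂ _ _ (hf'.resolve_left hfq)),
            (alg₃ _ _ _ hsum).2]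
      rcases hpq.2 v hvp hvq with rfl | rfl
      · exact hvr r.start_mem_support
      · exact hvr r.end_mem_support)
  rw [List.toFinset_card_of_nodup hr.isTrail.edges_nodup, Walk.length_edges] at g₁
  rw [List.toFinset_card_of_nodup hr.support_nodup, Walk.length_support] at g₂
  rw [Walk.length_append, Walk.length_reverse] at b₁ b₂
  omega

theorem CycleBound.succ (hgirth : ∀ (u : V) (C : G.Walk u u), C.IsCycle → 5 ≤ C.length)
    (hN : d.CycleBound N) (hE : EdgeBound G N) : d.CycleBound (N + 1) := by
  classical
  intro X hXN hX u C hC hCX t ht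
  have hCX' : C.edges.toFinset ⊆ X := fun e he => hCX e (List.mem_toFinset.1 he)
  by_cases hXC : X ⊆ C.edges.toFinset
  · obtain rfl := hXC.antisymm hCX'
    rw [Walk.coverOf_edges hC.not_nil, hC.card_support, hC.card_edges]
    have := hgirth u C hC
    omega
  obtain ⟨f, hfX, hfC⟩ := Finset.not_subset.1 hXC
  let Y : Set (Sym2 V) := {e | e ∈ X ∧ e ∉ C.edges}
  by_cases hchord : ∃ v ∈ C.support, ∃ w ∈ C.support, v ≠ w ∧ (fromEdgeSet Y).Reachable v w
  · obtain ⟨a, b, p, q, r, hab, hp, hq, hr, hpq, hqr, hrp, hperm, hrY⟩ :=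
      hC.exists_chord (fun e he => hX he.1) (fun e he => he.2) hchord
    have hmem : ∀ e, e ∈ C.edges ↔ e ∈ p.edges ∨ e ∈ q.edges := fun e => by
      rw [← hperm.mem_iff]
      simp
    have hlen : C.length = p.length + q.length := by
      rw [← Walk.length_edges, ← hperm.length_eq]
      simp
    rw [hlen]
    refine hN.of_theta hXN hX hab hp hq hr hpq hqr hrp (fun e he => hCX e ((hmem e).2 (.inl he)))
      (fun e he => hCX e ((hmem e).2 (.inr he))) (fun e he => (hrY e he).1) (t := t) ?_
    intro f hf hfp hfq
    rw [← ht f hf (by rw [hmem]; tauto), ← d.walkParity_congr hperm, walkParity_append,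
      walkParity_reverse]
  · push Not at hchord
    rw [List.mem_toFinset] at hfC
    obtain ⟨x, hx⟩ : ∃ x, x ∈ f := ⟨_, f.out_fst_mem⟩
    let B := X.filter fun e => e ∈ Y ∧ ∃ w ∈ e, (fromEdgeSet Y).Reachable x w
    have mB : ∀ e, e ∈ B ↔ e ∈ X ∧ e ∈ Y ∧ ∃ w ∈ e, (fromEdgeSet Y).Reachable x w :=
      fun e => Finset.mem_filter
    have hfB : f ∈ B := (mB f).2 ⟨hfX, ⟨hfX, hfC⟩, x, hx, .rfl⟩
    have hBr : ∀ e ∈ B, ∀ v ∈ e, (fromEdgeSet Y).Reachable x v := by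
      intro e he v hv
      obtain ⟨-, heY, w, hw, hxw⟩ := (mB e).1 he
      exact hxw.trans (reachable_of_mem heY hw hv)
    have hCB : ∀ e ∈ C.edges, e ∈ X \ B := fun e he =>
      Finset.mem_sdiff.2 ⟨hCX e he, fun h => ((mB e).1 h).2.1.2 he⟩
    obtain ⟨e₀, he₀⟩ : ∃ e, e ∈ C.edges :=
      List.exists_mem_of_ne_nil _ fun h => hC.not_nil (Walk.edges_eq_nil.1 h)
    have hBX : B ⊆ X := Finset.filter_subset _ _
    have s₁ : B.card < X.card := Finset.card_lt_card
      ⟨hBX, fun h => (Finset.mem_sdiff.1 (hCB e₀ he₀)).2 (h (hCX e₀ he₀))⟩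
    have s₂ : (X \ B).card < X.card := Finset.card_lt_card
      ⟨Finset.sdiff_subset, fun h => (Finset.mem_sdiff.1 (h hfX)).2 hfB⟩
    have b₁ := hE B (by omega) (fun e he => hX (hBX he)) ⟨f, hfB⟩
    have b₂ := hN (X \ B) (by omega) (fun e he => hX (Finset.sdiff_subset he)) u C hC hCB t
      (fun f hf hfC => ht f (Finset.sdiff_subset hf) hfC)
    obtain ⟨g₁, g₂⟩ := card_glue (Z := ∅)
      (W := C.support.toFinset.filter fun v => (fromEdgeSet Y).Reachable x v) hBX
      (Finset.sdiff_subset (t := B)) (by rw [Finset.union_sdiff_of_subset hBX])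
      (Finset.empty_subset _)
      (fun e he f hf v hve hvf => by
        rw [Finset.mem_filter, List.mem_toFinset]
        refine ⟨?_, hBr e he v hve⟩
        rw [Finset.mem_sdiff, mB] at hf
        by_contra hvC
        have hfC : f ∉ C.edges := fun h => hvC (Walk.mem_support_of_mem_edges h hvf)
        exact hf.2 ⟨hf.1, ⟨hf.1, hfC⟩, v, hvf, hBr e he v hve⟩)
    have hW : (C.support.toFinset.filter fun v => (fromEdgeSet Y).Reachable x v).card ≤ 1 := by
      rw [Finset.card_le_one]
      intro v hv w hw
      rw [Finset.mem_filter, List.mem_toFinset] at hv hw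
      by_contra hvw
      exact hchord v hv.1 w hw.1 hvw (hv.2.symm.trans hw.2)
    rw [Finset.card_empty] at g₁
    omega

theorem EdgeBound.succ (hC : d.CycleBound (N + 1)) (hE : EdgeBound G N) : EdgeBound G (N + 1) := by
  classical
  intro X hXN hX hXne
  obtain ⟨e, he⟩ := hXne
  induction e with | _ u v
  have huv : G.Adj u v := hX he
  set Y := X.erase s(u, v) with hY
  have hYX : Y ⊆ X := Finset.erase_subset _ _
  have hYcard : Y.card + 1 = X.card := Finset.card_erase_add_one he
  by_cases hr : (fromEdgeSet (Y : Set (Sym2 V))).Reachable u v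
  · obtain ⟨p, hp⟩ := hr.symm.exists_isPath
    have hle : fromEdgeSet (Y : Set (Sym2 V)) ≤ G := by
      intro x y hxy
      exact hX (hYX ((fromEdgeSet_adj _).1 hxy).1)
    have hpY : ∀ e ∈ p.edges, e ∈ Y := fun e he => by
      have := p.edges_subset_edgeSet he
      rw [edgeSet_fromEdgeSet] at this
      exact this.1
    set C := Walk.cons huv (p.mapLe hle) with hCdef
    have hCyc : C.IsCycle := by
      rw [hCdef, Walk.cons_isCycle_iff, Walk.isPath_mapLe, Walk.edges_mapLe_eq_edges]
      exact ⟨hp, fun h => Finset.notMem_erase _ _ (hpY _ h)⟩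
    have hCX : ∀ e ∈ C.edges, e ∈ X := by
      intro e he'
      rw [hCdef, Walk.edges_cons, List.mem_cons, Walk.edges_mapLe_eq_edges] at he'
      rcases he' with rfl | h
      exacts [he, hYX (hpY _ h)]
    have side : ∀ t : ZMod 2, 3 * (X.filter fun e => e ∈ C.edges ∨ d.walkParity C e = t).card +
        C.length + 5 ≤
        5 * (coverOf (X.filter fun e => e ∈ C.edges ∨ d.walkParity C e = t)).card := by
      intro t
      refine hC _ ((Finset.card_filter_le _ _).trans hXN)
        (fun e he => hX (Finset.filter_subset _ _ he)) u C hCyc (fun e he => Finset.mem_filter.2 ⟨hCX e he, .inl he⟩) t (fun f hf hfC => ?_)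
      exact (Finset.mem_filter.1 hf).2.resolve_left hfC
    have alg : ∀ x : ZMod 2, x = 0 ∨ x = 1 := by decide
    obtain ⟨g₁, g₂⟩ := card_glue (Z := C.edges.toFinset) (W := C.support.toFinset)
      (Finset.filter_subset (fun e => e ∈ C.edges ∨ d.walkParity C e = 0) X)
      (Finset.filter_subset (fun e => e ∈ C.edges ∨ d.walkParity C e = 1) X)
      (fun e he => by
        have := alg (d.walkParity C e)
        rw [Finset.mem_union, Finset.mem_filter, Finset.mem_filter]
        tauto)
      (fun e he => by
        have h := List.mem_toFinset.1 he
        rw [Finset.mem_inter, Finset.mem_filter, Finset.mem_filter]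
        exact ⟨⟨hCX e h, .inl h⟩, ⟨hCX e h, .inl h⟩⟩)
      (fun e he f hf w hwe hwf => by
        rw [List.mem_toFinset]
        by_contra hwC
        rw [Finset.mem_filter] at he hf
        have heC : e ∉ C.edges := fun h => hwC (Walk.mem_support_of_mem_edges h hwe)
        have hfC : f ∉ C.edges := fun h => hwC (Walk.mem_support_of_mem_edges h hwf)
        have := d.walkParity_eq_of_mem C (hX he.1) (hX hf.1) heC hfC hwe hwf hwC
        rw [he.2.resolve_left heC, hf.2.resolve_left hfC] at this
        exact zero_ne_one this)
    have b₁ := side 0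
    have b₂ := side 1
    rw [hCyc.card_edges] at g₁
    rw [hCyc.card_support] at g₂
    omega
  · let B := Y.filter fun e => ∃ w ∈ e, (fromEdgeSet (Y : Set (Sym2 V))).Reachable u w
    have hBr : ∀ w ∈ insert u (coverOf B), (fromEdgeSet (Y : Set (Sym2 V))).Reachable u w := by
      intro w hw
      rw [Finset.mem_insert, mem_coverOf] at hw
      rcases hw with rfl | ⟨e, he, hwe⟩
      · rfl
      · obtain ⟨heY, x, hx, hux⟩ := Finset.mem_filter.1 he
        exact hux.trans (reachable_of_mem heY hx hwe)
    have hBr' : ∀ w ∈ insert v (coverOf (Y \ B)),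
        ¬(fromEdgeSet (Y : Set (Sym2 V))).Reachable u w := by
      intro w hw h
      rw [Finset.mem_insert, mem_coverOf] at hw
      rcases hw with rfl | ⟨e, he, hwe⟩
      · exact hr h
      · rw [Finset.mem_sdiff, Finset.mem_filter] at he
        exact he.2 ⟨he.1, w, hwe, h⟩
    have bound : ∀ (Z : Finset (Sym2 V)) (w : V), Z ⊆ Y →
        3 * Z.card + 5 ≤ 5 * (insert w (coverOf Z)).card := by
      intro Z w hZ
      rcases Z.eq_empty_or_nonempty with rfl | hne
      · have : 0 < (insert w (coverOf (∅ : Finset (Sym2 V)))).card :=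
          Finset.card_pos.2 (Finset.insert_nonempty _ _)
        simp only [Finset.card_empty]
        omega
      · have h1 := hE Z (by have := Finset.card_le_card hZ; omega)
          (fun e he => hX (hYX (hZ he))) hne
        have h2 := Finset.card_le_card (Finset.subset_insert w (coverOf Z))
        omega
    have hBY : B ⊆ Y := Finset.filter_subset _ _
    have b₁ := bound B u hBY
    have b₂ := bound (Y \ B) v Finset.sdiff_subset
    have hcard : (Y \ B).card + B.card = Y.card := Finset.card_sdiff_add_card_eq_card hBY
    have hdisj : Disjoint (insert u (coverOf B)) (insert v (coverOf (Y \ B))) :=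
      Finset.disjoint_left.2 fun w h1 h2 => hBr' w h2 (hBr w h1)
    have hsub : insert u (coverOf B) ∪ insert v (coverOf (Y \ B)) ⊆ coverOf X := by
      refine Finset.union_subset (Finset.insert_subset ?_ (coverOf_mono (hBY.trans hYX)))
        (Finset.insert_subset ?_ (coverOf_mono (Finset.sdiff_subset.trans hYX)))
      · exact mem_coverOf.2 ⟨_, he, by simp⟩
      · exact mem_coverOf.2 ⟨_, he, by simp⟩
    have := Finset.card_le_card hsub
    rw [Finset.card_union_of_disjoint hdisj] at this
    omega

/-- In a plane graph of girth at least `5`, a nonempty set of edges covering `n` vertices has at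
most `5 (n - 1) / 3` elements. -/
theorem three_mul_card_le (d : PlaneEmbedding G) (hgirth : (5 : ℕ∞) ≤ G.egirth)
    {X : Finset (Sym2 V)} (hX : (X : Set (Sym2 V)) ⊆ G.edgeSet) (hne : X.Nonempty) :
    3 * X.card + 5 ≤ 5 * (coverOf X).card := by
  have hcyc : ∀ (u : V) (C : G.Walk u u), C.IsCycle → 5 ≤ C.length := fun u C hC => by
    exact_mod_cast le_egirth.1 hgirth u C hC
  have key : ∀ N, d.CycleBound N ∧ EdgeBound G N := by
    intro N
    induction N with
    | zero =>
      constructor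
      · intro X hXN _ u C hC hCX
        obtain ⟨e, he⟩ : ∃ e, e ∈ C.edges :=
          List.exists_mem_of_ne_nil _ fun h => hC.not_nil (Walk.edges_eq_nil.1 h)
        have := Finset.card_pos.2 ⟨e, hCX e he⟩
        omega
      · intro X hXN _ hne
        have := Finset.card_pos.2 hne
        omega
    | succ N ih =>
      have := ih.1.succ hcyc ih.2
      exact ⟨this, ih.2.succ this⟩
  exact (key X.card).2 X le_rfl hX hne

end PlaneEmbedding

namespace SimpleGraph

variable {V : Type*} [Fintype V] (H : SimpleGraph V) [DecidableRel H.Adj]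

/-- The sum of the degrees of the neighbours of a vertex. -/
def neighborDegreeSum (v : V) : ℕ := ∑ w ∈ H.neighborFinset v, H.degree w

/-- The charge that `v` gives to its neighbour `w` in the discharging argument. -/
def charge (D : ℕ) (v w : V) : ℤ :=
  if 10 ≤ H.degree v then 6 else if 3 ≤ H.degree v then
    if H.degree w = 2 then 6 else
      if H.degree w = 3 ∧ (4 ≤ H.degree v ∨ D + 15 < H.neighborDegreeSum v) then 1 else 0
  else 0

theorem charge_nonneg_s10 (D : ℕ) (v w : V) : 0 ≤ H.charge D v w := by
  unfold charge
  split_ifs <;> norm_num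

theorem charge_le_six (D : ℕ) (v w : V) : H.charge D v w ≤ 6 := by
  unfold charge
  split_ifs <;> norm_num

variable {H}

theorem charge_of_ten_le {D : ℕ} {v : V} (h : 10 ≤ H.degree v) (w : V) : H.charge D v w = 6 := by
  simp [charge, h]

/-- The final charge of a vertex is nonnegative in the absence of reducible configurations. -/
theorem final_charge_nonneg {D : ℕ} (hD : ∀ v, H.degree v ≤ D) (h1 : ∀ v, H.degree v ≠ 1)
    (hred : ∀ u v, H.Adj u v → H.neighborDegreeSum u ≤ D + 15 → H.neighborDegreeSum v ≤ D + 15 →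
      H.degree u ≠ 2 ∧ ¬(H.degree u = 3 ∧ H.degree v = 3)) {v : V} (hv : 0 < H.degree v) :
    0 ≤ 9 * (H.degree v : ℤ) - 30 + ∑ w ∈ H.neighborFinset v, H.charge D w v -
      ∑ w ∈ H.neighborFinset v, H.charge D v w := by
  classical
  have hpos : ∀ x y, H.Adj x y → 2 ≤ H.degree x := by
    intro x y h
    have := (H.degree_pos_iff_exists_adj x).2 ⟨y, h⟩
    have := h1 x
    omega
  have htwo : ∀ x y, H.Adj x y → H.degree x = 2 → H.degree y < 16 →
      H.neighborDegreeSum x ≤ D + 15 := by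
    intro x y hxy hx hy
    have hmem : y ∈ H.neighborFinset x := by simpa using hxy
    rw [neighborDegreeSum, ← Finset.add_sum_erase _ _ hmem]
    have hc : ((H.neighborFinset x).erase y).card = 1 := by
      rw [Finset.card_erase_of_mem hmem, card_neighborFinset_eq_degree, hx]
    obtain ⟨z, hz⟩ := Finset.card_eq_one.1 hc
    rw [hz, Finset.sum_singleton]
    have := hD z
    omega
  have adj_of_mem : ∀ {x y}, y ∈ H.neighborFinset x → H.Adj x y := by simp
  have hcard := H.card_neighborFinset_eq_degree v
  have hv1 := h1 v
  obtain h2 | h3 | h4 | h10 : H.degree v = 2 ∨ H.degree v = 3 ∨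
      (4 ≤ H.degree v ∧ H.degree v ≤ 9) ∨ 10 ≤ H.degree v := by omega
  · have hout : ∑ w ∈ H.neighborFinset v, H.charge D v w = 0 :=
      Finset.sum_eq_zero fun w _ => by simp [charge, h2]
    have hin : ∀ w ∈ H.neighborFinset v, H.charge D w v = 6 := by
      intro w hw
      have hvw := adj_of_mem hw
      by_cases hlarge : 10 ≤ H.degree w
      · exact charge_of_ten_le hlarge v
      have hl := htwo v w hvw h2 (by omega)
      have hw2 : H.degree w ≠ 2 := fun hw2 =>
        (hred v w hvw hl (htwo w v hvw.symm hw2 (by omega))).1 h2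
      have := hpos w v hvw.symm
      simp [charge, hlarge, h2, show 3 ≤ H.degree w by omega]
    rw [Finset.sum_congr rfl hin, hout, Finset.sum_const, hcard, h2]
    norm_num
  · have hno2 : ∀ w ∈ H.neighborFinset v, H.degree w = 2 → D + 15 < H.neighborDegreeSum v := by
      intro w hw hw2
      have hvw := adj_of_mem hw
      by_contra! hl
      exact (hred w v hvw.symm (htwo w v hvw.symm hw2 (by omega)) hl).1 hw2
    have hin4 : ∀ w, 4 ≤ H.degree w → 1 ≤ H.charge D w v := by
      intro w hw
      by_cases h10 : 10 ≤ H.degree w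
      · rw [charge_of_ten_le h10]
        norm_num
      · simp [charge, h10, h3, hw, show 3 ≤ H.degree w by omega]
    have hout4 : ∀ w, 4 ≤ H.degree w → H.charge D v w = 0 := by
      intro w hw
      simp [charge, h3, show H.degree w ≠ 2 by omega, show H.degree w ≠ 3 by omega]
    have hge : ∀ w ∈ H.neighborFinset v, 2 ≤ H.degree w := fun w hw =>
      hpos w v (adj_of_mem hw).symm
    obtain ⟨x, y, z, hxy, hxz, hyz, hN⟩ := Finset.card_eq_three.1 (hcard.trans h3)
    have hS : H.neighborDegreeSum v = H.degree x + (H.degree y + H.degree z) := by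
      rw [neighborDegreeSum, hN, Finset.sum_insert (by simp [hxy, hxz]), Finset.sum_pair hyz]
    have hsum : ∀ f : V → ℤ, ∑ w ∈ H.neighborFinset v, f w = f x + (f y + f z) := by
      intro f
      rw [hN, Finset.sum_insert (by simp [hxy, hxz]), Finset.sum_pair hyz]
    rw [hsum, hsum, h3]
    have hx : x ∈ H.neighborFinset v := by simp [hN]
    have hy : y ∈ H.neighborFinset v := by simp [hN]
    have hz : z ∈ H.neighborFinset v := by simp [hN]
    by_cases hlight : H.neighborDegreeSum v ≤ D + 15
    · have hgood : ∀ w ∈ H.neighborFinset v, 1 ≤ H.charge D w v ∧ H.charge D v w = 0 := by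
        intro w hw
        have hvw := adj_of_mem hw
        have hw2 : H.degree w ≠ 2 := fun h => absurd (hno2 w hw h) (by omega)
        have := hge w hw
        rcases (show H.degree w = 3 ∨ 4 ≤ H.degree w by omega) with hw3 | hw4
        · have hheavy : D + 15 < H.neighborDegreeSum w := by
            by_contra! hl
            exact (hred v w hvw hlight hl).2 ⟨h3, hw3⟩
          constructor
          · simp [charge, hw3, h3, hheavy]
          · simp [charge, hw3, h3, hlight]
        · exact ⟨hin4 w hw4, hout4 w hw4⟩
      have := hgood x hx
      have := hgood y hy
      have := hgood z hz
      norm_num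
      omega
    · by_cases hall : 4 ≤ H.degree x ∧ 4 ≤ H.degree y ∧ 4 ≤ H.degree z
      · obtain ⟨a, b, c⟩ := hall
        have := hin4 x a
        have := hin4 y b
        have := hin4 z c
        rw [hout4 x a, hout4 y b, hout4 z c]
        norm_num
        omega
      · have hfacts : ∀ w, (10 ≤ H.degree w → H.charge D w v = 6) ∧ 0 ≤ H.charge D w v ∧
            H.charge D v w ≤ 6 ∧ (4 ≤ H.degree w → H.charge D v w = 0) := fun w =>
          ⟨fun h => charge_of_ten_le h v, H.charge_nonneg_s10 D w v, H.charge_le_six D v w, hout4 w⟩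
        have := hfacts x
        have := hfacts y
        have := hfacts z
        have := hD x
        have := hD y
        have := hD z
        norm_num
        omega
  · by_cases hlight : H.neighborDegreeSum v ≤ D + 15
    · have hout : ∀ w ∈ H.neighborFinset v, H.charge D v w ≤ 1 := by
        intro w hw
        have hvw := adj_of_mem hw
        have hw2 : H.degree w ≠ 2 := fun hw2 =>
          (hred w v hvw.symm (htwo w v hvw.symm hw2 (by omega)) hlight).1 hw2
        simp only [charge, show ¬10 ≤ H.degree v by omega, hw2, if_false]
        split_ifs <;> norm_num
      have h1 : ∑ w ∈ H.neighborFinset v, H.charge D v w ≤ H.degree v := by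
        simpa [hcard] using Finset.sum_le_card_nsmul _ _ _ hout
      have h2 : 0 ≤ ∑ w ∈ H.neighborFinset v, H.charge D w v :=
        Finset.sum_nonneg fun w _ => H.charge_nonneg_s10 D w v
      omega
    · set a := ∑ w ∈ H.neighborFinset v, if H.degree w = 2 then (1 : ℤ) else 0 with ha
      set c := ∑ w ∈ H.neighborFinset v, if H.degree w = 3 then (1 : ℤ) else 0 with hc
      set o := ∑ w ∈ H.neighborFinset v, if 4 ≤ H.degree w then (1 : ℤ) else 0 with ho
      set b := ∑ w ∈ H.neighborFinset v, if 10 ≤ H.degree w then (1 : ℤ) else 0 with hb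
      have ha0 : 0 ≤ a := Finset.sum_nonneg fun w _ => by split_ifs <;> norm_num
      have hc0 : 0 ≤ c := Finset.sum_nonneg fun w _ => by split_ifs <;> norm_num
      have hb0 : 0 ≤ b := Finset.sum_nonneg fun w _ => by split_ifs <;> norm_num
      have hbo : b ≤ o := Finset.sum_le_sum fun w _ => by split_ifs <;> omega
      have hge : ∀ w ∈ H.neighborFinset v, 2 ≤ H.degree w := fun w hw =>
        hpos w v (adj_of_mem hw).symm
      have hd : (H.degree v : ℤ) = a + c + o := by
        rw [← hcard, ha, hc, ho, ← Finset.sum_add_distrib, ← Finset.sum_add_distrib,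
          Finset.card_eq_sum_ones, Nat.cast_sum]
        refine Finset.sum_congr rfl fun w hw => ?_
        have := hge w hw
        split_ifs <;> omega
      have hout : ∑ w ∈ H.neighborFinset v, H.charge D v w = 6 * a + c := by
        rw [ha, hc, Finset.mul_sum, ← Finset.sum_add_distrib]
        refine Finset.sum_congr rfl fun w hw => ?_
        simp only [charge, show ¬10 ≤ H.degree v by omega, show 3 ≤ H.degree v by omega, h4.1,
          if_true, if_false, true_or, and_true]
        split_ifs <;> omega
      have hin : 6 * b ≤ ∑ w ∈ H.neighborFinset v, H.charge D w v := by
        rw [hb, Finset.mul_sum]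
        refine Finset.sum_le_sum fun w _ => ?_
        split_ifs with h
        · rw [charge_of_ten_le h]
          norm_num
        · simpa using H.charge_nonneg_s10 D w v
      have hS : (H.neighborDegreeSum v : ℤ) = ∑ w ∈ H.neighborFinset v, (H.degree w : ℤ) := by
        simp [neighborDegreeSum]
      have hS1 : (H.neighborDegreeSum v : ℤ) ≤ 2 * a + 3 * c + D * o := by
        rw [hS, ha, hc, ho, Finset.mul_sum, Finset.mul_sum, Finset.mul_sum,
          ← Finset.sum_add_distrib, ← Finset.sum_add_distrib]
        refine Finset.sum_le_sum fun w hw => ?_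
        have := hge w hw
        have := hD w
        split_ifs <;> omega
      have hS2 : b = 0 → (H.neighborDegreeSum v : ℤ) ≤ 2 * a + 3 * c + 9 * o := by
        intro hb0
        have hsmall : ∀ w ∈ H.neighborFinset v, H.degree w ≤ 9 := by
          intro w hw
          have := (Finset.sum_eq_zero_iff_of_nonneg
            (fun w _ => by split_ifs <;> norm_num)).1 (hb ▸ hb0) w hw
          by_contra! h
          simp [show 10 ≤ H.degree w by omega] at this
        rw [hS, ha, hc, ho, Finset.mul_sum, Finset.mul_sum, Finset.mul_sum,
          ← Finset.sum_add_distrib, ← Finset.sum_add_distrib]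
        refine Finset.sum_le_sum fun w hw => ?_
        have := hge w hw
        have := hsmall w hw
        split_ifs <;> omega
      have hDv := hD v
      clear_value a b c o
      rw [hout]
      obtain h | rfl | rfl | rfl : 3 ≤ o ∨ o = 0 ∨ o = 1 ∨ o = 2 := by omega
      · omega
      · omega
      · omega
      · by_cases hb1 : b = 0
        · have := hS2 hb1
          omega
        · omega
  · have hout : ∑ w ∈ H.neighborFinset v, H.charge D v w = 6 * H.degree v := by
      rw [Finset.sum_congr rfl fun w _ => charge_of_ten_le h10 w, Finset.sum_const, hcard]
      simp [mul_comm]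
    have h2 : 0 ≤ ∑ w ∈ H.neighborFinset v, H.charge D w v :=
      Finset.sum_nonneg fun w _ => H.charge_nonneg_s10 D w v
    omega

/-- A sparse graph without vertices of degree one has an edge of small weight. -/
theorem exists_light_edge {D : ℕ} (hD : ∀ v, H.degree v ≤ D) (h1 : ∀ v, H.degree v ≠ 1)
    (hsparse : 3 * H.edgeFinset.card < 5 * (Finset.univ.filter fun v => 0 < H.degree v).card) :
    ∃ u v, H.Adj u v ∧ H.neighborDegreeSum u ≤ D + 15 ∧ H.neighborDegreeSum v ≤ D + 15 ∧
      (H.degree u = 2 ∨ H.degree u = 3 ∧ H.degree v = 3) := by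
  classical
  by_contra! hcon
  have hred : ∀ u v, H.Adj u v → H.neighborDegreeSum u ≤ D + 15 →
      H.neighborDegreeSum v ≤ D + 15 →
      H.degree u ≠ 2 ∧ ¬(H.degree u = 3 ∧ H.degree v = 3) := by
    intro u v huv hu hv
    have := hcon u v huv hu hv
    tauto
  have hswap : ∑ v, ∑ w ∈ H.neighborFinset v, H.charge D w v =
      ∑ v, ∑ w ∈ H.neighborFinset v, H.charge D v w :=
    Finset.sum_comm' (by simp [adj_comm])
  have hnonneg : 0 ≤ ∑ v, (9 * (H.degree v : ℤ) - (if 0 < H.degree v then 30 else 0) +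
      ∑ w ∈ H.neighborFinset v, H.charge D w v - ∑ w ∈ H.neighborFinset v, H.charge D v w) := by
    refine Finset.sum_nonneg fun v _ => ?_
    split_ifs with hv
    · exact final_charge_nonneg hD h1 hred hv
    · have h0 : H.neighborFinset v = ∅ := by
        rw [← Finset.card_eq_zero, card_neighborFinset_eq_degree]
        omega
      rw [h0]
      simp
  rw [Finset.sum_sub_distrib, Finset.sum_add_distrib, Finset.sum_sub_distrib, hswap,
    ← Finset.mul_sum, ← Nat.cast_sum, sum_degrees_eq_twice_card_edges, ← Finset.sum_filter,
    Finset.sum_const] at hnonneg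
  simp only [nsmul_eq_mul] at hnonneg
  push_cast at hnonneg
  omega

end SimpleGraph

namespace SimpleGraph

variable {V : Type*}

theorem deleteEdges_singleton_lt {H : SimpleGraph V} {u v : V} (h : H.Adj u v) :
    H.deleteEdges {s(u, v)} < H := by
  refine lt_of_le_of_ne (deleteEdges_le _) fun heq => ?_
  have : (H.deleteEdges {s(u, v)}).Adj u v := heq.symm ▸ h
  simp at this

theorem deleteIncidenceSet_lt {H : SimpleGraph V} {u v : V} (h : H.Adj u v) :
    H.deleteIncidenceSet u < H := by
  refine lt_of_le_of_ne (deleteEdges_le _) fun heq => ?_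
  have : (H.deleteIncidenceSet u).Adj u v := heq.symm ▸ h
  simp [deleteIncidenceSet_adj] at this

variable [Fintype V] {H : SimpleGraph V} [DecidableRel H.Adj]

/-- Light vertices have few forbidden colours. -/
theorem degree_add_sum_lt_of_neighborDegreeSum_le {k D : ℕ} (hk : 1 ≤ k) {u : V}
    (hlight : H.neighborDegreeSum u ≤ D + 15) (hdeg : k = 1 ∨ H.degree u ≤ 6) :
    H.degree u + ∑ w ∈ H.neighborFinset u, (H.degree w - 1) / k < (D + 10 + (k - 1)) / k + 6 := by
  have hsum : ∑ w ∈ H.neighborFinset u, (H.degree w - 1) + H.degree u = H.neighborDegreeSum u := by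
    rw [neighborDegreeSum, ← card_neighborFinset_eq_degree, Finset.card_eq_sum_ones,
      ← Finset.sum_add_distrib]
    refine Finset.sum_congr rfl fun w hw => Nat.sub_add_cancel ?_
    exact (H.degree_pos_iff_exists_adj w).2 ⟨u, by simpa [adj_comm] using hw⟩
  rcases hdeg with rfl | hdeg
  · simp only [Nat.div_one]
    omega
  have hle : ∑ w ∈ H.neighborFinset u, (H.degree w - 1) / k ≤
      (∑ w ∈ H.neighborFinset u, (H.degree w - 1)) / k := by
    rw [Nat.le_div_iff_mul_le hk, Finset.sum_mul]
    exact Finset.sum_le_sum fun w _ => Nat.div_mul_le_self _ _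
  have hdiv : (∑ w ∈ H.neighborFinset u, (H.degree w - 1)) / k ≤
      (D + 9) / k + (6 - H.degree u) := by
    rw [← Nat.add_mul_div_right _ _ hk]
    refine Nat.div_le_div_right ?_
    have := Nat.le_mul_of_pos_right (6 - H.degree u) hk
    omega
  have hceil : (D + 10 + (k - 1)) / k = (D + 9) / k + 1 := by
    rw [show D + 10 + (k - 1) = D + 9 + k by omega, Nat.add_div_right _ hk]
  omega

section Extension

variable [DecidableEq V]

variable (H) in
/-- A colouring is frugal off `U` if it satisfies the conditions of a `k`-frugal colouring when the
vertices of `U` are regarded as uncoloured. -/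
def IsFrugalOff (U : Finset V) (k : ℕ) (c : V → ℕ) : Prop :=
  (∀ x ∉ U, ∀ y ∉ U, H.Adj x y → c x ≠ c y) ∧
  ∀ v a, ((H.neighborFinset v).filter fun x => x ∉ U ∧ c x = a).card ≤ k

theorem IsFrugalOff.isFrugalColoring {k : ℕ} {c : V → ℕ} (h : H.IsFrugalOff ∅ k c) :
    H.IsFrugalColoring k c := by
  refine ⟨fun x y hxy => h.1 x (by simp) y (by simp) hxy, fun v a => ?_⟩
  convert h.2 v a
  rw [← Set.ncard_coe_finset]
  congr 1
  ext x
  simp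

/-- An uncoloured vertex with few forbidden colours can be coloured. -/
theorem IsFrugalOff.exists_update {U : Finset V} {k m : ℕ} {c : V → ℕ} (hk : 1 ≤ k)
    (h : H.IsFrugalOff U k c) {u : V} (hu : u ∈ U)
    (hm : H.degree u + ∑ w ∈ H.neighborFinset u, (H.degree w - 1) / k < m) :
    ∃ a < m, H.IsFrugalOff (U.erase u) k (Function.update c u a) := by
  let full (w : V) : Finset ℕ := (Finset.range m).filter fun a =>
    k ≤ ((H.neighborFinset w).filter fun x => x ∉ U ∧ c x = a).card
  have hfull : ∀ w ∈ H.neighborFinset u, (full w).card ≤ (H.degree w - 1) / k := by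
    intro w hw
    rw [Nat.le_div_iff_mul_le hk]
    have huw : u ∈ H.neighborFinset w := by simpa [adj_comm] using hw
    calc (full w).card * k
        ≤ ∑ a ∈ full w, ((H.neighborFinset w).filter fun x => x ∉ U ∧ c x = a).card := by
          rw [← smul_eq_mul]
          exact Finset.card_nsmul_le_sum _ _ _ fun a ha => (Finset.mem_filter.1 ha).2
      _ = ((full w).biUnion fun a =>
            (H.neighborFinset w).filter fun x => x ∉ U ∧ c x = a).card := by
          rw [Finset.card_biUnion]
          intro a _ b _ hab
          refine Finset.disjoint_left.2 fun x hx hx' => ?_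
          exact hab ((Finset.mem_filter.1 hx).2.2.symm.trans (Finset.mem_filter.1 hx').2.2)
      _ ≤ ((H.neighborFinset w).erase u).card := by
          refine Finset.card_le_card fun x hx => ?_
          obtain ⟨a, -, hx⟩ := Finset.mem_biUnion.1 hx
          obtain ⟨hx, hxU, -⟩ := Finset.mem_filter.1 hx
          exact Finset.mem_erase.2 ⟨fun h => hxU (h ▸ hu), hx⟩
      _ = H.degree w - 1 := by
          rw [Finset.card_erase_of_mem huw, card_neighborFinset_eq_degree]
  obtain ⟨a, ha, haF⟩ : ∃ a ∈ Finset.range m,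
      a ∉ (H.neighborFinset u).image c ∪ (H.neighborFinset u).biUnion full := by
    apply Finset.exists_mem_notMem_of_card_lt_card
    rw [Finset.card_range]
    refine lt_of_le_of_lt ((Finset.card_union_le _ _).trans (add_le_add ?_ ?_)) hm
    · exact Finset.card_image_le
    · exact Finset.card_biUnion_le.trans (Finset.sum_le_sum hfull)
  rw [Finset.mem_union, not_or, Finset.mem_image, Finset.mem_biUnion] at haF
  push Not at haF
  obtain ⟨hcol, hnotfull⟩ := haF
  refine ⟨a, Finset.mem_range.1 ha, ?_, ?_⟩
  · intro x hx y hy hxy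
    rw [Finset.mem_erase] at hx hy
    by_cases hxu : x = u
    · subst hxu
      rw [Function.update_self, Function.update_of_ne hxy.ne']
      exact (hcol y (by simpa using hxy)).symm
    · by_cases hyu : y = u
      · subst hyu
        rw [Function.update_self, Function.update_of_ne hxy.ne]
        exact hcol x (by simpa using hxy.symm)
      · rw [Function.update_of_ne hxu, Function.update_of_ne hyu]
        exact h.1 x (by tauto) y (by tauto) hxy
  · intro v b
    by_cases hvu : u ∈ H.neighborFinset v ∧ b = a
    · obtain ⟨hv, rfl⟩ := hvu
      have hlt : ((H.neighborFinset v).filter fun x => x ∉ U ∧ c x = b).card < k := by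
        have := hnotfull v (by simpa [adj_comm] using hv)
        by_contra! hge
        exact this (Finset.mem_filter.2 ⟨ha, hge⟩)
      refine (Finset.card_le_card ?_).trans ((Finset.card_insert_le u _).trans hlt)
      intro x hx
      rw [Finset.mem_filter, Finset.mem_erase] at hx
      rw [Finset.mem_insert, Finset.mem_filter]
      by_cases hxu : x = u
      · exact Or.inl hxu
      · rw [Function.update_of_ne hxu] at hx
        tauto
    · refine (Finset.card_le_card ?_).trans (h.2 v b)
      intro x hx
      rw [Finset.mem_filter, Finset.mem_erase] at hx
      rw [Finset.mem_filter]
      by_cases hxu : x = u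
      · subst hxu
        rw [Function.update_self] at hx
        exact absurd ⟨hx.1, hx.2.2.symm⟩ hvu
      · rw [Function.update_of_ne hxu] at hx
        tauto

theorem IsFrugalOff.deleteEdge {k : ℕ} {c : V → ℕ} {u v : V}
    [DecidableRel (H.deleteEdges {s(u, v)}).Adj]
    (h : (H.deleteEdges {s(u, v)}).IsFrugalOff ∅ k c) : H.IsFrugalOff {u, v} k c := by
  have hadj : ∀ {x y}, H.Adj x y → y ∉ ({u, v} : Finset V) →
      (H.deleteEdges {s(u, v)}).Adj x y := by
    intro x y hxy hy
    simp only [Finset.mem_insert, Finset.mem_singleton, not_or] at hy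
    rw [deleteEdges_adj]
    refine ⟨hxy, ?_⟩
    rw [Set.mem_singleton_iff, Sym2.eq_iff]
    tauto
  refine ⟨fun x _ y hy hxy => h.1 x (by simp) y (by simp) (hadj hxy hy), fun x a => ?_⟩
  refine (Finset.card_le_card fun y hy => ?_).trans (h.2 x a)
  rw [Finset.mem_filter, mem_neighborFinset] at hy ⊢
  exact ⟨hadj hy.1 hy.2.1, by simp, hy.2.2⟩

theorem IsFrugalOff.deleteIncidenceSet {k : ℕ} {c : V → ℕ} {u : V} (hu : H.degree u ≤ k)
    [DecidableRel (H.deleteIncidenceSet u).Adj]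
    (h : (H.deleteIncidenceSet u).IsFrugalOff ∅ k c) : H.IsFrugalOff {u} k c := by
  refine ⟨fun x hx y hy hxy => h.1 x (by simp) y (by simp) ?_, fun x a => ?_⟩
  · rw [deleteIncidenceSet_adj]
    simp only [Finset.mem_singleton] at hx hy
    exact ⟨hxy, hx, hy⟩
  · by_cases hx : x = u
    · subst hx
      exact (Finset.card_filter_le _ _).trans hu
    refine (Finset.card_le_card fun y hy => ?_).trans (h.2 x a)
    rw [Finset.mem_filter, mem_neighborFinset] at hy ⊢
    rw [deleteIncidenceSet_adj]
    exact ⟨⟨hy.1, hx, by simpa using hy.2.1⟩, by simp, hy.2.2⟩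

end Extension

/-- Graphs all of whose subgraphs are sparse have frugal colourings with few colours. -/
theorem exists_isFrugalColoring_of_sparse {D k : ℕ} (hk : 1 ≤ k)
    (hD : ∀ v, H.degree v ≤ D)
    (hsparse : ∀ (K : SimpleGraph V) [DecidableRel K.Adj], K ≤ H → K ≠ ⊥ →
      3 * K.edgeFinset.card < 5 * (Finset.univ.filter fun v => 0 < K.degree v).card) :
    ∃ c : V → ℕ, (∀ v, c v < (D + 10 + (k - 1)) / k + 6) ∧ H.IsFrugalColoring k c := by
  classical
  suffices hmain : ∀ (K : SimpleGraph V) [DecidableRel K.Adj], K ≤ H →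
      ∃ c : V → ℕ, (∀ v, c v < (D + 10 + (k - 1)) / k + 6) ∧ K.IsFrugalOff ∅ k c by
    obtain ⟨c, hc, h⟩ := hmain H le_rfl
    exact ⟨c, hc, h.isFrugalColoring⟩
  intro K
  induction K using WellFoundedLT.induction with
  | ind K ih =>
  intro _ hKH
  have hDK : ∀ v, K.degree v ≤ D := fun v => (degree_le_of_le hKH).trans (hD v)
  have hupdate : ∀ {c : V → ℕ} {u a m}, (∀ v, c v < m) → a < m →
      ∀ v, Function.update c u a v < m := by
    intro c u a m hc ha v
    by_cases h : v = u
    · simpa [h] using ha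
    · simpa [h] using hc v
  have hdelete : ∀ u v, K.Adj u v → K.degree u ≤ k → K.degree u +
      ∑ w ∈ K.neighborFinset u, (K.degree w - 1) / k < (D + 10 + (k - 1)) / k + 6 →
      ∃ c : V → ℕ, (∀ v, c v < (D + 10 + (k - 1)) / k + 6) ∧ K.IsFrugalOff ∅ k c := by
    intro u v huv huk hlt
    have hlt' := deleteIncidenceSet_lt huv
    obtain ⟨c, hc, h⟩ := ih _ hlt' (hlt'.le.trans hKH)
    obtain ⟨a, ha, h'⟩ := (h.deleteIncidenceSet huk).exists_update hk
      (Finset.mem_singleton_self u) hlt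
    exact ⟨_, hupdate hc ha, by simpa using h'⟩
  by_cases hbot : K = ⊥
  · subst hbot
    exact ⟨fun _ => 0, fun _ => Nat.succ_pos _, by simp, by simp⟩
  by_cases hone : ∃ u, K.degree u = 1
  · obtain ⟨u, hu⟩ := hone
    obtain ⟨v, hv⟩ := (K.degree_pos_iff_exists_adj u).1 (by omega)
    refine hdelete u v hv (by omega) (degree_add_sum_lt_of_neighborDegreeSum_le hk ?_ (by omega))
    obtain ⟨w, hw⟩ := Finset.card_eq_one.1 ((K.card_neighborFinset_eq_degree u).trans hu)
    rw [neighborDegreeSum, hw, Finset.sum_singleton]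
    have := hDK w
    omega
  · push Not at hone
    obtain ⟨u, v, huv, hu, hv, hcase⟩ := exists_light_edge hDK hone (hsparse K hKH hbot)
    by_cases hu2 : 2 ≤ k ∧ K.degree u = 2
    · exact hdelete u v huv (by omega)
        (degree_add_sum_lt_of_neighborDegreeSum_le hk hu (by omega))
    · have hlt := deleteEdges_singleton_lt huv
      obtain ⟨c, hc, h⟩ := ih _ hlt (hlt.le.trans hKH)
      obtain ⟨a, ha, h1⟩ := h.deleteEdge.exists_update hk (Finset.mem_insert_self u {v})
        (degree_add_sum_lt_of_neighborDegreeSum_le hk hu (by omega))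
      rw [Finset.erase_insert (by simpa using huv.ne)] at h1
      obtain ⟨b, hb, h2⟩ := h1.exists_update hk (Finset.mem_singleton_self v)
        (degree_add_sum_lt_of_neighborDegreeSum_le hk hv (by omega))
      exact ⟨_, hupdate (hupdate hc ha) hb, by simpa using h2⟩

end SimpleGraph

/-- For `k ≥ 1` and a planar graph `G` of girth at least `5`,
`χ_k(G) ≤ ⌈(Δ(G) + 10)/k⌉ + 6` (ceiling written `(a + k - 1)/k`). -/
theorem frugalChromaticNumber_girth_five {V : Type*} [Fintype V] (G : SimpleGraph V)
    [DecidableRel G.Adj] (hG : G.IsPlanar) (k : ℕ) (hk : 1 ≤ k)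
    (hgirth : (5 : ℕ∞) ≤ G.egirth) :
    G.frugalChromaticNumber k ≤ (G.maxDegree + 10 + (k - 1)) / k + 6 := by
  obtain ⟨d⟩ := hG
  refine Nat.sInf_le (exists_isFrugalColoring_of_sparse hk G.degree_le_maxDegree ?_)
  intro K _ hKG hK
  have hX : (K.edgeFinset : Set (Sym2 V)) ⊆ G.edgeSet := by
    rw [coe_edgeFinset]
    exact edgeSet_mono hKG
  have hne : K.edgeFinset.Nonempty := by
    rw [edgeFinset_nonempty]
    exact hK
  have hcover : coverOf K.edgeFinset = Finset.univ.filter fun v => 0 < K.degree v := by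
    ext v
    rw [mem_coverOf, Finset.mem_filter, degree_pos_iff_exists_adj]
    constructor
    · rintro ⟨e, he, w, rfl⟩
      exact ⟨Finset.mem_univ v, w, by simpa using he⟩
    · rintro ⟨-, w, hw⟩
      exact ⟨s(v, w), by simpa using hw, Sym2.mem_mk_left v w⟩
  have := d.three_mul_card_le hgirth hX hne
  rw [hcover] at this
  omega
end
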